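/- Fix n ≥ 2. For a natural number B, let T(B) be the (finite) set of matrices M : Matrix (Fin n) (Fin n) ℤ with det M = 1 and |M i j| ≤ B for all i, j, and let R(B) ⊆ T(B) be the subset of those M for which the characteristic polynomial of M, mapped to ℚ[X], is not irreducible. Then the ratio |R(B)| / |T(B)| tends to 0 as B tends to infinity. -/

import Mathlib

/-!
Write `n = d + 1`. A reducible monic polynomial over `ℤ` with constant coefficient `±1` is a product
of two factors with constant coefficients `±1`, which together have only `d - 1` free coefficients;
so the `d` inner coefficients of a reducible `M.charpoly` lie on a fixed hypersurface `P = 0`.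

If `m ⬝ᵥ ξ = 0`, multiplying `M` by the transvection `1 - a ξ mᵀ` preserves the determinant and the
row vector `mᵀ M`, and it moves these coefficients along a line, affinely in `a`. When
`‖mᵀ M‖ ≤ s B` and `Q ‖ξ‖ s ≤ 1`, the matrices obtained for `0 ≤ a < Q` have entries at most `2 B`,
and outside a negligible set of matrices at most `deg P` of them are on the hypersurface. Hence
at most a fraction `O(1 / Q)` of the matrices with `‖mᵀ M‖ ≤ s B` has reducible characteristic
polynomial.

Up to a small proportion, `SL(n, ℤ)` is covered by finitely many of these sets of matrices, with
bounded overlap: dividing `M` by `B`, its first row is nearly a linear combination `θ` of the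
others, Dirichlet's theorem approximates `θ` by rational points, and the Vitali covering theorem
extracts almost disjoint balls. The integer points are compared with volumes of neighbourhoods of
`{det = 0}`, on which left translates by `SL(n, ℤ)` of a small neighbourhood of `1` are disjoint.
The resulting upper bound `o(B ^ (d (d + 1)))` is set against a lower bound `≫ B ^ (d (d + 1))` for
the total, from completing primitive `k × (k + 1)` frames inductively with coprime pairs.
-/

open Polynomial Matrix MeasureTheory

section ReducibilityHypersurface

theorem exists_aeval_eq_zero_of_card_lt {R σ ι : Type*} [CommRing R] [IsDomain R]
    [Fintype σ] [Fintype ι] (h : Fintype.card σ < Fintype.card ι) (x : ι → MvPolynomial σ R) :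
    ∃ P : MvPolynomial ι R, P ≠ 0 ∧ MvPolynomial.aeval x P = 0 := by
  have hx : ¬ AlgebraicIndependent R x := fun hx => by
    have hle := hx.lift_cardinalMk_le_trdeg
    rw [MvPolynomial.trdeg_of_isDomain] at hle
    simp only [Cardinal.mk_fintype, Cardinal.lift_natCast, Nat.cast_le] at hle
    exact hle.not_gt h
  rw [algebraicIndependent_iff] at hx
  push Not at hx
  obtain ⟨P, hP, hP0⟩ := hx
  exact ⟨P, hP0, hP⟩

variable {R S : Type*} [CommRing R] [CommRing S]

/-- The monic polynomial of degree `a + 1` with constant coefficient `e` and coefficients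
`v 0, …, v (a - 1)` of `X, …, X ^ a`. It parametrizes the factors of a reducible polynomial whose
constant coefficient is a unit. -/
noncomputable def monicOfCoeffs {a : ℕ} (v : Fin a → R) (e : R) : R[X] :=
  X ^ (a + 1) + (∑ i : Fin a, C (v i) * X ^ ((i : ℕ) + 1) + C e)

theorem map_monicOfCoeffs {a : ℕ} (f : R →+* S) (v : Fin a → R) (e : R) :
    (monicOfCoeffs v e).map f = monicOfCoeffs (f ∘ v) (f e) := by
  simp [monicOfCoeffs, Polynomial.map_sum]

theorem eq_monicOfCoeffs {a : ℕ} {g : R[X]} (hg : g.Monic)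
    (ha : g.natDegree = a + 1) :
    g = monicOfCoeffs (fun i : Fin a => g.coeff (i + 1)) (g.coeff 0) := by
  conv_lhs => rw [hg.as_sum, ha, Finset.sum_range_succ']
  simp [monicOfCoeffs, Finset.sum_range]

/-- Products of factors of degrees `a + 1`, `b + 1` with fixed constant coefficients have `a + b`
free parameters, one less than the number of inner coefficients of the product. -/
theorem exists_eval_coeff_mul_eq_zero {R : Type*} [CommRing R] [IsDomain R] (a b : ℕ) (e e' : R) :
    ∃ P : MvPolynomial (Fin (a + b + 1)) R, P ≠ 0 ∧ ∀ g h : R[X], g.Monic → h.Monic →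
      g.natDegree = a + 1 → h.natDegree = b + 1 → g.coeff 0 = e → h.coeff 0 = e' →
      MvPolynomial.eval (fun i : Fin (a + b + 1) => (g * h).coeff (i + 1)) P = 0 := by
  let A := MvPolynomial (Fin a ⊕ Fin b) R
  let G : A[X] := monicOfCoeffs (fun i => MvPolynomial.X (Sum.inl i)) (MvPolynomial.C e)
  let H : A[X] := monicOfCoeffs (fun i => MvPolynomial.X (Sum.inr i)) (MvPolynomial.C e')
  let x : Fin (a + b + 1) → A := fun i => (G * H).coeff (i + 1)
  obtain ⟨P, hP0, hP⟩ := exists_aeval_eq_zero_of_card_lt (by simp) x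
  refine ⟨P, hP0, fun g h hg hh dg dh cg ch => ?_⟩
  let φ : A →ₐ[R] R :=
    MvPolynomial.aeval (Sum.elim (fun i => g.coeff (i + 1)) (fun i => h.coeff (i + 1)))
  have hG : G.map (φ : A →+* R) = g := by
    rw [eq_monicOfCoeffs hg dg, map_monicOfCoeffs, cg]
    exact congrArg₂ _ (funext fun i => MvPolynomial.aeval_X _ _) (MvPolynomial.aeval_C _ _)
  have hH : H.map (φ : A →+* R) = h := by
    rw [eq_monicOfCoeffs hh dh, map_monicOfCoeffs, ch]
    exact congrArg₂ _ (funext fun i => MvPolynomial.aeval_X _ _) (MvPolynomial.aeval_C _ _)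
  have hx : (fun i : Fin (a + b + 1) => (g * h).coeff (i + 1)) = fun i => φ (x i) := by
    ext i
    rw [← hG, ← hH, ← Polynomial.map_mul, coeff_map]
    rfl
  rw [hx]
  exact (MvPolynomial.comp_aeval_apply x φ P).symm.trans (by rw [hP, map_zero])

theorem exists_monic_factors_of_not_irreducible_map {f : ℤ[X]} (hf : f.Monic)
    (hd : f.natDegree ≠ 0) (hirr : ¬ Irreducible (f.map (algebraMap ℤ ℚ))) :
    ∃ g h : ℤ[X], g.Monic ∧ h.Monic ∧ g * h = f ∧ g.natDegree ≠ 0 ∧ h.natDegree ≠ 0 := by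
  rw [← hf.irreducible_iff_irreducible_map_fraction_map, hf.irreducible_iff_natDegree] at hirr
  push Not at hirr
  exact hirr (by rintro rfl; simp at hd)

theorem exists_eval_coeff_eq_zero_of_not_irreducible (d : ℕ) :
    ∃ P : MvPolynomial (Fin d) ℤ, P ≠ 0 ∧ ∀ f : ℤ[X], f.Monic → f.natDegree = d + 1 →
      IsUnit (f.coeff 0) → ¬ Irreducible (f.map (algebraMap ℤ ℚ)) →
      MvPolynomial.eval (fun i : Fin d => f.coeff (i + 1)) P = 0 := by
  have relation (k : Fin d) (u : ℤˣ × ℤˣ) : ∃ P : MvPolynomial (Fin d) ℤ, P ≠ 0 ∧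
      ∀ g h : ℤ[X], g.Monic → h.Monic → g.natDegree = k + 1 → h.natDegree = d - k →
        g.coeff 0 = u.1 → h.coeff 0 = u.2 →
        MvPolynomial.eval (fun i : Fin d => (g * h).coeff (i + 1)) P = 0 := by
    obtain ⟨k, hk⟩ := k
    obtain ⟨b, rfl⟩ : ∃ b, d = k + b + 1 := ⟨d - k - 1, by omega⟩
    rw [show k + b + 1 - k = b + 1 by omega]
    exact exists_eval_coeff_mul_eq_zero k b (u.1 : ℤ) (u.2 : ℤ)
  choose P hP0 hP using relation
  refine ⟨∏ k, ∏ u, P k u, by simp [Finset.prod_ne_zero_iff, hP0],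
    fun f hf hd hunit hirr => ?_⟩
  obtain ⟨g, h, hg, hh, rfl, dg, dh⟩ :=
    exists_monic_factors_of_not_irreducible_map hf (by omega) hirr
  rw [hg.natDegree_mul hh] at hd
  rw [mul_coeff_zero, IsUnit.mul_iff] at hunit
  obtain ⟨⟨u, hu⟩, ⟨v, hv⟩⟩ := hunit
  simp only [MvPolynomial.eval_prod]
  refine Finset.prod_eq_zero (Finset.mem_univ (⟨g.natDegree - 1, by omega⟩ : Fin d))
    (Finset.prod_eq_zero (Finset.mem_univ (u, v)) ?_)
  exact hP _ _ g h hg hh (by simp only; omega) (by simp only; omega) hu.symm hv.symm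

end ReducibilityHypersurface

section ZerosOnALine

variable {R : Type*} [CommRing R] {σ : Type*}

theorem homogeneousComponent_totalDegree_ne_zero {P : MvPolynomial σ R} (hP : P ≠ 0) :
    MvPolynomial.homogeneousComponent P.totalDegree P ≠ 0 := by
  intro h
  obtain ⟨s, hs, hs'⟩ := Finset.exists_mem_eq_sup P.support (MvPolynomial.support_nonempty.2 hP)
    Finsupp.degree
  have hdeg : s.degree = P.totalDegree := hs'.symm
  have hcoeff := congrArg (MvPolynomial.coeff s) h
  rw [MvPolynomial.coeff_homogeneousComponent, if_pos hdeg] at hcoeff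
  exact MvPolynomial.mem_support_iff.1 hs hcoeff

theorem coeff_prod_sum_of_natDegree_le {ι : Type*} (t : Finset ι) (f : ι → R[X]) (k : ι → ℕ)
    (h : ∀ i ∈ t, (f i).natDegree ≤ k i) :
    (∏ i ∈ t, f i).coeff (∑ i ∈ t, k i) = ∏ i ∈ t, (f i).coeff (k i) := by
  classical
  induction t using Finset.induction_on with
  | empty => simp
  | insert i t hi ih =>
    have ht : ∀ j ∈ t, (f j).natDegree ≤ k j := fun j hj => h j (Finset.mem_insert_of_mem hj)
    rw [Finset.prod_insert hi, Finset.sum_insert hi, Finset.prod_insert hi,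
      coeff_mul_add_eq_of_natDegree_le (h i (Finset.mem_insert_self i t))
        ((natDegree_prod_le _ _).trans (Finset.sum_le_sum ht)), ih ht]

theorem natDegree_linear_pow_le (b c : R) (k : ℕ) : ((C c * X + C b) ^ k).natDegree ≤ k := by
  simpa using natDegree_pow_le_of_le k (natDegree_linear_le (a := c) (b := b))

theorem natDegree_prod_linear_pow_le (b c : σ → R) (s : σ →₀ ℕ) :
    (s.prod fun i k => (C (c i) * X + C (b i)) ^ k).natDegree ≤ s.degree :=
  (natDegree_prod_le _ _).trans <| Finset.sum_le_sum fun _ _ => natDegree_linear_pow_le _ _ _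

theorem coeff_prod_linear_pow (b c : σ → R) (s : σ →₀ ℕ) :
    (s.prod fun i k => (C (c i) * X + C (b i)) ^ k).coeff s.degree =
      s.prod fun i k => c i ^ k := by
  rw [Finsupp.prod, Finsupp.degree_apply,
    coeff_prod_sum_of_natDegree_le _ _ _ fun _ _ => natDegree_linear_pow_le _ _ _]
  refine Finset.prod_congr rfl fun i _ => ?_
  simpa using coeff_pow_of_natDegree_le (m := s i) (natDegree_linear_le (a := c i) (b := b i))

/-- The restriction of `P` to the line `b + X • c`, as a polynomial in the parameter of the line. -/
noncomputable def restrictLine (P : MvPolynomial σ R) (b c : σ → R) : R[X] :=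
  MvPolynomial.aeval (fun i => C (c i) * X + C (b i)) P

theorem restrictLine_eq_sum (P : MvPolynomial σ R) (b c : σ → R) :
    restrictLine P b c =
      ∑ s ∈ P.support, C (P.coeff s) * s.prod fun i k => (C (c i) * X + C (b i)) ^ k := by
  rw [restrictLine, MvPolynomial.aeval_def, MvPolynomial.eval₂_eq]
  rfl

theorem eval_restrictLine (P : MvPolynomial σ R) (b c : σ → R) (a : R) :
    (restrictLine P b c).eval a = MvPolynomial.eval (b + a • c) P := by
  rw [restrictLine, ← Polynomial.coe_aeval_eq_eval, MvPolynomial.comp_aeval_apply,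
    ← MvPolynomial.coe_aeval_eq_eval]
  have hpoint : (fun i => Polynomial.aeval a (C (c i) * X + C (b i))) = b + a • c := by
    ext i
    simp only [map_add, map_mul, aeval_X, aeval_C, Algebra.algebraMap_self, RingHom.id_apply,
      Pi.add_apply, Pi.smul_apply, smul_eq_mul]
    ring
  rw [hpoint]
  rfl

theorem degree_le_totalDegree_of_mem_support {P : MvPolynomial σ R} {s : σ →₀ ℕ}
    (hs : s ∈ P.support) : s.degree ≤ P.totalDegree :=
  MvPolynomial.le_totalDegree hs

theorem natDegree_restrictLine_le (P : MvPolynomial σ R) (b c : σ → R) :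
    (restrictLine P b c).natDegree ≤ P.totalDegree := by
  rw [restrictLine_eq_sum]
  exact natDegree_sum_le_of_forall_le _ _ fun s hs => (natDegree_C_mul_le _ _).trans <|
    (natDegree_prod_linear_pow_le b c s).trans (degree_le_totalDegree_of_mem_support hs)

theorem coeff_totalDegree_restrictLine (P : MvPolynomial σ R) (b c : σ → R) :
    (restrictLine P b c).coeff P.totalDegree =
      MvPolynomial.eval c (MvPolynomial.homogeneousComponent P.totalDegree P) := by
  rw [restrictLine_eq_sum, finsetSum_coeff, MvPolynomial.homogeneousComponent_apply, map_sum,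
    Finset.sum_filter]
  refine Finset.sum_congr rfl fun s hs => ?_
  rw [MvPolynomial.eval_monomial, coeff_C_mul]
  split_ifs with h
  · rw [← h, coeff_prod_linear_pow]
  · rw [coeff_eq_zero_of_natDegree_lt, mul_zero]
    exact (natDegree_prod_linear_pow_le b c s).trans_lt
      ((degree_le_totalDegree_of_mem_support hs).lt_of_ne h)

theorem card_filter_eval_line_eq_zero_le [IsDomain R] [DecidableEq R] (P : MvPolynomial σ R)
    (b c : σ → R)
    (h : MvPolynomial.eval c (MvPolynomial.homogeneousComponent P.totalDegree P) ≠ 0)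
    (A : Finset R) :
    (A.filter fun a => MvPolynomial.eval (b + a • c) P = 0).card ≤ P.totalDegree := by
  have hne : restrictLine P b c ≠ 0 := fun h0 => h <| by
    rw [← coeff_totalDegree_restrictLine P b c, h0, coeff_zero]
  calc _ ≤ (restrictLine P b c).roots.toFinset.card := by
        refine Finset.card_le_card fun a ha => ?_
        simpa [hne, eval_restrictLine] using (Finset.mem_filter.1 ha).2
    _ ≤ (restrictLine P b c).natDegree :=
        (Multiset.toFinset_card_le _).trans (card_roots' _)
    _ ≤ P.totalDegree := natDegree_restrictLine_le P b c

end ZerosOnALine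

section CharpolySlope

variable {R S : Type*} [CommRing R] [CommRing S] {ι : Type*} [Fintype ι] [DecidableEq ι]

theorem vecMul_adjugate_apply (A : Matrix ι ι R) (w : ι → R) (i : ι) :
    (w ᵥ* A.adjugate) i = (A.updateRow i w).det := by
  rw [← mulVec_transpose, adjugate_transpose, ← cramer_eq_adjugate_mulVec, cramer_transpose_apply]

theorem vecMul_adjugate_add_vecMulVec (A : Matrix ι ι R) (u w : ι → R) :
    w ᵥ* (A + vecMulVec u w).adjugate = w ᵥ* A.adjugate := by
  ext i
  rw [vecMul_adjugate_apply, vecMul_adjugate_apply]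
  refine det_eq_of_forall_row_eq_smul_add_const (fun j => if j = i then 0 else u j) i (by simp)
    fun j k => ?_
  by_cases hj : j = i
  · subst hj; simp
  · simp [hj, vecMulVec_apply]

theorem det_add_vecMulVec [IsDomain R] (A : Matrix ι ι R) (u w : ι → R) :
    (A + vecMulVec u w).det = A.det + w ⬝ᵥ (A.adjugate *ᵥ u) := by
  by_cases hw : w = 0
  · simp [hw]
  refine smul_left_injective R hw ?_
  calc (A + vecMulVec u w).det • w = w ᵥ* (A + vecMulVec u w).adjugate ᵥ* (A + vecMulVec u w) := by
        rw [vecMul_vecMul, adjugate_mul, vecMul_smul, vecMul_one]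
    _ = w ᵥ* A.adjugate ᵥ* A + w ᵥ* A.adjugate ᵥ* vecMulVec u w := by
        rw [vecMul_adjugate_add_vecMulVec, vecMul_add]
    _ = (A.det + w ⬝ᵥ (A.adjugate *ᵥ u)) • w := by
        rw [vecMul_vecMul, adjugate_mul, vecMul_smul, vecMul_one, vecMul_vecMulVec,
          ← dotProduct_mulVec, add_smul]

theorem det_one_sub_vecMulVec_mul [IsDomain R] {m ξ : ι → R} (h : m ⬝ᵥ ξ = 0) (N : Matrix ι ι R) :
    ((1 - vecMulVec ξ m) * N).det = N.det := by
  rw [det_mul, sub_eq_add_neg, ← neg_vecMulVec, det_add_vecMulVec]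
  simp [h]

theorem vecMul_one_sub_vecMulVec_mul {m ξ : ι → R} (h : m ⬝ᵥ ξ = 0) (N : Matrix ι ι R) :
    m ᵥ* ((1 - vecMulVec ξ m) * N) = m ᵥ* N := by
  rw [← vecMul_vecMul, vecMul_sub, vecMul_one, vecMul_vecMulVec, h, zero_smul, sub_zero]

theorem one_sub_vecMulVec_mul (m ξ : ι → R) (N : Matrix ι ι R) :
    (1 - vecMulVec ξ m) * N = N - vecMulVec ξ (m ᵥ* N) := by
  rw [Matrix.sub_mul, Matrix.one_mul, vecMulVec_mul]

/-- The polynomial `mᵀ adj(X - N) ξ`. When `m ⬝ᵥ ξ = 0`, it is, up to a factor `X`, the derivative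
in `a` of the characteristic polynomial of `(1 - a ξ mᵀ) N`, see
`charpoly_one_sub_vecMulVec_mul`. -/
noncomputable def charpolySlope (m ξ : ι → R) (N : Matrix ι ι R) : R[X] :=
  (C ∘ m) ⬝ᵥ ((charmatrix N).adjugate *ᵥ (C ∘ ξ))

theorem charmatrix_add_vecMulVec (N : Matrix ι ι R) (u w : ι → R) :
    charmatrix (N + vecMulVec u w) = charmatrix N + vecMulVec (-(C ∘ u)) (C ∘ w) := by
  ext i j : 1
  simp only [charmatrix_apply, Matrix.add_apply, vecMulVec_apply, map_add, map_mul, Pi.neg_apply,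
    Function.comp_apply]
  ring

theorem vecMul_charmatrix (m : ι → R) (N : Matrix ι ι R) :
    (C ∘ m) ᵥ* charmatrix N = (X : R[X]) • (C ∘ m) - C ∘ (m ᵥ* N) := by
  rw [charmatrix, vecMul_sub, scalar_apply, ← smul_one_eq_diagonal, vecMul_smul, vecMul_one]
  congr 1
  ext j : 1
  exact (RingHom.map_vecMul C N m j).symm

theorem charpoly_one_sub_vecMulVec_mul [IsDomain R] {m ξ : ι → R} (h : m ⬝ᵥ ξ = 0) (a : R)
    (N : Matrix ι ι R) :
    ((1 - vecMulVec (a • ξ) m) * N).charpoly = N.charpoly + C a * X * charpolySlope m ξ N := by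
  have hC : (C ∘ m) ⬝ᵥ (C ∘ ξ) = 0 := by rw [← RingHom.map_dotProduct, h, map_zero]
  have hsmul : C ∘ (a • ξ) = C a • (C ∘ ξ) := by ext i : 1; simp
  have hvec : C ∘ (m ᵥ* N) = (X : R[X]) • (C ∘ m) - (C ∘ m) ᵥ* charmatrix N := by
    rw [vecMul_charmatrix, sub_sub_cancel]
  have hneg : -(C ∘ (-(a • ξ))) = C a • (C ∘ ξ) := by rw [← hsmul]; ext i : 1; simp
  calc ((1 - vecMulVec (a • ξ) m) * N).charpoly
      = (charmatrix N + vecMulVec (C a • (C ∘ ξ)) (C ∘ (m ᵥ* N))).det := by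
        rw [one_sub_vecMulVec_mul, sub_eq_add_neg, ← neg_vecMulVec, charpoly,
          charmatrix_add_vecMulVec, hneg]
    _ = N.charpoly + C a * ((X • (C ∘ m) - (C ∘ m) ᵥ* charmatrix N) ⬝ᵥ
          ((charmatrix N).adjugate *ᵥ (C ∘ ξ))) := by
        rw [det_add_vecMulVec, mulVec_smul, dotProduct_smul, smul_eq_mul, hvec, charpoly]
    _ = N.charpoly + C a * X * charpolySlope m ξ N := by
        rw [sub_dotProduct, smul_dotProduct, ← dotProduct_mulVec, mulVec_mulVec, mul_adjugate,
          smul_mulVec, one_mulVec, dotProduct_smul, hC, smul_zero, sub_zero, smul_eq_mul,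
          ← charpolySlope, mul_assoc]

theorem charpolySlope_add_vecMulVec (m ξ v : ι → R) (N : Matrix ι ι R) :
    charpolySlope m ξ (N + vecMulVec v m) = charpolySlope m ξ N := by
  rw [charpolySlope, charpolySlope, dotProduct_mulVec, dotProduct_mulVec,
    charmatrix_add_vecMulVec, vecMul_adjugate_add_vecMulVec]

theorem charpolySlope_map (f : R →+* S) (m ξ : ι → R) (N : Matrix ι ι R) :
    charpolySlope (f ∘ m) (f ∘ ξ) (N.map f) = (charpolySlope m ξ N).map f := by
  have hC (v : ι → R) : mapRingHom f ∘ (C ∘ v) = C ∘ (f ∘ v) := by ext i : 1; simp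
  have hadj : ((charmatrix N).adjugate).map (mapRingHom f) = (charmatrix (N.map f)).adjugate := by
    rw [charmatrix_map, ← RingHom.mapMatrix_apply, RingHom.map_adjugate]
    rfl
  rw [charpolySlope, charpolySlope, ← coe_mapRingHom, RingHom.map_dotProduct, hC]
  congr 1
  ext i : 1
  rw [Function.comp_apply, RingHom.map_mulVec, hadj, hC]

end CharpolySlope

section CharpolySlopeConj

variable {R : Type*} [CommRing R] {ι : Type*} [Fintype ι] [DecidableEq ι]

theorem charmatrix_conj {g h : Matrix ι ι R} (hgh : g * h = 1) (N : Matrix ι ι R) :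
    charmatrix (g * N * h) = g.map C * charmatrix N * h.map C := by
  have hmap : g.map C * h.map C = (1 : Matrix ι ι R[X]) := by
    rw [← Matrix.map_mul, hgh, Matrix.map_one _ C_0 C_1]
  rw [charmatrix, charmatrix, Matrix.mul_sub, Matrix.sub_mul, scalar_apply,
    ← smul_one_eq_diagonal, Matrix.mul_smul, Matrix.mul_one, Matrix.smul_mul, hmap]
  simp only [RingHom.mapMatrix_apply, Matrix.map_mul]

theorem adjugate_eq_det_smul {A B : Matrix ι ι R} (h : A * B = 1) : A.adjugate = A.det • B := by
  rw [← Matrix.mul_one A.adjugate, ← h, ← Matrix.mul_assoc, adjugate_mul, Matrix.smul_mul,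
    Matrix.one_mul]

theorem adjugate_conj {A B : Matrix ι ι R} (h : A * B = 1) (M : Matrix ι ι R) :
    (A * M * B).adjugate = A * M.adjugate * B := by
  have hdet : A.det * B.det = 1 := by rw [← det_mul, h, det_one]
  rw [adjugate_mul_distrib, adjugate_mul_distrib, adjugate_eq_det_smul h,
    adjugate_eq_det_smul (mul_eq_one_comm.1 h)]
  simp only [Matrix.smul_mul, Matrix.mul_smul, smul_smul, hdet, one_smul, Matrix.mul_assoc]

theorem charpolySlope_conj {g h : Matrix ι ι R} (hgh : g * h = 1) (m ξ : ι → R)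
    (N : Matrix ι ι R) :
    charpolySlope m ξ (g * N * h) = charpolySlope (m ᵥ* g) (h *ᵥ ξ) N := by
  have hmap : g.map C * h.map C = (1 : Matrix ι ι R[X]) := by
    rw [← Matrix.map_mul, hgh, Matrix.map_one _ C_0 C_1]
  have hm : C ∘ (m ᵥ* g) = (C ∘ m) ᵥ* g.map C := funext fun i => RingHom.map_vecMul C g m i
  have hξ : C ∘ (h *ᵥ ξ) = h.map C *ᵥ (C ∘ ξ) := funext fun i => RingHom.map_mulVec C h ξ i
  rw [charpolySlope, charpolySlope, charmatrix_conj hgh, adjugate_conj hmap, hm, hξ,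
    ← mulVec_mulVec, ← mulVec_mulVec, dotProduct_mulVec]

end CharpolySlopeConj

section CharpolySlopeNonvanishing

variable {K : Type*} [Field K] {d : ℕ}

theorem charpolySlope_shift (α : Fin (d + 1) → K) :
    charpolySlope α (Pi.single 0 1) (of fun i j => if (i : ℕ) = j + 1 then 1 else 0) =
      ∑ i, C (α i) * X ^ (d - (i : ℕ)) := by
  set S : Matrix (Fin (d + 1)) (Fin (d + 1)) K := of fun i j => if (i : ℕ) = j + 1 then 1 else 0
  let w : Fin (d + 1) → K[X] := fun i => X ^ (d - (i : ℕ))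
  have hdet : (charmatrix S).det = X ^ (d + 1) := by
    have hdiag (i : Fin (d + 1)) : charmatrix S i i = X := by simp [charmatrix_apply_eq, S]
    rw [det_of_isLowerTriangular]
    · simp only [hdiag, Finset.prod_const, Finset.card_univ, Fintype.card_fin]
    · intro i j (hij : i < j)
      have : (i : ℕ) ≠ j + 1 := by have := Fin.lt_def.1 hij; lia
      simp [charmatrix_apply_ne _ _ _ hij.ne, S, this]
  have hSw : S.map C *ᵥ w = Fin.cons 0 fun i => w i.castSucc := by
    ext i : 1
    refine Fin.cases ?_ (fun i => ?_) i
    · simp [mulVec, dotProduct, S]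
    · rw [mulVec, dotProduct, Finset.sum_eq_single i.castSucc]
      · simp [S]
      · intro j _ hj
        have : (i : ℕ) ≠ j := fun h => hj (Fin.ext h.symm)
        simp [S, this]
      · simp
  have hw : charmatrix S *ᵥ w = (X : K[X]) ^ (d + 1) • (C ∘ Pi.single 0 1) := by
    rw [charmatrix, sub_mulVec, RingHom.mapMatrix_apply, hSw, scalar_apply]
    ext i : 1
    refine Fin.cases ?_ (fun i => ?_) i
    · simp [w, pow_succ']
    · have : d - (i : ℕ) = d - (i + 1) + 1 := by lia
      simp [w, this, pow_succ']
  have hadj : (charmatrix S).adjugate *ᵥ (C ∘ Pi.single 0 1) = w := by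
    refine smul_right_injective _ (pow_ne_zero (d + 1) (X_ne_zero (R := K))) ?_
    beta_reduce
    rw [← mulVec_smul, ← hw, mulVec_mulVec, adjugate_mul, hdet, smul_mulVec, one_mulVec]
  rw [charpolySlope, hadj]
  rfl

theorem exists_mulVec_single_and_vecMul_eq_cons {m ξ : Fin (d + 1) → K} (hm : m 0 ≠ 0)
    (h0 : m ⬝ᵥ ξ = 0) {k : Fin d} (hk : ξ k.succ ≠ 0) {t : Fin d → K} (ht : t k ≠ 0) :
    ∃ g : Matrix (Fin (d + 1)) (Fin (d + 1)) K,
      IsUnit g.det ∧ g *ᵥ Pi.single 0 1 = ξ ∧ m ᵥ* g = Fin.cons 0 t := by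
  let g : Matrix (Fin (d + 1)) (Fin (d + 1)) K := of <| Fin.cons
    (Fin.cons (ξ 0) fun j => (t j - if j = k then 0 else m j.succ) / m 0)
    fun i => Fin.cons (ξ i.succ) (Pi.single i (if i = k then 0 else 1))
  have hgξ : g *ᵥ Pi.single 0 1 = ξ := by
    rw [mulVec_single_one]
    exact funext (Fin.cases rfl fun i => rfl)
  have hgm : m ᵥ* g = Fin.cons 0 t := by
    refine funext (Fin.cases ?_ fun j => ?_)
    · simpa [vecMul, g, dotProduct, Fin.sum_univ_succ] using h0
    · by_cases hj : j = k <;>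
        simp [vecMul, g, dotProduct, Fin.sum_univ_succ, hj, Pi.single_apply, mul_div_cancel₀ _ hm]
  refine ⟨g, isUnit_iff_ne_zero.2 fun hdet => ?_, hgξ, hgm⟩
  obtain ⟨x, hx, hgx⟩ := exists_mulVec_eq_zero_iff.2 hdet
  have hrow (i : Fin d) : ξ i.succ * x 0 + (if i = k then 0 else x i.succ) = 0 := by
    simpa [mulVec, dotProduct, Fin.sum_univ_succ, g, Pi.single_apply] using congrFun hgx i.succ
  have hx0 : x 0 = 0 := by simpa [hk] using hrow k
  have hx_succ {i : Fin d} (hi : i ≠ k) : x i.succ = 0 := by simpa [hi, hx0] using hrow i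
  have hxk : x k.succ = 0 := by
    have h : m ᵥ* g ⬝ᵥ x = 0 := by rw [← dotProduct_mulVec, hgx, dotProduct_zero]
    rw [hgm, dotProduct, Fin.sum_univ_succ, Finset.sum_eq_single k] at h
    · simpa [ht] using h
    · intro i _ hi
      rw [hx_succ hi, mul_zero]
    · simp
  refine hx (funext (Fin.cases hx0 fun i => ?_))
  obtain rfl | hi := eq_or_ne i k
  exacts [hxk, hx_succ hi]

theorem exists_eval_coeff_charpolySlope_ne_zero [Infinite K] {P : MvPolynomial (Fin d) K}
    (hP : P ≠ 0) {m ξ : Fin (d + 1) → K} (hm : m 0 ≠ 0) (hξ : ξ ≠ 0) (h0 : m ⬝ᵥ ξ = 0) :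
    ∃ N, MvPolynomial.eval (fun i : Fin d => (charpolySlope m ξ N).coeff i) P ≠ 0 := by
  obtain ⟨k, hk⟩ : ∃ k : Fin d, ξ k.succ ≠ 0 := by
    by_contra! h
    have hξ0 : ξ 0 = 0 := by simpa [dotProduct, Fin.sum_univ_succ, h, hm] using h0
    exact hξ (funext (Fin.cases hξ0 h))
  obtain ⟨c, hc⟩ : ∃ c, MvPolynomial.eval c (P * MvPolynomial.X k.rev) ≠ 0 := by
    by_contra! h
    exact mul_ne_zero hP (MvPolynomial.X_ne_zero k.rev)
      (MvPolynomial.funext fun x => by rw [h x, map_zero])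
  rw [map_mul, MvPolynomial.eval_X] at hc
  obtain ⟨g, hg, hgξ, hgm⟩ := exists_mulVec_single_and_vecMul_eq_cons hm h0 hk
    (t := fun j => c j.rev) (right_ne_zero_of_mul hc)
  refine ⟨g * (of fun i j : Fin (d + 1) => if (i : ℕ) = j + 1 then 1 else 0) * g⁻¹, ?_⟩
  rw [charpolySlope_conj (mul_nonsing_inv g hg), hgm, ← hgξ, mulVec_mulVec,
    nonsing_inv_mul g hg, one_mulVec, charpolySlope_shift]
  convert left_ne_zero_of_mul hc using 3
  funext i
  rw [finsetSum_coeff, Fin.sum_univ_succ, Finset.sum_eq_single i.rev]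
  · have : (i : ℕ) = d - (d - (i + 1) + 1) := by lia
    simp [coeff_X_pow, ← this]
  · intro j _ hj
    have : (i : ℕ) ≠ d - (j + 1) := fun h => hj (Fin.ext (by rw [Fin.val_rev]; lia))
    simp [coeff_X_pow, this]
  · simp

end CharpolySlopeNonvanishing

section SchwartzZippel

variable {R : Type*} [CommRing R] [IsDomain R]

theorem card_mul_card_le_of_forall_eval_eq_zero {σ : Type*} [Fintype σ] {G : MvPolynomial σ R}
    (hG : G ≠ 0) (A : Finset R) (T : Finset (σ → R))
    (hT : ∀ x ∈ T, (∀ i, x i ∈ A) ∧ MvPolynomial.eval x G = 0) :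
    T.card * A.card ≤ G.totalDegree * A.card ^ Fintype.card σ := by
  classical
  obtain rfl | hA := A.eq_empty_or_nonempty
  · simp
  let e := Fintype.equivFin σ
  have he : MvPolynomial.rename e G ≠ 0 := fun h =>
    hG (MvPolynomial.rename_injective e e.injective (h.trans (map_zero _).symm))
  have hcard : T.card ≤ ((Fintype.piFinset fun _ => A).filter fun f =>
      MvPolynomial.eval f (MvPolynomial.rename e G) = 0).card := by
    refine Finset.card_le_card_of_injOn (fun x => x ∘ e.symm) (fun x hx => ?_)
      fun x _ y _ h => e.symm.surjective.injective_comp_right h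
    have hcomp : (x ∘ e.symm) ∘ e = x := by ext; simp
    rw [Finset.mem_coe, Finset.mem_filter, Fintype.mem_piFinset, MvPolynomial.eval_rename, hcomp]
    exact ⟨fun i => (hT x hx).1 _, (hT x hx).2⟩
  have hA' : (0 : ℚ≥0) < A.card := Nat.cast_pos.2 hA.card_pos
  have hsz := MvPolynomial.schwartz_zippel_totalDegree he A
  rw [div_le_div_iff₀ (pow_pos hA' _) hA'] at hsz
  calc T.card * A.card ≤ _ := Nat.mul_le_mul_right _ hcard
    _ ≤ _ := mod_cast hsz
    _ ≤ G.totalDegree * A.card ^ Fintype.card σ := by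
        gcongr
        exact MvPolynomial.totalDegree_rename_le _ _

end SchwartzZippel

section ZeroFirstColumn

variable {K : Type*} [Field K] {d : ℕ}

/-- The representative with zero first column of the class of `N` modulo the matrices `v mᵀ`, on
which `charpolySlope m ξ` does not depend; meant for `m 0 ≠ 0`. -/
def clearFirstColumn (m : Fin (d + 1) → K) (N : Matrix (Fin (d + 1)) (Fin (d + 1)) K) :
    Matrix (Fin (d + 1)) (Fin (d + 1)) K :=
  N + vecMulVec (fun i => -N i 0 / m 0) m

theorem clearFirstColumn_apply_zero {m : Fin (d + 1) → K} (hm : m 0 ≠ 0)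
    (N : Matrix (Fin (d + 1)) (Fin (d + 1)) K) (i : Fin (d + 1)) :
    clearFirstColumn m N i 0 = 0 := by
  simp [clearFirstColumn, vecMulVec_apply, hm]

theorem clearFirstColumn_apply {m : Fin (d + 1) → K} (hm : m 0 ≠ 0)
    (N : Matrix (Fin (d + 1)) (Fin (d + 1)) K) (i j : Fin (d + 1)) :
    clearFirstColumn m N i j = (m 0 * N i j - N i 0 * m j) / m 0 := by
  rw [clearFirstColumn, Matrix.add_apply, vecMulVec_apply]
  field

theorem smul_eq_smul_add_vecMulVec_of_clearFirstColumn_eq {m : Fin (d + 1) → K} (hm : m 0 ≠ 0)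
    {N N' : Matrix (Fin (d + 1)) (Fin (d + 1)) K}
    (h : clearFirstColumn m N' = clearFirstColumn m N) :
    m 0 • N' = m 0 • N + vecMulVec (fun i => N' i 0 - N i 0) m := by
  ext i j
  have hij := congrFun₂ h i j
  rw [clearFirstColumn_apply hm, clearFirstColumn_apply hm, div_left_inj' hm] at hij
  simp only [Matrix.smul_apply, Matrix.add_apply, vecMulVec_apply, smul_eq_mul]
  linear_combination hij

theorem exists_eval_eq_eval_coeff_charpolySlope (P : MvPolynomial (Fin d) K)
    (m ξ : Fin (d + 1) → K) :
    ∃ G : MvPolynomial (Fin (d + 1) × Fin d) K, ∀ N : Matrix (Fin (d + 1)) (Fin (d + 1)) K,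
      (∀ i, N i 0 = 0) → MvPolynomial.eval (fun p => N p.1 p.2.succ) G =
        MvPolynomial.eval (fun i : Fin d => (charpolySlope m ξ N).coeff i) P := by
  let Ng : Matrix (Fin (d + 1)) (Fin (d + 1)) (MvPolynomial (Fin (d + 1) × Fin d) K) :=
    of fun i => Fin.cons 0 fun j => MvPolynomial.X (i, j)
  refine ⟨MvPolynomial.aeval (fun i : Fin d =>
    (charpolySlope (MvPolynomial.C ∘ m) (MvPolynomial.C ∘ ξ) Ng).coeff i) P, fun N hN => ?_⟩
  let φ : MvPolynomial (Fin (d + 1) × Fin d) K →ₐ[K] K :=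
    MvPolynomial.aeval fun p => N p.1 p.2.succ
  have hC (v : Fin (d + 1) → K) : φ.toRingHom ∘ MvPolynomial.C ∘ v = v :=
    funext fun i => MvPolynomial.aeval_C _ (v i)
  have hNg : Ng.map φ.toRingHom = N := by
    ext i j
    refine Fin.cases ?_ (fun j => ?_) j
    · simp [Ng, hN i]
    · exact MvPolynomial.aeval_X _ _
  have hcoeff (i : ℕ) : φ ((charpolySlope (MvPolynomial.C ∘ m) (MvPolynomial.C ∘ ξ) Ng).coeff i) =
      (charpolySlope m ξ N).coeff i := by
    conv_rhs => rw [← hC m, ← hC ξ, ← hNg, charpolySlope_map, coeff_map]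
    rfl
  refine (MvPolynomial.comp_aeval_apply _ φ P).trans ?_
  simp only [hcoeff]
  rfl

theorem exists_card_mul_card_le_of_forall_eval_charpolySlope_eq_zero [Infinite K]
    {P : MvPolynomial (Fin d) K} (hP : P ≠ 0) {m ξ : Fin (d + 1) → K} (hm : m 0 ≠ 0)
    (hξ : ξ ≠ 0) (h0 : m ⬝ᵥ ξ = 0) :
    ∃ D : ℕ, ∀ (A : Finset K) (T : Finset (Matrix (Fin (d + 1)) (Fin (d + 1)) K)),
      (∀ N ∈ T, (∀ i, N i 0 = 0) ∧ (∀ i (j : Fin d), N i j.succ ∈ A) ∧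
        MvPolynomial.eval (fun i : Fin d => (charpolySlope m ξ N).coeff i) P = 0) →
      T.card * A.card ≤ D * A.card ^ ((d + 1) * d) := by
  classical
  obtain ⟨G, hG⟩ := exists_eval_eq_eval_coeff_charpolySlope P m ξ
  have hG0 : G ≠ 0 := by
    rintro rfl
    obtain ⟨N, hN⟩ := exists_eval_coeff_charpolySlope_ne_zero hP hm hξ h0
    have h := hG _ (clearFirstColumn_apply_zero hm N)
    rw [clearFirstColumn, charpolySlope_add_vecMulVec, map_zero] at h
    exact hN h.symm
  refine ⟨G.totalDegree, fun A T hT => ?_⟩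
  have hcard : (T.image fun N (p : Fin (d + 1) × Fin d) => N p.1 p.2.succ).card = T.card := by
    refine Finset.card_image_of_injOn fun N hN N' hN' h => ?_
    ext i j
    refine Fin.cases ?_ (fun j => congrFun h (i, j)) j
    rw [(hT N hN).1, (hT N' hN').1]
  rw [← hcard, show (d + 1) * d = Fintype.card (Fin (d + 1) × Fin d) by simp]
  refine card_mul_card_le_of_forall_eval_eq_zero hG0 A _ fun x hx => ?_
  obtain ⟨N, hN, rfl⟩ := Finset.mem_image.1 hx
  exact ⟨fun p => (hT N hN).2.1 _ _, (hG N (hT N hN).1).trans (hT N hN).2.2⟩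

end ZeroFirstColumn

section Boxes

/-- The integer vectors of length `k` with entries of absolute value at most `b`. -/
noncomputable def intBox (k b : ℕ) : Finset (Fin k → ℤ) :=
  Fintype.piFinset fun _ => Finset.Icc (-(b : ℤ)) b

theorem mem_intBox {k b : ℕ} {x : Fin k → ℤ} : x ∈ intBox k b ↔ ∀ i, |x i| ≤ (b : ℤ) := by
  simp only [intBox, Fintype.mem_piFinset, Finset.mem_Icc, abs_le]

theorem card_intBox (k b : ℕ) : (intBox k b).card = (2 * b + 1) ^ k := by
  simp only [intBox, Fintype.card_piFinset, Int.card_Icc, Finset.prod_const, Finset.card_univ,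
    Fintype.card_fin]
  congr 1
  lia

/-- The matrices in `SL(n, ℤ)` with entries of absolute value at most `B`. -/
noncomputable def slBox (n B : ℕ) : Finset (Matrix (Fin n) (Fin n) ℤ) :=
  (Fintype.piFinset fun _ => intBox n B).filter fun M : Matrix (Fin n) (Fin n) ℤ => M.det = 1

theorem mem_slBox {n B : ℕ} {M : Matrix (Fin n) (Fin n) ℤ} :
    M ∈ slBox n B ↔ M.det = 1 ∧ ∀ i j, |M i j| ≤ (B : ℤ) := by
  refine Finset.mem_filter.trans (and_comm.trans (and_congr_right fun _ => ?_))
  exact Fintype.mem_piFinset.trans (forall_congr' fun _ => mem_intBox)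

end Boxes

section DetBounds

theorem exists_norm_eq_norm_apply {ι E : Type*} [Fintype ι] [Nonempty ι]
    [SeminormedAddCommGroup E] (f : ι → E) : ∃ i, ‖f‖ = ‖f i‖ := by
  obtain ⟨i, hi⟩ := Finite.exists_max fun i => ‖f i‖
  exact ⟨i, ((pi_norm_le_iff_of_nonneg (norm_nonneg _)).2 hi).antisymm (norm_le_pi_norm f i)⟩

theorem abs_det_le {n : ℕ} {A : Matrix (Fin n) (Fin n) ℝ} {r : Fin n → ℝ}
    (h : ∀ i j, |A i j| ≤ r i) : |A.det| ≤ n.factorial * ∏ i, r i := by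
  have hterm (σ : Equiv.Perm (Fin n)) :
      |Equiv.Perm.sign σ • ∏ i, Aᵀ (σ i) i| ≤ ∏ i, r i := by
    rw [Units.smul_def, zsmul_eq_mul, abs_mul, ← Int.cast_abs, Int.isUnit_iff_abs_eq.1
      (Units.isUnit _), Int.cast_one, one_mul, Finset.abs_prod]
    exact Finset.prod_le_prod (fun _ _ => abs_nonneg _) fun i _ => h _ _
  rw [← det_transpose, det_apply]
  refine (Finset.abs_sum_le_sum_abs _ _).trans ((Finset.sum_le_sum fun σ _ => hterm σ).trans ?_)
  simp [Finset.card_univ, Fintype.card_perm]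

theorem abs_det_mul_abs_le {n : ℕ} {A : Matrix (Fin n) (Fin n) ℝ} {y r : Fin n → ℝ}
    (hA : ∀ i j, |A i j| ≤ r i) (hy : ∀ i, |(A *ᵥ y) i| ≤ r i) (l : Fin n) :
    |A.det| * |y l| ≤ n.factorial * ∏ i, r i := by
  have hcramer : A.det * y l = (A.updateCol l (A *ᵥ y)).det := by
    rw [← cramer_apply, cramer_eq_adjugate_mulVec, mulVec_mulVec, adjugate_mul, smul_mulVec,
      one_mulVec, Pi.smul_apply, smul_eq_mul]
  rw [← abs_mul, hcramer]
  refine abs_det_le fun i j => ?_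
  obtain rfl | hj := eq_or_ne j l
  · rw [updateCol_self]
    exact hy i
  · rw [updateCol_ne hj]
    exact hA i j

theorem dotProduct_eq_zero_of_smul_eq {R ι : Type*} [CommRing R] [IsDomain R] [Fintype ι]
    [DecidableEq ι] {m y : ι → R} {N N' : Matrix ι ι R} {c : R} (hc : c ≠ 0) (hN : N.det = 1)
    (hN' : N'.det = 1) (h : c • N' = c • N + vecMulVec (N *ᵥ y) m) : m ⬝ᵥ y = 0 := by
  have hfactor : c • N' = N * (c • 1 + vecMulVec y m) := by
    rw [h, Matrix.mul_add, mul_vecMulVec, Matrix.mul_smul, Matrix.mul_one]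
  have hdet := congrArg det hfactor
  rw [det_mul, hN, det_add_vecMulVec, det_smul, det_smul, hN', det_one, one_mul, left_eq_add,
    adjugate_smul, adjugate_one, smul_mulVec, one_mulVec, dotProduct_smul, smul_eq_mul] at hdet
  exact (mul_eq_zero.1 hdet).resolve_left (pow_ne_zero _ hc)

end DetBounds

section NondegenerateCount

variable {d B : ℕ} {m : Fin (d + 1) → ℤ}

theorem norm_vecMul_adjugate_mul_abs_le (hm : m 0 ≠ 0)
    {N N' : Matrix (Fin (d + 1)) (Fin (d + 1)) ℤ} (hN : N ∈ slBox (d + 1) B)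
    (hN' : N' ∈ slBox (d + 1) B) {y : Fin (d + 1) → ℤ}
    (h : m 0 • N' = m 0 • N + vecMulVec (N *ᵥ y) m) (l : Fin (d + 1)) :
    ‖m ᵥ* N.adjugate‖ * |(y l : ℝ)| ≤ (d + 1).factorial * (‖m‖ * (2 * B) ^ d) := by
  rw [mem_slBox] at hN hN'
  have hmy : m ⬝ᵥ y = 0 := dotProduct_eq_zero_of_smul_eq hm hN.1 hN'.1 h
  have hNy (i : Fin (d + 1)) : (N *ᵥ y) i = N' i 0 - N i 0 := by
    have hi := congrFun₂ h i 0
    simp only [Matrix.smul_apply, Matrix.add_apply, vecMulVec_apply, smul_eq_mul] at hi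
    exact mul_left_cancel₀ hm (by linear_combination -hi)
  obtain ⟨j, hj⟩ := exists_norm_eq_norm_apply (m ᵥ* N.adjugate)
  have hprod : ∏ i, Function.update (fun _ => 2 * (B : ℝ)) j ‖m‖ i = ‖m‖ * (2 * B) ^ d := by
    rw [Finset.prod_update_of_mem (Finset.mem_univ j), Finset.prod_const,
      Finset.card_sdiff_of_subset (Finset.subset_univ _)]
    simp
  have hmulVec (i : Fin (d + 1)) :
      ((N.updateRow j m).map ((↑) : ℤ → ℝ) *ᵥ fun i => (y i : ℝ)) i =
        (((N.updateRow j m) *ᵥ y) i : ℤ) :=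
    (RingHom.map_mulVec (Int.castRingHom ℝ) _ _ _).symm
  rw [hj, vecMul_adjugate_apply, Int.norm_eq_abs, ← hprod, Int.cast_det]
  refine abs_det_mul_abs_le (y := fun i => (y i : ℝ)) (fun i k => ?_) (fun i => ?_) l
  · obtain rfl | hi := eq_or_ne i j
    · simpa [← Int.norm_eq_abs] using norm_le_pi_norm m k
    · have hB : |(N i k : ℝ)| ≤ B := mod_cast hN.2 i k
      simpa [hi] using hB.trans (by linarith [Nat.cast_nonneg (α := ℝ) B])
  · rw [hmulVec]
    obtain rfl | hi := eq_or_ne i j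
    · simp [mulVec, hmy]
    · have hB : |(N' i 0 : ℝ)| ≤ B := mod_cast hN'.2 i 0
      have hB' : |(N i 0 : ℝ)| ≤ B := mod_cast hN.2 i 0
      rw [mulVec, updateRow_ne hi, Function.update_of_ne hi, ← mulVec, hNy, Int.cast_sub, two_mul]
      exact (abs_sub _ _).trans (add_le_add hB hB')

theorem card_filter_clearFirstColumn_eq_le (hm : m 0 ≠ 0) {η : ℝ} (hη : 0 < η) (hB : 1 ≤ B)
    {N : Matrix (Fin (d + 1)) (Fin (d + 1)) ℤ} (hN : N ∈ slBox (d + 1) B)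
    (hNm : η * B ^ d ≤ ‖m ᵥ* N.adjugate‖) :
    ((slBox (d + 1) B).filter fun N' =>
      clearFirstColumn (fun i => (m i : ℚ)) (N'.map (↑)) =
        clearFirstColumn (fun i => (m i : ℚ)) (N.map (↑))).card ≤
      (intBox (d + 1) ⌊(d + 1).factorial * ‖m‖ * 2 ^ d / η⌋₊).card := by
  have hrel {N' : Matrix (Fin (d + 1)) (Fin (d + 1)) ℤ}
      (h : clearFirstColumn (fun i => (m i : ℚ)) (N'.map (↑)) =
        clearFirstColumn (fun i => (m i : ℚ)) (N.map (↑))) :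
      m 0 • N' = m 0 • N +
        vecMulVec (N *ᵥ (N.adjugate *ᵥ fun i => N' i 0 - N i 0)) m := by
    rw [mulVec_mulVec, mul_adjugate, (mem_slBox.1 hN).1, one_smul, one_mulVec]
    have hq := smul_eq_smul_add_vecMulVec_of_clearFirstColumn_eq (mod_cast hm) h
    ext i j
    have hij := congrFun₂ hq i j
    simp only [Matrix.smul_apply, Matrix.add_apply, vecMulVec_apply, smul_eq_mul,
      Matrix.map_apply] at hij ⊢
    exact_mod_cast hij
  refine Finset.card_le_card_of_injOn (fun N' => N.adjugate *ᵥ fun i => N' i 0 - N i 0)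
    (fun N' hN' => ?_) fun N₁ hN₁ N₂ hN₂ heq => ?_
  · obtain ⟨hN', h⟩ := Finset.mem_filter.1 hN'
    refine mem_intBox.2 fun l => ?_
    have hle : η * B ^ d * |((N.adjugate *ᵥ fun i => N' i 0 - N i 0) l : ℝ)| ≤
        (d + 1).factorial * (‖m‖ * (2 * B) ^ d) :=
      (mul_le_mul_of_nonneg_right hNm (abs_nonneg _)).trans
        (norm_vecMul_adjugate_mul_abs_le hm hN hN' (hrel h) l)
    rw [Int.abs_eq_natAbs, Nat.cast_le]
    refine Nat.le_floor ?_
    rw [Nat.cast_natAbs, Int.cast_abs, le_div_iff₀ hη]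
    refine le_of_mul_le_mul_right ?_ (pow_pos (Nat.cast_pos.2 hB) d : (0 : ℝ) < (B : ℝ) ^ d)
    rw [mul_pow] at hle
    linarith
  · have h := (hrel (Finset.mem_filter.1 hN₁).2).trans
      (congrArg (fun y => m 0 • N + vecMulVec (N *ᵥ y) m) heq)
    exact smul_right_injective _ hm (h.trans (hrel (Finset.mem_filter.1 hN₂).2).symm)

theorem clearFirstColumn_apply_mem (hm : m 0 ≠ 0) {μ : ℕ} (hμ : m ∈ intBox (d + 1) μ)
    {N : Matrix (Fin (d + 1)) (Fin (d + 1)) ℤ} (hN : N ∈ slBox (d + 1) B) (i j : Fin (d + 1)) :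
    clearFirstColumn (fun i => (m i : ℚ)) (N.map (↑)) i j ∈
      (Finset.Icc (-(2 * μ * B : ℤ)) (2 * μ * B)).image fun k : ℤ => (k : ℚ) / m 0 := by
  rw [mem_intBox] at hμ
  have hNB := (mem_slBox.1 hN).2
  rw [clearFirstColumn_apply (mod_cast hm)]
  refine Finset.mem_image.2 ⟨m 0 * N i j - N i 0 * m j, ?_, by simp⟩
  rw [Finset.mem_Icc, ← abs_le]
  calc |m 0 * N i j - N i 0 * m j| ≤ |m 0| * |N i j| + |N i 0| * |m j| := by
        simpa only [abs_mul] using abs_sub (m 0 * N i j) (N i 0 * m j)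
    _ ≤ μ * B + B * μ := by gcongr <;> first | exact hμ _ | exact hNB _ _
    _ = 2 * μ * B := by ring

theorem eval_coeff_charpolySlope_clearFirstColumn (P : MvPolynomial (Fin d) ℤ)
    (m ξ : Fin (d + 1) → ℤ) (N : Matrix (Fin (d + 1)) (Fin (d + 1)) ℤ) :
    MvPolynomial.eval (fun i : Fin d => (charpolySlope (fun i => (m i : ℚ)) (fun i => (ξ i : ℚ))
      (clearFirstColumn (fun i => (m i : ℚ)) (N.map (↑)))).coeff i)
        (MvPolynomial.map (Int.castRingHom ℚ) P) =
      (MvPolynomial.eval (fun i : Fin d => (charpolySlope m ξ N).coeff i) P : ℤ) := by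
  have hslope := charpolySlope_map (Int.castRingHom ℚ) m ξ N
  refine Eq.trans ?_ (MvPolynomial.map_eval (Int.castRingHom ℚ) _ P).symm
  congr 2
  funext i
  rw [clearFirstColumn, charpolySlope_add_vecMulVec]
  exact (congrArg (coeff · i) hslope).trans (coeff_map _ _)

theorem exists_mem_intBox (m : Fin d → ℤ) : ∃ μ : ℕ, m ∈ intBox d μ :=
  ⟨∑ i, (m i).natAbs, mem_intBox.2 fun i => by
    rw [Int.abs_eq_natAbs]
    exact_mod_cast Finset.single_le_sum (f := fun i => (m i).natAbs) (fun _ _ => Nat.zero_le _)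
      (Finset.mem_univ i)⟩

theorem exists_card_image_clearFirstColumn_le {P : MvPolynomial (Fin d) ℤ} (hP : P ≠ 0)
    {ξ : Fin (d + 1) → ℤ} (hm : m 0 ≠ 0) (hξ : ξ ≠ 0) (h0 : m ⬝ᵥ ξ = 0) :
    ∃ K : ℕ, ∀ B ≥ 1, (((slBox (d + 1) B).filter fun N =>
      MvPolynomial.eval (fun i : Fin d => (charpolySlope m ξ N).coeff i) P = 0).image
        fun N => clearFirstColumn (fun i => (m i : ℚ)) (N.map (↑))).card ≤
          K * B ^ ((d + 1) * d - 1) := by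
  obtain ⟨D, hD⟩ := exists_card_mul_card_le_of_forall_eval_charpolySlope_eq_zero
    (P := MvPolynomial.map (Int.castRingHom ℚ) P) (m := fun i => (m i : ℚ))
    (ξ := fun i => (ξ i : ℚ))
    ((map_ne_zero_iff _ (MvPolynomial.map_injective _ Int.cast_injective)).2 hP) (mod_cast hm)
    (fun h => hξ (funext fun i => Int.cast_eq_zero.1 (congrFun h i)))
    (by simpa [dotProduct] using congrArg (Int.cast : ℤ → ℚ) h0)
  obtain ⟨μ, hμ⟩ := exists_mem_intBox m
  refine ⟨D * (4 * μ + 1) ^ ((d + 1) * d - 1), fun B hB => ?_⟩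
  set A := (Finset.Icc (-(2 * μ * B : ℤ)) (2 * μ * B)).image fun k : ℤ => (k : ℚ) / m 0
  have hA : A.card ≤ (4 * μ + 1) * B := by
    refine Finset.card_image_le.trans ?_
    rw [Int.card_Icc, Int.toNat_le]
    push_cast
    nlinarith
  have hA0 : 0 < A.card := by
    refine Finset.card_pos.2 (Finset.Nonempty.image (Finset.nonempty_Icc.2 ?_) _)
    exact (neg_nonpos.2 (by positivity)).trans (by positivity)
  have hpow : A.card ^ ((d + 1) * d) ≤ A.card ^ ((d + 1) * d - 1) * A.card :=
    (Nat.pow_le_pow_right hA0 le_tsub_add).trans_eq (pow_succ _ _)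
  refine le_trans (Nat.le_of_mul_le_mul_right ((hD A _ fun W hW => ?_).trans ?_) hA0)
    (b := D * A.card ^ ((d + 1) * d - 1)) ?_
  · obtain ⟨N, hN, rfl⟩ := Finset.mem_image.1 hW
    obtain ⟨hN, hPN⟩ := Finset.mem_filter.1 hN
    exact ⟨clearFirstColumn_apply_zero (mod_cast hm) _,
      fun i j => clearFirstColumn_apply_mem hm hμ hN i j.succ,
      (eval_coeff_charpolySlope_clearFirstColumn P m ξ N).trans (mod_cast hPN)⟩
  · rw [mul_assoc]
    exact Nat.mul_le_mul_left D hpow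
  · rw [mul_assoc, ← mul_pow]
    gcongr

theorem exists_card_filter_nondegenerate_le {P : MvPolynomial (Fin d) ℤ} (hP : P ≠ 0)
    {ξ : Fin (d + 1) → ℤ} (hm : m 0 ≠ 0) (hξ : ξ ≠ 0) (h0 : m ⬝ᵥ ξ = 0) {η : ℝ} (hη : 0 < η) :
    ∃ K : ℕ, ∀ B ≥ 1, ((slBox (d + 1) B).filter fun N => η * B ^ d ≤ ‖m ᵥ* N.adjugate‖ ∧
      MvPolynomial.eval (fun i : Fin d => (charpolySlope m ξ N).coeff i) P = 0).card ≤
        K * B ^ ((d + 1) * d - 1) := by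
  classical
  obtain ⟨K, hK⟩ := exists_card_image_clearFirstColumn_le hP hm hξ h0
  set Y := (intBox (d + 1) ⌊(d + 1).factorial * ‖m‖ * 2 ^ d / η⌋₊).card
  refine ⟨Y * K, fun B hB => ?_⟩
  set 𝒩 := (slBox (d + 1) B).filter fun N => η * B ^ d ≤ ‖m ᵥ* N.adjugate‖ ∧
    MvPolynomial.eval (fun i : Fin d => (charpolySlope m ξ N).coeff i) P = 0
  let clear (N : Matrix (Fin (d + 1)) (Fin (d + 1)) ℤ) :=
    clearFirstColumn (fun i => (m i : ℚ)) (N.map (↑))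
  have hfiber : ∀ W ∈ 𝒩.image clear, (𝒩.filter fun N => clear N = W).card ≤ Y := by
    intro W hW
    obtain ⟨N, hN, rfl⟩ := Finset.mem_image.1 hW
    obtain ⟨hN, hNm, -⟩ := Finset.mem_filter.1 hN
    exact (Finset.card_le_card (Finset.filter_subset_filter _ (Finset.filter_subset _ _))).trans
      (card_filter_clearFirstColumn_eq_le hm hη hB hN hNm)
  have himage : (𝒩.image clear).card ≤ K * B ^ ((d + 1) * d - 1) := by
    refine (Finset.card_le_card (Finset.image_subset_image ?_)).trans (hK B hB)
    exact Finset.monotone_filter_right _ fun N _ hN => hN.2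
  calc 𝒩.card ≤ Y * (𝒩.image clear).card := Finset.card_le_mul_card_image _ _ hfiber
    _ ≤ Y * K * B ^ ((d + 1) * d - 1) := by
      rw [mul_assoc]
      exact Nat.mul_le_mul_left Y himage

end NondegenerateCount

section LeftMul

variable {n : ℕ}

theorem measurePreserving_of_comp_self_eq_id {E : Type*} [NormedAddCommGroup E] [NormedSpace ℝ E]
    [MeasurableSpace E] [BorelSpace E] [FiniteDimensional ℝ E] (μ : Measure E)
    [μ.IsAddHaarMeasure] {f : E →ₗ[ℝ] E} (hf : f ∘ₗ f = LinearMap.id) :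
    MeasurePreserving f μ μ := by
  have hdet : LinearMap.det f * LinearMap.det f = 1 := by
    rw [← LinearMap.det_comp, hf, LinearMap.det_id]
  refine ⟨(LinearMap.continuous_of_finiteDimensional f).measurable, ?_⟩
  rw [Measure.map_linearMap_addHaar_eq_smul_addHaar _ (left_ne_zero_of_mul_eq_one hdet)]
  obtain h | h := mul_self_eq_one_iff.1 hdet <;> simp [h]

theorem measurePreserving_swap (n : ℕ) :
    MeasurePreserving (Function.swap : (Fin n → Fin n → ℝ) → Fin n → Fin n → ℝ) :=
  let T : (Fin n → Fin n → ℝ) →ₗ[ℝ] Fin n → Fin n → ℝ :=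
    { toFun := Function.swap, map_add' := fun _ _ => rfl, map_smul' := fun _ _ => rfl }
  measurePreserving_of_comp_self_eq_id volume (f := T) rfl

/-- Left multiplication by a matrix on square matrices, the latter regarded as functions so that
they carry the Lebesgue measure and the sup norm. -/
def leftMul (M : Matrix (Fin n) (Fin n) ℝ) (Y : Fin n → Fin n → ℝ) : Fin n → Fin n → ℝ :=
  Matrix.of.symm (M * Matrix.of Y)

theorem leftMul_one (Y : Fin n → Fin n → ℝ) : leftMul 1 Y = Y := by
  rw [leftMul, Matrix.one_mul, Equiv.symm_apply_apply]

theorem leftMul_mul (M N : Matrix (Fin n) (Fin n) ℝ) (Y : Fin n → Fin n → ℝ) :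
    leftMul (M * N) Y = leftMul M (leftMul N Y) := by
  rw [leftMul, leftMul, leftMul, Equiv.apply_symm_apply, ← Matrix.mul_assoc]

theorem measurePreserving_leftMul {M : Matrix (Fin n) (Fin n) ℝ} (hM : M.det = 1) :
    MeasurePreserving (leftMul M) := by
  have hvec : MeasurePreserving (toLin' M) := by
    refine ⟨(LinearMap.continuous_of_finiteDimensional _).measurable, ?_⟩
    rw [Real.map_matrix_volume_pi_eq_smul_volume_pi (hM ▸ one_ne_zero), hM]
    simp
  exact (measurePreserving_swap n).comp
    ((volume_preserving_pi fun _ : Fin n => hvec).comp (measurePreserving_swap n))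

/-- A neighbourhood of the identity matrix small enough for its translates under `SL(n, ℤ)` to be
pairwise disjoint. -/
def oneNhd (n : ℕ) : Set (Fin n → Fin n → ℝ) :=
  Metric.ball (Matrix.of.symm 1) (1 / (4 * n))

theorem measurableSet_oneNhd : MeasurableSet (oneNhd n) :=
  Metric.isOpen_ball.measurableSet

theorem norm_vecMul_sub_self_le {u : Fin n → Fin n → ℝ} (hu : u ∈ oneNhd n) (x : Fin n → ℝ) :
    ‖x ᵥ* Matrix.of u - x‖ ≤ ‖x‖ / 4 := by
  refine (pi_norm_le_iff_of_nonneg (by positivity)).2 fun j => ?_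
  have hn : (n : ℝ) ≠ 0 := Nat.cast_ne_zero.2 j.pos.ne'
  have hentry (k : Fin n) : ‖u k j - (1 : Matrix (Fin n) (Fin n) ℝ) k j‖ ≤ 1 / (4 * n) :=
    ((norm_le_pi_norm (u k - Matrix.of.symm 1 k) j).trans (norm_le_pi_norm (u - _) k)).trans
      (mem_ball_iff_norm.1 hu).le
  have hsum : (x ᵥ* Matrix.of u - x) j =
      ∑ k, x k * (u k j - (1 : Matrix (Fin n) (Fin n) ℝ) k j) := by
    conv_lhs => rw [← vecMul_one x, vecMul_vecMul, Matrix.one_mul, ← vecMul_sub]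
    rfl
  calc ‖(x ᵥ* Matrix.of u - x) j‖ ≤ ∑ _k : Fin n, ‖x‖ * (1 / (4 * n)) := by
        rw [hsum]
        refine (norm_sum_le _ _).trans (Finset.sum_le_sum fun k _ => ?_)
        exact (norm_mul_le _ _).trans
          (mul_le_mul (norm_le_pi_norm x k) (hentry k) (norm_nonneg _) (norm_nonneg _))
    _ = ‖x‖ / 4 := by
        rw [Finset.sum_const, Finset.card_univ, Fintype.card_fin, nsmul_eq_mul]
        field_simp

theorem eq_one_of_leftMul_mem {G : Matrix (Fin n) (Fin n) ℤ} {u : Fin n → Fin n → ℝ}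
    (hu : u ∈ oneNhd n) (hGu : leftMul (G.map (↑)) u ∈ oneNhd n) : G = 1 := by
  ext i j
  set g : Fin n → ℝ := fun k => G i k
  set e : Fin n → ℝ := Matrix.of.symm 1 i
  have hg : ‖leftMul (G.map (↑)) u i - g‖ ≤ ‖g‖ / 4 := norm_vecMul_sub_self_le hu g
  have hrow : ‖leftMul (G.map (↑)) u i - e‖ ≤ 1 / 4 := by
    refine ((norm_le_pi_norm (leftMul (G.map (↑)) u - _) i).trans
      (mem_ball_iff_norm.1 hGu).le).trans ?_
    have hn : (1 : ℝ) ≤ n := Nat.one_le_cast.2 i.pos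
    exact one_div_le_one_div_of_le four_pos (by linarith)
  have he : ‖e‖ ≤ 1 := (pi_norm_le_iff_of_nonneg zero_le_one).2 fun k => by
    simp only [e, of_symm_apply, Matrix.one_apply]
    split_ifs <;> simp
  have hge : ‖g - e‖ < 1 := by
    have h₁ := norm_sub_le_norm_sub_add_norm_sub g (leftMul (G.map (↑)) u i) e
    have h₂ := norm_sub_norm_le g e
    rw [norm_sub_rev] at hg
    linarith
  have hij : |G i j - (1 : Matrix (Fin n) (Fin n) ℤ) i j| < 1 := by
    rw [← Int.cast_lt (R := ℝ), Int.cast_abs, Int.cast_one]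
    refine lt_of_eq_of_lt ?_ ((norm_le_pi_norm (g - e) j).trans_lt hge)
    simp [g, e, Matrix.one_apply]
  exact sub_eq_zero.1 (Int.abs_lt_one_iff.1 hij)

theorem card_mul_volume_oneNhd_le {S : Finset (Matrix (Fin n) (Fin n) ℤ)}
    (hS : ∀ M ∈ S, M.det = 1) {B : ℝ} (hB : 0 < B) {V : Set (Fin n → Fin n → ℝ)}
    (h : ∀ M ∈ S, ∀ u ∈ oneNhd n, B⁻¹ • leftMul (M.map (↑)) u ∈ V) :
    S.card * volume (oneNhd n) ≤ ENNReal.ofReal (B ^ (n * n)) * volume V := by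
  have hmul (M N : Matrix (Fin n) (Fin n) ℤ) (Y : Fin n → Fin n → ℝ) :
      leftMul (M.map (↑)) (leftMul (N.map (↑)) Y) = leftMul ((M * N).map (↑)) Y := by
    rw [← leftMul_mul]
    exact congrArg (leftMul · Y) (Matrix.map_mul (f := Int.castRingHom ℝ)).symm
  have hadj {M} (hM : M ∈ S) : MeasurePreserving (leftMul (M.adjugate.map (↑))) :=
    measurePreserving_leftMul (by rw [← Int.cast_det, det_adjugate, hS M hM, one_pow, Int.cast_one])
  have hmeas {M} (hM : M ∈ S) : MeasurableSet (leftMul (M.adjugate.map (↑)) ⁻¹' oneNhd n) :=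
    (hadj hM).measurable measurableSet_oneNhd
  have hdisjoint : (S : Set (Matrix (Fin n) (Fin n) ℤ)).PairwiseDisjoint
      fun M => leftMul (M.adjugate.map (↑)) ⁻¹' oneNhd n := by
    refine fun M hM M' hM' hne => Set.disjoint_left.2 fun x hx hx' => hne ?_
    have hM1 : M.adjugate * M = 1 := by rw [adjugate_mul, hS M hM, one_smul]
    have hM1' : M' * M'.adjugate = 1 := by rw [mul_adjugate, hS M' hM', one_smul]
    have hone : M.adjugate * M' = 1 := eq_one_of_leftMul_mem hx' (by
      rwa [hmul, Matrix.mul_assoc, hM1', Matrix.mul_one])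
    rw [mul_eq_one_comm] at hM1
    exact left_inv_eq_right_inv hM1 hone
  have hsub : (⋃ M ∈ S, leftMul (M.adjugate.map (↑)) ⁻¹' oneNhd n) ⊆ (B • ·) '' V := by
    refine Set.iUnion₂_subset fun M hM x hx => ⟨_, h M hM _ hx, ?_⟩
    rw [hmul, mul_adjugate, hS M hM, one_smul, Matrix.map_one _ Int.cast_zero Int.cast_one,
      leftMul_one]
    exact smul_inv_smul₀ hB.ne' x
  have hvol := measure_mono (μ := volume) hsub
  rw [measure_biUnion_finset hdisjoint fun M hM => hmeas hM, Finset.sum_congr rfl fun M hM =>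
    (hadj hM).measure_preimage measurableSet_oneNhd.nullMeasurableSet, Set.image_smul,
    Measure.addHaar_smul_of_nonneg _ hB.le, Module.finrank_pi_fintype] at hvol
  simpa using hvol

end LeftMul

section Slices

theorem volume_le_mul_of_forall_volume_insertNth_le {k : ℕ} {E : Type*} [MeasureSpace E]
    [SigmaFinite (volume : Measure E)] {T : Set (Fin (k + 1) → E)} (hT : MeasurableSet T)
    (i : Fin (k + 1)) {U : Set (Fin k → E)} {v : ENNReal} (hU : ∀ x ∈ T, i.removeNth x ∈ U)
    (hv : ∀ w : Fin k → E, volume {y : E | (i.insertNth y w : Fin (k + 1) → E) ∈ T} ≤ v) :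
    volume T ≤ v * volume U := by
  have hpres := (volume_preserving_piFinSuccAbove (fun _ : Fin (k + 1) => E) i).symm
  rw [← hpres.measure_preimage hT.nullMeasurableSet, Measure.volume_eq_prod,
    Measure.prod_apply_symm (hpres.measurable hT), ← measure_toMeasurable U,
    ← lintegral_indicator_const (measurableSet_toMeasurable _ _)]
  refine lintegral_mono fun w => ?_
  by_cases hw : w ∈ toMeasurable volume U
  · rw [Set.indicator_of_mem hw]
    exact hv w
  · rw [Set.indicator_of_notMem hw, nonpos_iff_eq_zero]
    convert measure_empty (μ := (volume : Measure E))
    refine Set.eq_empty_of_forall_notMem fun y hy => hw (subset_toMeasurable _ _ ?_)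
    exact Fin.removeNth_insertNth (α := fun _ => E) i y w ▸ hU _ hy

theorem volume_slab_le {d : ℕ} {c : Fin (d + 1) → ℝ} (hc : c ≠ 0) (b : Fin (d + 1) → ℝ) {s : ℝ}
    (hs : 0 ≤ s) (δ : ℝ) :
    volume {y : Fin (d + 1) → ℝ | ‖y - b‖ ≤ s ∧ |y ⬝ᵥ c| ≤ δ} ≤
      ENNReal.ofReal ((2 * s) ^ d * (2 * δ)) * ENNReal.ofReal ‖c‖⁻¹ := by
  obtain ⟨i, hi⟩ := exists_norm_eq_norm_apply c
  have hci : c i ≠ 0 := norm_ne_zero_iff.1 (hi ▸ norm_ne_zero_iff.2 hc)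
  have hmeas : MeasurableSet {y : Fin (d + 1) → ℝ | ‖y - b‖ ≤ s ∧ |y ⬝ᵥ c| ≤ δ} := by
    refine ((isClosed_le ?_ continuous_const).and (isClosed_le ?_ continuous_const)).measurableSet
    · fun_prop
    · unfold dotProduct
      fun_prop
  refine (volume_le_mul_of_forall_volume_insertNth_le hmeas i
    (U := Metric.closedBall (i.removeNth b) s) (v := ENNReal.ofReal (2 * (δ / ‖c‖)))
    (fun y hy => ?_) fun w => ?_).trans ?_
  · rw [mem_closedBall_iff_norm, pi_norm_le_iff_of_nonneg hs]
    exact fun j => (norm_le_pi_norm (y - b) (i.succAbove j)).trans hy.1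
  · rw [← Real.volume_closedBall (-(w ⬝ᵥ i.removeNth c) / c i)]
    refine measure_mono fun y hy => ?_
    have hdot : (i.insertNth y w : Fin (d + 1) → ℝ) ⬝ᵥ c =
        (y - -(w ⬝ᵥ i.removeNth c) / c i) * c i := by
      rw [sub_mul, div_mul_cancel₀ _ hci, sub_neg_eq_add, dotProduct, Fin.sum_univ_succAbove _ i]
      simp [dotProduct, Fin.removeNth]
    rw [mem_closedBall_iff_norm, hi, le_div_iff₀ (norm_pos_iff.2 hci), ← norm_mul, ← hdot]
    exact hy.2
  · rw [Real.volume_pi_closedBall _ hs, Fintype.card_fin, ← ENNReal.ofReal_mul' (by positivity),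
      ← ENNReal.ofReal_mul' (by positivity)]
    exact ENNReal.ofReal_le_ofReal (by rw [div_eq_mul_inv]; linarith)

theorem volume_strip_le {d : ℕ} (a : ℝ) {W : Set (Fin d → ℝ)} (hW : MeasurableSet W) :
    volume {x : Fin (d + 1) → ℝ | |x 0| ≤ a ∧ vecTail x ∈ W} ≤
      ENNReal.ofReal (2 * a) * volume W := by
  have htail : Measurable (vecTail : (Fin (d + 1) → ℝ) → Fin d → ℝ) := by
    unfold vecTail
    fun_prop
  have hmeas : MeasurableSet {x : Fin (d + 1) → ℝ | |x 0| ≤ a} :=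
    (isClosed_le (by fun_prop) continuous_const).measurableSet
  refine volume_le_mul_of_forall_volume_insertNth_le (hmeas.inter (htail hW)) 0
    (fun x hx => hx.2) fun w => ?_
  rw [← Real.volume_closedBall 0 a]
  refine measure_mono fun y hy => ?_
  simpa using hy.1

theorem volume_eq_lintegral_volume_vecCons {k : ℕ} {E : Type*} [MeasureSpace E]
    [SigmaFinite (volume : Measure E)] {V : Set (Fin (k + 1) → E)} (hV : MeasurableSet V) :
    volume V = ∫⁻ Z : Fin k → E, volume {y : E | vecCons y Z ∈ V} := by
  have hpres := (volume_preserving_piFinSuccAbove (fun _ : Fin (k + 1) => E) 0).symm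
  rw [← hpres.measure_preimage hV.nullMeasurableSet, Measure.volume_eq_prod,
    Measure.prod_apply_symm (hpres.measurable hV)]
  refine lintegral_congr fun Z => congrArg volume (Set.ext fun y => ?_)
  exact iff_of_eq (congrArg (· ∈ V) (Fin.insertNth_zero' y Z))

theorem lintegral_measure_inter_eq_setLIntegral {α β : Type*} [MeasurableSpace α]
    [MeasurableSpace β] (μ : Measure α) (ν : Measure β) [SigmaFinite μ] [SigmaFinite ν]
    {P : Set (α × β)} (hP : MeasurableSet P) (W : Set α) :
    ∫⁻ y, μ ({x | (x, y) ∈ P} ∩ W) ∂ν = ∫⁻ x in W, ν {y | (x, y) ∈ P} ∂μ := by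
  refine Eq.trans ?_ ((Measure.prod_apply_symm hP).symm.trans (Measure.prod_apply hP))
  exact lintegral_congr fun y => (Measure.restrict_apply (measurable_prodMk_right hP)).symm

end Slices

section BallSlab

variable {d e : ℕ}

/-- The `d × e` matrices of sup norm at most `R` whose combination of rows with coefficients `θ`
has norm at most `S`. -/
def ballSlab (e : ℕ) (R S : ℝ) (θ : Fin d → ℝ) : Set (Fin d → Fin e → ℝ) :=
  {Z | ‖Z‖ ≤ R ∧ ‖θ ᵥ* Matrix.of Z‖ ≤ S}

theorem isClosed_mem_ballSlab (d e : ℕ) (R S : ℝ) :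
    IsClosed {p : (Fin d → ℝ) × (Fin d → Fin e → ℝ) | p.2 ∈ ballSlab e R S p.1} := by
  refine (isClosed_le (by fun_prop) continuous_const).and (isClosed_le ?_ continuous_const)
  unfold vecMul dotProduct
  fun_prop

theorem volume_ballSlab_le_mul {R S : ℝ} (hS : 0 ≤ S) {θ : Fin (d + 1) → ℝ} (hθ : θ ≠ 0) :
    volume (ballSlab e R S θ) ≤ ENNReal.ofReal ((2 * (S / ‖θ‖)) ^ e) *
      volume (Metric.closedBall (0 : Fin d → Fin e → ℝ) R) := by
  obtain ⟨i, hi⟩ := exists_norm_eq_norm_apply θ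
  have hθi : θ i ≠ 0 := norm_ne_zero_iff.1 (hi ▸ norm_ne_zero_iff.2 hθ)
  have hmeas : MeasurableSet (ballSlab e R S θ) :=
    ((isClosed_mem_ballSlab (d + 1) e R S).preimage (Continuous.prodMk_right θ)).measurableSet
  refine volume_le_mul_of_forall_volume_insertNth_le hmeas i (fun Z hZ => ?_) fun w => ?_
  · rw [mem_closedBall_zero_iff, pi_norm_le_iff_of_nonneg ((norm_nonneg _).trans hZ.1)]
    exact fun j => (norm_le_pi_norm Z (i.succAbove j)).trans hZ.1
  · have hvol := Real.volume_pi_closedBall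
      (-(θ i)⁻¹ • (i.removeNth θ ᵥ* Matrix.of w)) (div_nonneg hS (norm_nonneg θ))
    rw [Fintype.card_fin] at hvol
    rw [← hvol]
    refine measure_mono fun y hy => ?_
    have hcomb : θ ᵥ* Matrix.of (i.insertNth y w : Fin (d + 1) → Fin e → ℝ) =
        θ i • (y - -(θ i)⁻¹ • (i.removeNth θ ᵥ* Matrix.of w)) := by
      rw [neg_smul, sub_neg_eq_add, smul_add, smul_inv_smul₀ hθi]
      ext j
      rw [vecMul, dotProduct, Fin.sum_univ_succAbove _ i]
      simp [vecMul, dotProduct, Fin.removeNth]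
    rw [mem_closedBall_iff_norm, le_div_iff₀ (norm_pos_iff.2 hθ), hi, mul_comm, ← norm_smul,
      ← hcomb]
    exact hy.2

theorem exists_volume_ballSlab_le (d e : ℕ) (R : ℝ) {S : ℝ} (hS : 0 ≤ S) :
    ∃ C : ENNReal, C ≠ ⊤ ∧ ∀ θ : Fin d → ℝ,
      volume (ballSlab e R S θ) ≤ C * ENNReal.ofReal ((1 + ‖θ‖) ^ (-(e : ℝ))) := by
  obtain ⟨V, hV, hfar⟩ : ∃ V : ENNReal, V ≠ ⊤ ∧ ∀ θ : Fin d → ℝ, θ ≠ 0 →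
      volume (ballSlab e R S θ) ≤ ENNReal.ofReal ((2 * (S / ‖θ‖)) ^ e) * V := by
    obtain _ | d := d
    · exact ⟨0, ENNReal.zero_ne_top, fun θ hθ => (hθ (Subsingleton.elim θ 0)).elim⟩
    · exact ⟨_, measure_closedBall_lt_top.ne, fun θ hθ => volume_ballSlab_le_mul hS hθ⟩
  have hpow (x : ℝ) (hx : 0 ≤ x) : (1 + x) ^ (-(e : ℝ)) = ((1 + x) ^ e)⁻¹ := by
    rw [Real.rpow_neg (by positivity), Real.rpow_natCast]
  set V₀ := volume (Metric.closedBall (0 : Fin d → Fin e → ℝ) R)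
  refine ⟨ENNReal.ofReal (2 ^ e) * V₀ + ENNReal.ofReal ((4 * S) ^ e) * V, ?_, fun θ => ?_⟩
  · exact ENNReal.add_ne_top.2 ⟨ENNReal.mul_ne_top ENNReal.ofReal_ne_top
      measure_closedBall_lt_top.ne, ENNReal.mul_ne_top ENNReal.ofReal_ne_top hV⟩
  rw [hpow _ (norm_nonneg θ), add_mul, mul_right_comm, mul_right_comm (ENNReal.ofReal _) V,
    ← ENNReal.ofReal_mul (by positivity), ← ENNReal.ofReal_mul (by positivity)]
  obtain hθ | hθ := le_or_gt ‖θ‖ 1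
  · refine le_add_right (le_trans ?_ (le_mul_of_one_le_left' (ENNReal.one_le_ofReal.2 ?_)))
    · exact measure_mono fun Z hZ => mem_closedBall_zero_iff.2 hZ.1
    · rw [← inv_pow, ← mul_pow, ← div_eq_mul_inv]
      exact one_le_pow₀ ((one_le_div (by positivity)).2 (by linarith))
  · refine le_add_left ((hfar θ (norm_pos_iff.1 (by linarith))).trans ?_)
    gcongr
    rw [← inv_pow, ← mul_pow, ← div_eq_mul_inv, ← mul_div_assoc]
    refine pow_le_pow_left₀ (by positivity) ?_ e
    rw [div_le_div_iff₀ (by positivity) (by positivity)]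
    nlinarith

theorem lintegral_volume_ballSlab_lt_top (hde : d < e) (R : ℝ) {S : ℝ} (hS : 0 ≤ S) :
    ∫⁻ θ : Fin d → ℝ, volume (ballSlab e R S θ) < ⊤ := by
  obtain ⟨C, hC, h⟩ := exists_volume_ballSlab_le d e R hS
  refine (lintegral_mono h).trans_lt ?_
  rw [lintegral_const_mul' _ _ hC]
  refine ENNReal.mul_lt_top hC.lt_top (finite_integral_one_add_norm ?_)
  rwa [Module.finrank_fin_fun, Nat.cast_lt]

end BallSlab

section MinorVec

variable {R : Type*} [CommRing R] {d : ℕ}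

/-- The signed maximal minors of a `d × (d + 1)` matrix, that is, the generalized cross product of
its rows. -/
def minorVec (Z : Fin d → Fin (d + 1) → R) (k : Fin (d + 1)) : R :=
  (Matrix.of (vecCons (Pi.single k 1) Z)).det

theorem minorVec_vecTail (A : Matrix (Fin (d + 1)) (Fin (d + 1)) R) (k : Fin (d + 1)) :
    minorVec (vecTail A) k = A.adjugate k 0 := by
  rw [adjugate_apply, minorVec]
  congr 1
  ext i j
  refine Fin.cases ?_ (fun i => ?_) i
  · simp
  · simp [updateRow_apply]
    rfl

theorem minorVec_eq_adjugate (y : Fin (d + 1) → R) (Z : Fin d → Fin (d + 1) → R)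
    (k : Fin (d + 1)) : minorVec Z k = (Matrix.of (vecCons y Z)).adjugate k 0 :=
  minorVec_vecTail (Matrix.of (vecCons y Z)) k

theorem det_of_vecCons (y : Fin (d + 1) → R) (Z : Fin d → Fin (d + 1) → R) :
    (Matrix.of (vecCons y Z)).det = y ⬝ᵥ minorVec Z := by
  rw [funext (minorVec_eq_adjugate y Z)]
  simpa [Matrix.mul_apply, dotProduct] using
    (congrFun₂ (mul_adjugate (Matrix.of (vecCons y Z))) 0 0).symm

theorem mulVec_minorVec (Z : Fin d → Fin (d + 1) → R) : Matrix.of Z *ᵥ minorVec Z = 0 := by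
  rw [funext (minorVec_eq_adjugate 0 Z)]
  ext i
  simpa [Matrix.mul_apply, mulVec, dotProduct] using
    congrFun₂ (mul_adjugate (Matrix.of (vecCons 0 Z))) i.succ 0

theorem dotProduct_minorVec_of_eq_single_add_vecMul {Z : Fin d → Fin (d + 1) → R}
    {y : Fin (d + 1) → R} {k : Fin (d + 1)} {τ : R} {θ : Fin d → R}
    (h : y = Pi.single k τ + θ ᵥ* Matrix.of Z) : y ⬝ᵥ minorVec Z = τ * minorVec Z k := by
  rw [h, add_dotProduct, single_dotProduct, ← dotProduct_mulVec, mulVec_minorVec,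
    dotProduct_zero, add_zero]

end MinorVec

section MinorVecMeasure

variable {d : ℕ}

theorem continuous_minorVec : Continuous (minorVec : (Fin d → Fin (d + 1) → ℝ) → _) := by
  refine continuous_pi fun k => Continuous.matrix_det (continuous_pi fun i => ?_)
  exact Fin.cases continuous_const (fun i => continuous_apply i) i

theorem ae_minorVec_ne_zero (d : ℕ) : ∀ᵐ Z : Fin d → Fin (d + 1) → ℝ, minorVec Z ≠ 0 := by
  let J : Fin d → Fin (d + 1) → ℝ := fun i => Pi.single i.succ 1
  refine ae_mem_of_ae_add_linearMap_mem (LinearMap.toSpanSingleton ℝ _ J) volume volume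
    (isOpen_ne_fun continuous_minorVec continuous_const).measurableSet fun Z => ?_
  set W : Matrix (Fin d) (Fin d) ℝ := Matrix.of fun i j => Z i j.succ
  have hcharpoly (t : ℝ) : minorVec (Z + t • J) 0 = (-W).charpoly.eval t := by
    rw [minorVec, det_succ_row_zero, Finset.sum_eq_single 0 (by simp +contextual) (by simp),
      eval_charpoly]
    simp only [Fin.val_zero, pow_zero, one_mul, Matrix.of_apply, cons_val_zero, Pi.single_eq_same]
    congr 1
    ext i j
    simp [W, J, Matrix.diagonal_apply, Pi.single_apply, eq_comm, add_comm]
  have hroots : ∀ᵐ t : ℝ, t ∉ {t | (-W).charpoly.eval t = 0} :=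
    measure_eq_zero_iff_ae_notMem.1
      ((finite_setOfPred_isRoot (charpoly_monic (-W)).ne_zero).measure_zero _)
  filter_upwards [hroots] with t ht h
  exact ht ((hcharpoly t).symm.trans (congrFun h 0))

theorem volume_eq_abs_minorVec_mul {Z : Fin d → Fin (d + 1) → ℝ} {k : Fin (d + 1)}
    (hk : minorVec Z k ≠ 0) (S : Set (Fin (d + 1) → ℝ)) :
    volume S = ENNReal.ofReal |minorVec Z k| *
      volume {x : Fin (d + 1) → ℝ | Pi.single k (x 0) + vecTail x ᵥ* Matrix.of Z ∈ S} := by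
  set A := Matrix.of (vecCons (Pi.single k 1) Z)
  have hdet : LinearMap.det (toLin' Aᵀ) = minorVec Z k := by
    rw [LinearMap.det_toLin', det_transpose, minorVec]
  have hpre : {x : Fin (d + 1) → ℝ | Pi.single k (x 0) + vecTail x ᵥ* Matrix.of Z ∈ S} =
      toLin' Aᵀ ⁻¹' S := by
    ext x
    rw [Set.mem_preimage, toLin'_apply, mulVec_transpose, vecMul_cons, ← Pi.single_smul,
      smul_eq_mul, mul_one]
    rfl
  rw [hpre, Measure.addHaar_preimage_linearMap _ (by rwa [hdet]), hdet, ← mul_assoc,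
    ← ENNReal.ofReal_mul (abs_nonneg _), abs_inv, mul_inv_cancel₀ (abs_ne_zero.2 hk),
    ENNReal.ofReal_one, one_mul]

theorem norm_vecMul_le_of_eq_single_add {e : ℕ} {y : Fin e → ℝ} {Z : Fin d → Fin e → ℝ}
    {k : Fin e} {τ : ℝ} {θ : Fin d → ℝ} (h : y = Pi.single k τ + θ ᵥ* Matrix.of Z) :
    ‖θ ᵥ* Matrix.of Z‖ ≤ ‖y‖ + |τ| := by
  rw [← sub_eq_iff_eq_add'.2 h]
  exact (norm_sub_le _ _).trans_eq (by rw [Pi.norm_single, Real.norm_eq_abs])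

theorem ofReal_inv_norm_minorVec_le (Z : Fin d → Fin (d + 1) → ℝ) :
    ENNReal.ofReal ‖minorVec Z‖⁻¹ ≤ ENNReal.ofReal (2 * (d + 1)) *
      volume {θ : Fin d → ℝ | ‖θ ᵥ* Matrix.of Z‖ ≤ d + 2} := by
  obtain ⟨k, hk⟩ := exists_norm_eq_norm_apply (minorVec Z)
  obtain hc | hc := (norm_nonneg (minorVec Z)).eq_or_lt
  · simp [← hc]
  set W := {θ : Fin d → ℝ | ‖θ ᵥ* Matrix.of Z‖ ≤ d + 2}
  have hW : MeasurableSet W := by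
    refine (isClosed_le (Continuous.norm ?_) continuous_const).measurableSet
    unfold vecMul dotProduct
    fun_prop
  have hsub : {x : Fin (d + 1) → ℝ | Pi.single k (x 0) + vecTail x ᵥ* Matrix.of Z ∈
      Metric.closedBall 0 1} ⊆ {x | |x 0| ≤ d + 1 ∧ vecTail x ∈ W} := by
    intro x hx
    set y := Pi.single k (x 0) + vecTail x ᵥ* Matrix.of Z with hy
    have hy1 : ‖y‖ ≤ 1 := mem_closedBall_zero_iff.1 hx
    have hx0 : |x 0| ≤ d + 1 := by
      refine le_of_mul_le_mul_right ?_ hc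
      rw [hk, ← Real.norm_eq_abs, ← norm_mul, ← dotProduct_minorVec_of_eq_single_add_vecMul hy,
        dotProduct, ← hk]
      calc ‖∑ j, y j * minorVec Z j‖ ≤ ∑ _j : Fin (d + 1), 1 * ‖minorVec Z‖ := by
            refine (norm_sum_le _ _).trans (Finset.sum_le_sum fun j _ => ?_)
            rw [norm_mul]
            exact mul_le_mul ((norm_le_pi_norm y j).trans hy1) (norm_le_pi_norm _ j)
              (norm_nonneg _) zero_le_one
        _ = (d + 1) * ‖minorVec Z‖ := by simp
    exact ⟨hx0, (norm_vecMul_le_of_eq_single_add hy).trans (by linarith)⟩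
  calc ENNReal.ofReal ‖minorVec Z‖⁻¹
      ≤ ENNReal.ofReal ‖minorVec Z‖⁻¹ * volume (Metric.closedBall (0 : Fin (d + 1) → ℝ) 1) := by
        rw [Real.volume_pi_closedBall _ zero_le_one]
        exact le_mul_of_one_le_right' (ENNReal.one_le_ofReal.2 (one_le_pow₀ (by norm_num)))
    _ ≤ ENNReal.ofReal ‖minorVec Z‖⁻¹ * (ENNReal.ofReal ‖minorVec Z‖ *
          (ENNReal.ofReal (2 * (d + 1)) * volume W)) := by
        rw [volume_eq_abs_minorVec_mul (norm_ne_zero_iff.1 (hk ▸ hc.ne')), hk,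
          Real.norm_eq_abs]
        gcongr
        exact (measure_mono hsub).trans (volume_strip_le _ hW)
    _ = ENNReal.ofReal (2 * (d + 1)) * volume W := by
        rw [← mul_assoc, ← ENNReal.ofReal_mul (by positivity), inv_mul_cancel₀ hc.ne',
          ENNReal.ofReal_one, one_mul]

theorem setLIntegral_inv_norm_minorVec_lt_top (d : ℕ) (R : ℝ) :
    ∫⁻ Z in Metric.closedBall (0 : Fin d → Fin (d + 1) → ℝ) R, ENNReal.ofReal ‖minorVec Z‖⁻¹ <
      ⊤ := by
  have hfubini := lintegral_measure_inter_eq_setLIntegral volume volume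
    (isClosed_mem_ballSlab d (d + 1) R (d + 2)).measurableSet Set.univ
  rw [Measure.restrict_univ] at hfubini
  rw [← lintegral_indicator Metric.isClosed_closedBall.measurableSet]
  calc _ ≤ ∫⁻ Z, ENNReal.ofReal (2 * (d + 1)) *
        volume ({θ : Fin d → ℝ | Z ∈ ballSlab (d + 1) R (d + 2) θ} ∩ Set.univ) := by
        refine lintegral_mono (Set.indicator_le' (fun Z hZ => ?_) fun _ _ => zero_le)
        refine (ofReal_inv_norm_minorVec_le Z).trans ?_
        gcongr
        exact fun θ hθ => ⟨⟨mem_closedBall_zero_iff.1 hZ, hθ⟩, Set.mem_univ θ⟩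
    _ = ENNReal.ofReal (2 * (d + 1)) * ∫⁻ θ, volume (ballSlab (d + 1) R (d + 2) θ) := by
        rw [lintegral_const_mul' _ _ ENNReal.ofReal_ne_top]
        exact congrArg _ hfubini
    _ < ⊤ := ENNReal.mul_lt_top ENNReal.ofReal_lt_top
        (lintegral_volume_ballSlab_lt_top d.lt_succ_self R (by positivity))

end MinorVecMeasure

section DetSlab

variable {d : ℕ}

/-- The square matrices with entries bounded by `R` and determinant bounded by `δ`. Rescaled by
`B`, the matrices of `slBox` lie in such a set, with `δ` of order `B ^ (-n)`. -/
def detSlab (n : ℕ) (R δ : ℝ) : Set (Fin n → Fin n → ℝ) :=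
  {Y | ‖Y‖ ≤ R ∧ |(Matrix.of Y).det| ≤ δ}

theorem isClosed_detSlab (n : ℕ) (R δ : ℝ) : IsClosed (detSlab n R δ) :=
  (isClosed_le continuous_norm continuous_const).and
    (isClosed_le (Continuous.matrix_det continuous_id).abs continuous_const)

theorem norm_vecTail_le {E : Type*} [SeminormedAddCommGroup E] (Y : Fin (d + 1) → E) :
    ‖vecTail Y‖ ≤ ‖Y‖ :=
  (pi_norm_le_iff_of_nonneg (norm_nonneg Y)).2 fun i => norm_le_pi_norm Y i.succ

theorem continuous_vecTail {X : Type*} [TopologicalSpace X] :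
    Continuous (vecTail : (Fin (d + 1) → X) → Fin d → X) :=
  continuous_pi fun i => continuous_apply i.succ

theorem volume_le_mul_setLIntegral_inv_norm_minorVec {V : Set (Fin (d + 1) → Fin (d + 1) → ℝ)}
    (hV : MeasurableSet V) {W : Set (Fin d → Fin (d + 1) → ℝ)} (hW : MeasurableSet W)
    (b : (Fin d → Fin (d + 1) → ℝ) → Fin (d + 1) → ℝ) {s : ℝ} (hs : 0 ≤ s) {δ : ℝ}
    (h : ∀ Y ∈ V, vecTail Y ∈ W ∧ ‖Y 0 - b (vecTail Y)‖ ≤ s ∧ |(Matrix.of Y).det| ≤ δ) :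
    volume V ≤ ENNReal.ofReal ((2 * s) ^ d * (2 * δ)) *
      ∫⁻ Z in W, ENNReal.ofReal ‖minorVec Z‖⁻¹ := by
  rw [volume_eq_lintegral_volume_vecCons hV, ← lintegral_const_mul' _ _ ENNReal.ofReal_ne_top,
    ← lintegral_indicator hW]
  refine lintegral_mono_ae ?_
  filter_upwards [ae_minorVec_ne_zero d] with Z hZ
  by_cases hZW : Z ∈ W
  · rw [Set.indicator_of_mem hZW]
    refine (measure_mono fun y hy => ?_).trans (volume_slab_le hZ (b Z) hs δ)
    rw [Set.mem_ofPred_eq, ← det_of_vecCons]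
    exact (h _ hy).2
  · rw [Set.eq_empty_of_forall_notMem (s := {y | vecCons y Z ∈ V}) fun y hy => hZW (h _ hy).1,
      measure_empty]
    exact zero_le

theorem exists_setLIntegral_inv_norm_minorVec_lt (d : ℕ) (R : ℝ) {κ : ℝ} (hκ : 0 < κ) :
    ∃ η > 0, ∫⁻ Z in Metric.closedBall (0 : Fin d → Fin (d + 1) → ℝ) R ∩ {Z | ‖minorVec Z‖ ≤ η},
      ENNReal.ofReal ‖minorVec Z‖⁻¹ < ENNReal.ofReal κ := by
  set μ := volume.restrict (Metric.closedBall (0 : Fin d → Fin (d + 1) → ℝ) R)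
  have hmeas (η : ℝ) : MeasurableSet {Z : Fin d → Fin (d + 1) → ℝ | ‖minorVec Z‖ ≤ η} :=
    (isClosed_le continuous_minorVec.norm continuous_const).measurableSet
  have hzero : μ (⋂ η > 0, {Z : Fin d → Fin (d + 1) → ℝ | ‖minorVec Z‖ ≤ η}) = 0 := by
    refine measure_mono_null (fun Z hZ => ?_) (ae_restrict_of_ae (ae_minorVec_ne_zero d))
    rw [Set.mem_iInter₂] at hZ
    exact not_not.2 (norm_le_zero_iff.1 (le_of_forall_pos_le_add fun η hη => by
      simpa using hZ η hη))
  have hlim : Filter.Tendsto (fun η => μ {Z | ‖minorVec Z‖ ≤ η}) (nhdsWithin 0 (Set.Ioi 0))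
      (nhds 0) := by
    rw [← hzero]
    exact tendsto_measure_biInter_gt (fun η _ => (hmeas η).nullMeasurableSet)
      (fun _ _ _ hij Z hZ => le_trans hZ hij)
      ⟨1, one_pos, ((measure_mono (Set.subset_univ _)).trans_lt
        (by simpa [μ] using measure_closedBall_lt_top)).ne⟩
  have htail := tendsto_setLIntegral_zero (setLIntegral_inv_norm_minorVec_lt_top d R).ne hlim
  obtain ⟨η, hη, hlt⟩ := ((htail.eventually (gt_mem_nhds (ENNReal.ofReal_pos.2 hκ))).and
    self_mem_nhdsWithin).exists.imp fun _ => And.symm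
  refine ⟨η, hη, ?_⟩
  rwa [Set.inter_comm, ← Measure.restrict_restrict (hmeas η)]

theorem exists_volume_detSlab_norm_minorVec_le (d : ℕ) {R κ : ℝ} (hR : 0 ≤ R) (hκ : 0 < κ) :
    ∃ η > 0, ∀ δ ≥ 0, volume (detSlab (d + 1) R δ ∩ {Y | ‖minorVec (vecTail Y)‖ ≤ η}) ≤
      ENNReal.ofReal (κ * δ) := by
  obtain ⟨η, hη, h⟩ := exists_setLIntegral_inv_norm_minorVec_lt d R
    (κ := κ / (2 * (2 * R + 1) ^ d)) (by positivity)
  refine ⟨η, hη, fun δ hδ => ?_⟩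
  refine (volume_le_mul_setLIntegral_inv_norm_minorVec
    ((isClosed_detSlab _ R δ).inter (isClosed_le (continuous_minorVec.comp continuous_vecTail).norm
      continuous_const)).measurableSet
    (W := Metric.closedBall 0 R ∩ {Z | ‖minorVec Z‖ ≤ η})
    (Metric.isClosed_closedBall.inter (isClosed_le continuous_minorVec.norm
      continuous_const)).measurableSet 0 hR (δ := δ) fun Y hY => ?_).trans ?_
  · refine ⟨⟨mem_closedBall_zero_iff.2 ((norm_vecTail_le Y).trans hY.1.1), hY.2⟩, ?_, hY.1.2⟩
    rw [Pi.zero_apply, sub_zero]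
    exact (norm_le_pi_norm Y 0).trans hY.1.1
  · refine (mul_le_mul_right h.le _).trans ?_
    rw [← ENNReal.ofReal_mul (by positivity)]
    refine ENNReal.ofReal_le_ofReal ?_
    calc (2 * R) ^ d * (2 * δ) * (κ / (2 * (2 * R + 1) ^ d))
        ≤ (2 * R + 1) ^ d * (2 * δ) * (κ / (2 * (2 * R + 1) ^ d)) := by gcongr; linarith
      _ = κ * δ := by field_simp

theorem volume_detSlab_norm_add_vecMul_le (R δ : ℝ) {q : ℝ} (hq : 0 < q) (p : Fin d → ℝ) {s : ℝ}
    (hs : 0 ≤ s) :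
    volume (detSlab (d + 1) R δ ∩ {Y | ‖q • Y 0 + p ᵥ* Matrix.of (vecTail Y)‖ ≤ s}) ≤
      ENNReal.ofReal ((2 * (s / q)) ^ d * (2 * δ)) *
        ∫⁻ Z in Metric.closedBall (0 : Fin d → Fin (d + 1) → ℝ) R,
          ENNReal.ofReal ‖minorVec Z‖⁻¹ := by
  have hcont : Continuous fun Y : Fin (d + 1) → Fin (d + 1) → ℝ =>
      ‖q • Y 0 + p ᵥ* Matrix.of (vecTail Y)‖ := by
    unfold vecMul dotProduct vecTail
    fun_prop
  refine volume_le_mul_setLIntegral_inv_norm_minorVec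
    ((isClosed_detSlab _ R δ).inter (isClosed_le hcont continuous_const)).measurableSet
    Metric.isClosed_closedBall.measurableSet (fun Z => -(q⁻¹ • (p ᵥ* Matrix.of Z)))
    (by positivity) fun Y hY =>
      ⟨mem_closedBall_zero_iff.2 ((norm_vecTail_le Y).trans hY.1.1), ?_, hY.1.2⟩
  rw [le_div_iff₀ hq, mul_comm, ← norm_smul_of_nonneg hq.le, sub_neg_eq_add, smul_add,
    smul_inv_smul₀ hq.ne']
  exact hY.2

theorem abs_le_div_of_vecCons_mem_detSlab {R δ τ : ℝ} {k : Fin (d + 1)} {y : Fin (d + 1) → ℝ}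
    {θ : Fin d → ℝ} {Z : Fin d → Fin (d + 1) → ℝ} (hZ : minorVec Z k ≠ 0)
    (hy : y = Pi.single k τ + θ ᵥ* Matrix.of Z) (hyZ : vecCons y Z ∈ detSlab (d + 1) R δ) :
    |τ| ≤ δ / |minorVec Z k| := by
  rw [le_div_iff₀ (abs_pos.2 hZ), ← abs_mul, ← dotProduct_minorVec_of_eq_single_add_vecMul hy,
    ← det_of_vecCons]
  exact hyZ.2

theorem mem_ballSlab_of_vecCons_mem_detSlab {R δ τ : ℝ} {k : Fin (d + 1)} {y : Fin (d + 1) → ℝ}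
    {θ : Fin d → ℝ} {Z : Fin d → Fin (d + 1) → ℝ} (hτ : |τ| ≤ 1)
    (hy : y = Pi.single k τ + θ ᵥ* Matrix.of Z) (hyZ : vecCons y Z ∈ detSlab (d + 1) R δ) :
    Z ∈ ballSlab (d + 1) R (R + 1) θ :=
  ⟨(norm_vecTail_le (vecCons y Z)).trans hyZ.1, (norm_vecMul_le_of_eq_single_add hy).trans
    (add_le_add ((norm_le_pi_norm (vecCons y Z) 0).trans hyZ.1) hτ)⟩

theorem volume_le_mul_setLIntegral_volume_ballSlab {R η δ : ℝ} (hη : 0 < η) (hδη : δ ≤ η)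
    {V : Set (Fin (d + 1) → Fin (d + 1) → ℝ)} (hV : MeasurableSet V) {W : Set (Fin d → ℝ)}
    (hW : MeasurableSet W) (hVdet : V ⊆ detSlab (d + 1) R δ)
    (hVminor : ∀ Y ∈ V, η ≤ ‖minorVec (vecTail Y)‖)
    (hVW : ∀ Y ∈ V, ∀ k τ θ, Y 0 = Pi.single k τ + θ ᵥ* Matrix.of (vecTail Y) → |τ| ≤ δ / η →
      θ ∈ W) :
    volume V ≤ ENNReal.ofReal (2 * δ) * ∫⁻ θ in W, volume (ballSlab (d + 1) R (R + 1) θ) := by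
  have hclosed := isClosed_mem_ballSlab d (d + 1) R (R + 1)
  have hfubini : ∫⁻ Z, volume ({θ : Fin d → ℝ | Z ∈ ballSlab (d + 1) R (R + 1) θ} ∩ W) =
      ∫⁻ θ in W, volume (ballSlab (d + 1) R (R + 1) θ) :=
    lintegral_measure_inter_eq_setLIntegral volume volume hclosed.measurableSet W
  rw [volume_eq_lintegral_volume_vecCons hV, ← hfubini,
    ← lintegral_const_mul' _ _ ENNReal.ofReal_ne_top]
  refine lintegral_mono fun Z => ?_
  set U := {θ : Fin d → ℝ | Z ∈ ballSlab (d + 1) R (R + 1) θ} ∩ W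
  have hU : MeasurableSet U :=
    (hclosed.preimage (f := fun θ => (θ, Z)) (by fun_prop)).measurableSet.inter hW
  obtain hsmall | hZ := lt_or_ge ‖minorVec Z‖ η
  · rw [Set.eq_empty_of_forall_notMem (s := {y | vecCons y Z ∈ V}) fun y hy =>
      (hVminor _ hy).not_gt hsmall, measure_empty]
    exact zero_le
  obtain ⟨k, hk⟩ := exists_norm_eq_norm_apply (minorVec Z)
  have hc : 0 < |minorVec Z k| := by rw [← Real.norm_eq_abs, ← hk]; exact hη.trans_le hZ
  have hsub : {x : Fin (d + 1) → ℝ | Pi.single k (x 0) + vecTail x ᵥ* Matrix.of Z ∈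
      {y | vecCons y Z ∈ V}} ⊆ {x | |x 0| ≤ δ / |minorVec Z k| ∧ vecTail x ∈ U} := by
    intro x hx
    set y := Pi.single k (x 0) + vecTail x ᵥ* Matrix.of Z with hy
    have hx0 := abs_le_div_of_vecCons_mem_detSlab (abs_pos.1 hc) hy (hVdet hx)
    have hxη : |x 0| ≤ δ / η := hx0.trans (by
      rw [← Real.norm_eq_abs (minorVec Z k), ← hk]
      gcongr
      exact (mul_nonneg_iff_of_pos_right (inv_pos.2 hc)).1 ((abs_nonneg _).trans hx0))
    have hx1 : |x 0| ≤ 1 := hxη.trans ((div_le_one hη).2 hδη)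
    exact ⟨hx0, mem_ballSlab_of_vecCons_mem_detSlab hx1 hy (hVdet hx), hVW _ hx k _ _ hy hxη⟩
  calc volume {y | vecCons y Z ∈ V}
      ≤ ENNReal.ofReal |minorVec Z k| *
          (ENNReal.ofReal (2 * (δ / |minorVec Z k|)) * volume U) := by
        rw [volume_eq_abs_minorVec_mul (abs_pos.1 hc)]
        gcongr
        exact (measure_mono hsub).trans (volume_strip_le _ hU)
    _ = ENNReal.ofReal (2 * δ) * volume U := by
        rw [← mul_assoc, ← ENNReal.ofReal_mul hc.le, mul_left_comm, mul_div_cancel₀ _ hc.ne']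

end DetSlab

section VolumeCount

variable {n d : ℕ}

theorem norm_intCast_comp {ι : Type*} [Fintype ι] (v : ι → ℤ) : ‖fun i => (v i : ℝ)‖ = ‖v‖ :=
  rfl

theorem norm_vecMul_le (x : Fin d → ℝ) (Z : Fin d → Fin n → ℝ) :
    ‖x ᵥ* Matrix.of Z‖ ≤ d * ‖x‖ * ‖Z‖ := by
  refine (pi_norm_le_iff_of_nonneg (by positivity)).2 fun j => ?_
  calc ‖(x ᵥ* Matrix.of Z) j‖ ≤ ∑ _k : Fin d, ‖x‖ * ‖Z‖ := by
        refine (norm_sum_le Finset.univ fun k => x k * Z k j).trans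
          (Finset.sum_le_sum fun k _ => ?_)
        exact (norm_mul_le _ _).trans (mul_le_mul (norm_le_pi_norm x k)
          ((norm_le_pi_norm (Z k) j).trans (norm_le_pi_norm Z k)) (norm_nonneg _) (norm_nonneg _))
    _ = d * ‖x‖ * ‖Z‖ := by
        rw [Finset.sum_const, Finset.card_univ, Fintype.card_fin, nsmul_eq_mul, mul_assoc]

theorem norm_vecMul_le_of_mem_oneNhd {u : Fin n → Fin n → ℝ} (hu : u ∈ oneNhd n)
    (x : Fin n → ℝ) : ‖x ᵥ* Matrix.of u‖ ≤ 2 * ‖x‖ := by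
  linarith [norm_vecMul_sub_self_le hu x, norm_le_norm_add_norm_sub' (x ᵥ* Matrix.of u) x,
    norm_nonneg x]

theorem half_norm_le_norm_vecMul {u : Fin n → Fin n → ℝ} (hu : u ∈ oneNhd n) (x : Fin n → ℝ) :
    ‖x‖ / 2 ≤ ‖x ᵥ* Matrix.of u‖ := by
  linarith [norm_vecMul_sub_self_le hu x, norm_le_norm_add_norm_sub (x ᵥ* Matrix.of u) x,
    norm_nonneg x]

theorem norm_le_two_of_mem_oneNhd {u : Fin n → Fin n → ℝ} (hu : u ∈ oneNhd n) : ‖u‖ ≤ 2 := by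
  refine (pi_norm_le_iff_of_nonneg zero_le_two).2 fun i => ?_
  have hi := norm_vecMul_le_of_mem_oneNhd hu (Pi.single i 1)
  rwa [single_one_vecMul, Pi.norm_single, norm_one, mul_one] at hi

/-- An upper bound for the determinants of the matrices `B⁻¹ • M * u` with `M.det = 1` and `u` in
`oneNhd n`. -/
noncomputable def detRadius (n B : ℕ) : ℝ := n.factorial * 2 ^ n / B ^ n

theorem detRadius_nonneg (n B : ℕ) : 0 ≤ detRadius n B := by
  unfold detRadius
  positivity

theorem tendsto_detRadius (hn : n ≠ 0) : Filter.Tendsto (detRadius n) Filter.atTop (nhds 0) :=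
  ((Filter.tendsto_pow_atTop hn).comp tendsto_natCast_atTop_atTop).const_div_atTop _

theorem inv_smul_leftMul_mem_detSlab {B : ℕ} (hB : 0 < B) {N : Matrix (Fin n) (Fin n) ℤ}
    (hN : N ∈ slBox n B) {u : Fin n → Fin n → ℝ} (hu : u ∈ oneNhd n) :
    (B : ℝ)⁻¹ • leftMul (N.map (↑)) u ∈ detSlab n 2 (detRadius n B) := by
  obtain ⟨hdet, hentry⟩ := mem_slBox.1 hN
  have hB' : (0 : ℝ) < B := mod_cast hB
  constructor
  · rw [norm_smul_of_nonneg (inv_nonneg.2 hB'.le), inv_mul_le_iff₀ hB']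
    refine (pi_norm_le_iff_of_nonneg (by positivity)).2 fun i => ?_
    have hrow : ‖fun k => (N i k : ℝ)‖ ≤ B :=
      (pi_norm_le_iff_of_nonneg hB'.le).2 fun k => by
      rw [Int.norm_cast_real, Int.norm_eq_abs]
      exact_mod_cast hentry i k
    calc ‖leftMul (N.map (↑)) u i‖ ≤ 2 * ‖fun k => (N i k : ℝ)‖ :=
          norm_vecMul_le_of_mem_oneNhd hu _
      _ ≤ B * 2 := by rw [mul_comm]; gcongr
  · have hudet : |(Matrix.of u).det| ≤ n.factorial * 2 ^ n := by
      simpa using abs_det_le (A := Matrix.of u) (r := fun _ => 2) fun i j =>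
        ((norm_le_pi_norm (u i) j).trans (norm_le_pi_norm u i)).trans (norm_le_two_of_mem_oneNhd hu)
    have hof : Matrix.of ((B : ℝ)⁻¹ • leftMul (N.map (↑)) u) =
        (B : ℝ)⁻¹ • (N.map (↑) * Matrix.of u) := rfl
    rw [hof, det_smul, det_mul, ← Int.cast_det, hdet, Int.cast_one, one_mul, Fintype.card_fin,
      abs_mul, abs_of_pos (by positivity), inv_pow, detRadius, div_eq_inv_mul]
    gcongr

theorem intCast_vecMul_smul_leftMul (m : Fin n → ℤ) (c : ℝ) (N : Matrix (Fin n) (Fin n) ℤ)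
    (u : Fin n → Fin n → ℝ) :
    (fun i => (m i : ℝ)) ᵥ* Matrix.of (c • leftMul (N.map (↑)) u) =
      c • ((fun i => ((m ᵥ* N) i : ℝ)) ᵥ* Matrix.of u) := by
  have hcast : (fun i => ((m ᵥ* N) i : ℝ)) = (fun i => (m i : ℝ)) ᵥ* N.map (↑) :=
    funext (RingHom.map_vecMul (Int.castRingHom ℝ) N m)
  rw [hcast, vecMul_vecMul, ← vecMul_smul]
  rfl

theorem vecMul_of_eq_head_smul_add (x : Fin (d + 1) → ℝ) (Y : Fin (d + 1) → Fin n → ℝ) :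
    x ᵥ* Matrix.of Y = x 0 • Y 0 + vecTail x ᵥ* Matrix.of (vecTail Y) := by
  rw [← cons_head_tail x, cons_vecMul]
  rfl

theorem exists_card_le_of_volume_le (d : ℕ) :
    ∃ C > 0, ∀ S : Finset (Matrix (Fin (d + 1)) (Fin (d + 1)) ℤ), (∀ M ∈ S, M.det = 1) →
      ∀ B : ℕ, 1 ≤ B → ∀ V : Set (Fin (d + 1) → Fin (d + 1) → ℝ),
        (∀ M ∈ S, ∀ u ∈ oneNhd (d + 1), (B : ℝ)⁻¹ • leftMul (M.map (↑)) u ∈ V) →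
        ∀ v ≥ 0, volume V ≤ ENNReal.ofReal (v * detRadius (d + 1) B) →
          (S.card : ℝ) ≤ C * v * (B : ℝ) ^ ((d + 1) * d) := by
  have hw0 : volume (oneNhd (d + 1)) ≠ 0 :=
    (Metric.measure_ball_pos volume _ (by positivity)).ne'
  have hw : volume (oneNhd (d + 1)) ≠ ⊤ := measure_ball_lt_top.ne
  set w := (volume (oneNhd (d + 1))).toReal with hwdef
  have hwpos : 0 < w := ENNReal.toReal_pos hw0 hw
  refine ⟨(d + 1).factorial * 2 ^ (d + 1) / w, by positivity, fun S hS B hB V h v hv hV => ?_⟩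
  have hB' : (0 : ℝ) < B := mod_cast hB
  have hr := detRadius_nonneg (d + 1) B
  have hcard : S.card * w ≤ (B : ℝ) ^ ((d + 1) * (d + 1)) * (v * detRadius (d + 1) B) := by
    have hle := (card_mul_volume_oneNhd_le hS hB' h).trans (mul_le_mul_right hV _)
    rw [← ENNReal.ofReal_toReal hw, ← ENNReal.ofReal_natCast, ← ENNReal.ofReal_mul (by positivity),
      ← ENNReal.ofReal_mul (by positivity)] at hle
    exact (ENNReal.ofReal_le_ofReal_iff (by positivity)).1 hle
  calc (S.card : ℝ) ≤ (B : ℝ) ^ ((d + 1) * (d + 1)) * (v * detRadius (d + 1) B) / w :=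
        (le_div_iff₀ hwpos).2 hcard
    _ = (d + 1).factorial * 2 ^ (d + 1) / w * v * (B : ℝ) ^ ((d + 1) * d) := by
        rw [mul_add_one, pow_add, detRadius]
        field_simp

theorem exists_card_filter_norm_vecMul_le (d : ℕ) :
    ∃ C > 0, ∀ m : Fin (d + 1) → ℤ, 0 < m 0 → ∀ s ≥ 0, ∀ B ≥ 1,
      (((slBox (d + 1) B).filter fun N => ‖m ᵥ* N‖ ≤ s * B).card : ℝ) ≤
        C * (s / m 0) ^ d * (B : ℝ) ^ ((d + 1) * d) := by
  obtain ⟨C, hC, h⟩ := exists_card_le_of_volume_le d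
  have hI := (setLIntegral_inv_norm_minorVec_lt_top d 2).ne
  set I := (∫⁻ Z in Metric.closedBall (0 : Fin d → Fin (d + 1) → ℝ) 2,
    ENNReal.ofReal ‖minorVec Z‖⁻¹).toReal
  have : 0 ≤ I := ENNReal.toReal_nonneg
  refine ⟨C * (4 ^ d * 2 * (I + 1)), by positivity, fun m hm s hs B hB => ?_⟩
  have hm' : (0 : ℝ) < m 0 := mod_cast hm
  have hB' : (0 : ℝ) < B := mod_cast hB
  refine (h _ (fun M hM => (mem_slBox.1 (Finset.mem_filter.1 hM).1).1) B hB
    (detSlab (d + 1) 2 (detRadius (d + 1) B) ∩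
      {Y | ‖(m 0 : ℝ) • Y 0 + vecTail (fun i => (m i : ℝ)) ᵥ* Matrix.of (vecTail Y)‖ ≤ 2 * s})
    (fun N hN u hu => ?_) ((4 * (s / m 0)) ^ d * 2 * I) (by positivity) ?_).trans ?_
  · obtain ⟨hN, hmN⟩ := Finset.mem_filter.1 hN
    refine ⟨inv_smul_leftMul_mem_detSlab hB hN hu, ?_⟩
    rw [Set.mem_ofPred_eq, ← vecMul_of_eq_head_smul_add (fun i => (m i : ℝ)),
      intCast_vecMul_smul_leftMul, norm_smul_of_nonneg (inv_nonneg.2 hB'.le),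
      inv_mul_le_iff₀ hB']
    refine (norm_vecMul_le_of_mem_oneNhd hu _).trans ?_
    rw [norm_intCast_comp]
    linarith
  · refine (volume_detSlab_norm_add_vecMul_le 2 _ hm' _ (by positivity)).trans_eq ?_
    have hr := detRadius_nonneg (d + 1) B
    rw [← ENNReal.ofReal_toReal hI, ← ENNReal.ofReal_mul (by positivity)]
    congr 1
    ring
  · rw [mul_pow]
    calc C * (4 ^ d * (s / m 0) ^ d * 2 * I) * (B : ℝ) ^ ((d + 1) * d)
        = C * (4 ^ d * 2 * I) * (s / m 0) ^ d * (B : ℝ) ^ ((d + 1) * d) := by ring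
      _ ≤ _ := by gcongr; linarith

end VolumeCount

section FarCount

variable {d : ℕ}

/-- A transvection `1 - ξ mᵀ` of `ℤ ^ (d + 1)` together with a scale `s`. It is applied to the
matrices `N` with entries of size `B` and `‖m ᵥ* N‖ ≤ s * B`. -/
structure ScaledTransvection (d : ℕ) where
  m : Fin (d + 1) → ℤ
  ξ : Fin (d + 1) → ℤ
  s : ℝ
  m_zero_pos : 0 < m 0
  ξ_ne_zero : ξ ≠ 0
  m_dotProduct_ξ : m ⬝ᵥ ξ = 0
  s_pos : 0 < s

namespace ScaledTransvection

/-- The point `θ` for which `Y 0 = θ ᵥ* vecTail Y` is equivalent to `m ᵥ* Y = 0`. -/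
noncomputable def center (t : ScaledTransvection d) : Fin d → ℝ :=
  fun k => -(t.m k.succ) / t.m 0

/-- The radius of `ScaledTransvection.ball`. -/
noncomputable def radius (t : ScaledTransvection d) : ℝ :=
  t.s / (8 * (d + 1) * t.m 0)

/-- The points `θ` for which the matrices `Y` of norm at most `2` with `Y 0` close to
`θ ᵥ* vecTail Y` satisfy `‖m ᵥ* Y‖ ≤ s / 2`. -/
noncomputable def ball (t : ScaledTransvection d) : Set (Fin d → ℝ) :=
  Metric.closedBall t.center t.radius

theorem intCast_m_zero_pos (t : ScaledTransvection d) : (0 : ℝ) < t.m 0 :=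
  Int.cast_pos.2 t.m_zero_pos

theorem radius_pos (t : ScaledTransvection d) : 0 < t.radius :=
  div_pos t.s_pos (mul_pos (by positivity) t.intCast_m_zero_pos)

theorem norm_m_vecMul_le (t : ScaledTransvection d) {Y : Fin (d + 1) → Fin (d + 1) → ℝ}
    {k : Fin (d + 1)} {τ : ℝ} {θ : Fin d → ℝ}
    (hY : Y 0 = Pi.single k τ + θ ᵥ* Matrix.of (vecTail Y)) :
    ‖(fun i => (t.m i : ℝ)) ᵥ* Matrix.of Y‖ ≤
      t.m 0 * |τ| + t.m 0 * (d * ‖θ - t.center‖ * ‖Y‖) := by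
  have hm := t.intCast_m_zero_pos
  have htail : vecTail (fun i => (t.m i : ℝ)) = -((t.m 0 : ℝ) • t.center) := by
    ext k
    simp only [vecTail, Function.comp_apply, center, Pi.neg_apply, Pi.smul_apply, smul_eq_mul]
    field_simp
  have heq : (fun i => (t.m i : ℝ)) ᵥ* Matrix.of Y = (t.m 0 : ℝ) • Pi.single k τ +
      (t.m 0 : ℝ) • ((θ - t.center) ᵥ* Matrix.of (vecTail Y)) := by
    rw [vecMul_of_eq_head_smul_add, hY, htail, neg_vecMul, smul_vecMul, sub_vecMul]
    module
  rw [heq]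
  refine (norm_add_le _ _).trans (add_le_add ?_ ?_)
  · rw [norm_smul_of_nonneg hm.le, Pi.norm_single, Real.norm_eq_abs]
  · rw [norm_smul_of_nonneg hm.le]
    gcongr
    exact (norm_vecMul_le _ _).trans (by gcongr; exact norm_vecTail_le Y)

theorem norm_m_vecMul_le_half (t : ScaledTransvection d) {Y : Fin (d + 1) → Fin (d + 1) → ℝ}
    (hnorm : ‖Y‖ ≤ 2) {k : Fin (d + 1)} {τ : ℝ} {θ : Fin d → ℝ}
    (hY : Y 0 = Pi.single k τ + θ ᵥ* Matrix.of (vecTail Y)) (hτ : |τ| ≤ t.s / (4 * t.m 0))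
    (hθ : θ ∈ t.ball) : ‖(fun i => (t.m i : ℝ)) ᵥ* Matrix.of Y‖ ≤ t.s / 2 := by
  have hm := t.intCast_m_zero_pos
  have hr := t.radius_pos
  rw [ball, mem_closedBall_iff_norm] at hθ
  calc ‖(fun i => (t.m i : ℝ)) ᵥ* Matrix.of Y‖
      ≤ t.m 0 * |τ| + t.m 0 * (d * ‖θ - t.center‖ * ‖Y‖) := t.norm_m_vecMul_le hY
    _ ≤ t.m 0 * (t.s / (4 * t.m 0)) +
          t.m 0 * ((d + 1) * t.radius * 2) := by gcongr; linarith
    _ = t.s / 2 := by rw [radius]; field_simp; ring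

end ScaledTransvection

theorem volume_detSlab_far_le (F : Finset (ScaledTransvection d)) {η δ : ℝ} (hη : 0 < η)
    (hδη : δ ≤ η) (hδ : ∀ t ∈ F, δ / η ≤ t.s / (4 * t.m 0)) :
    volume (detSlab (d + 1) 2 δ ∩ {Y | η ≤ ‖minorVec (vecTail Y)‖ ∧
      ∀ t ∈ F, t.s / 2 < ‖(fun i => (t.m i : ℝ)) ᵥ* Matrix.of Y‖}) ≤
      ENNReal.ofReal (2 * δ) *
        ∫⁻ θ in (⋃ t ∈ F, t.ball)ᶜ, volume (ballSlab (d + 1) 2 3 θ) := by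
  have hvecMul (t : ScaledTransvection d) :
      Continuous fun Y : Fin (d + 1) → Fin (d + 1) → ℝ =>
        ‖(fun i => (t.m i : ℝ)) ᵥ* Matrix.of Y‖ := by
    unfold vecMul dotProduct
    fun_prop
  have hfar : MeasurableSet {Y : Fin (d + 1) → Fin (d + 1) → ℝ |
      ∀ t ∈ F, t.s / 2 < ‖(fun i => (t.m i : ℝ)) ᵥ* Matrix.of Y‖} := by
    simp only [Set.ofPred_forall]
    exact Finset.measurableSet_biInter F fun t _ =>
      (isOpen_lt continuous_const (hvecMul t)).measurableSet
  have hminor : MeasurableSet {Y : Fin (d + 1) → Fin (d + 1) → ℝ | η ≤ ‖minorVec (vecTail Y)‖} :=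
    (isClosed_le continuous_const (continuous_minorVec.comp continuous_vecTail).norm).measurableSet
  have hball : MeasurableSet (⋃ t ∈ F, t.ball)ᶜ :=
    (Finset.measurableSet_biUnion F fun t _ => Metric.isClosed_closedBall.measurableSet).compl
  have h23 : (2 : ℝ) + 1 = 3 := by norm_num
  rw [← h23]
  refine volume_le_mul_setLIntegral_volume_ballSlab hη hδη
    ((isClosed_detSlab _ _ _).measurableSet.inter (hminor.inter hfar)) hball Set.inter_subset_left
    (fun Y hY => hY.2.1) fun Y hY k τ θ hYθ hτ hθ => ?_
  obtain ⟨t, ht, hθt⟩ := Set.mem_iUnion₂.1 hθ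
  exact (hY.2.2 t ht).not_ge (t.norm_m_vecMul_le_half hY.1.1 hYθ (hτ.trans (hδ t ht)) hθt)

theorem eventually_volume_detSlab_far_le (F : Finset (ScaledTransvection d)) {κ : ℝ} (hκ : 0 < κ)
    (hF : ∫⁻ θ in (⋃ t ∈ F, t.ball)ᶜ, volume (ballSlab (d + 1) 2 3 θ) ≤ ENNReal.ofReal κ) :
    ∀ᶠ δ in nhds (0 : ℝ), 0 ≤ δ → volume (detSlab (d + 1) 2 δ ∩
      {Y | ∀ t ∈ F, t.s / 2 < ‖(fun i => (t.m i : ℝ)) ᵥ* Matrix.of Y‖}) ≤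
        ENNReal.ofReal (3 * κ * δ) := by
  obtain ⟨η, hη, hminor⟩ := exists_volume_detSlab_norm_minorVec_le d zero_le_two hκ
  have hev : ∀ᶠ δ in nhds (0 : ℝ), ∀ t ∈ F, δ / η ≤ t.s / (4 * t.m 0) := by
    refine (Filter.eventually_all_finset F).2 fun t _ => ?_
    have hm := t.intCast_m_zero_pos
    have hs := t.s_pos
    filter_upwards [eventually_le_nhds (by positivity : 0 < t.s / (4 * t.m 0) * η)] with δ hδ
    exact (div_le_iff₀ hη).2 hδ
  filter_upwards [hev, eventually_le_nhds hη] with δ hδ hδη hδ0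
  calc _ ≤ volume ((detSlab (d + 1) 2 δ ∩ {Y | η ≤ ‖minorVec (vecTail Y)‖ ∧
          ∀ t ∈ F, t.s / 2 < ‖(fun i => (t.m i : ℝ)) ᵥ* Matrix.of Y‖}) ∪
        (detSlab (d + 1) 2 δ ∩ {Y | ‖minorVec (vecTail Y)‖ ≤ η})) :=
        measure_mono fun Y hY => (le_total η _).imp (fun h => ⟨hY.1, h, hY.2⟩) fun h => ⟨hY.1, h⟩
    _ ≤ ENNReal.ofReal (2 * δ) * ENNReal.ofReal κ + ENNReal.ofReal (κ * δ) :=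
        (measure_union_le _ _).trans <| add_le_add
          ((volume_detSlab_far_le F hη hδη hδ).trans (by gcongr)) (hminor _ hδ0)
    _ = ENNReal.ofReal (3 * κ * δ) := by
        rw [← ENNReal.ofReal_mul (by positivity),
          ← ENNReal.ofReal_add (by positivity) (by positivity)]
        congr 1
        ring

theorem exists_card_filter_lt_norm_vecMul_le (d : ℕ) :
    ∃ C > 0, ∀ κ > 0, ∀ F : Finset (ScaledTransvection d),
      ∫⁻ θ in (⋃ t ∈ F, t.ball)ᶜ, volume (ballSlab (d + 1) 2 3 θ) ≤ ENNReal.ofReal κ →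
      ∃ B₀, ∀ B ≥ B₀,
        (((slBox (d + 1) B).filter fun N => ∀ t ∈ F, t.s * B < ‖t.m ᵥ* N‖).card : ℝ) ≤
          C * κ * (B : ℝ) ^ ((d + 1) * d) := by
  obtain ⟨C, hC, hcount⟩ := exists_card_le_of_volume_le d
  refine ⟨C * 3, by positivity, fun κ hκ F hF => ?_⟩
  obtain ⟨B₀, hB₀⟩ := Filter.eventually_atTop.1 (((tendsto_detRadius d.succ_ne_zero).eventually
    (eventually_volume_detSlab_far_le F hκ hF)).and (Filter.eventually_ge_atTop 1))
  refine ⟨B₀, fun B hB => ?_⟩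
  obtain ⟨hvol, hB1⟩ := hB₀ B hB
  refine (hcount _ (fun M hM => (mem_slBox.1 (Finset.mem_filter.1 hM).1).1) B hB1
    (detSlab (d + 1) 2 (detRadius (d + 1) B) ∩
      {Y | ∀ t ∈ F, t.s / 2 < ‖(fun i => (t.m i : ℝ)) ᵥ* Matrix.of Y‖})
    (fun N hN u hu => ?_) (3 * κ) (by positivity)
    (hvol (detRadius_nonneg (d + 1) B))).trans_eq (by ring)
  obtain ⟨hN, hmN⟩ := Finset.mem_filter.1 hN
  refine ⟨inv_smul_leftMul_mem_detSlab hB1 hN hu, fun t ht => ?_⟩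
  have hB' : (0 : ℝ) < B := mod_cast hB1
  rw [intCast_vecMul_smul_leftMul, norm_smul_of_nonneg (inv_nonneg.2 hB'.le),
    lt_inv_mul_iff₀ hB']
  have := half_norm_le_norm_vecMul hu fun i => ((t.m ᵥ* N) i : ℝ)
  rw [norm_intCast_comp] at this
  linarith [hmN t ht]

end FarCount

section DegenerateCount

variable {d : ℕ}

theorem norm_leftMul_le {n : ℕ} (A : Matrix (Fin n) (Fin n) ℝ) (Y : Fin n → Fin n → ℝ) :
    ‖leftMul A Y‖ ≤ n * ‖Matrix.of.symm A‖ * ‖Y‖ :=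
  (pi_norm_le_iff_of_nonneg (by positivity)).2 fun i =>
    (norm_vecMul_le _ Y).trans (by gcongr; exact norm_le_pi_norm (Matrix.of.symm A) i)

theorem det_of_leftMul {n : ℕ} (A : Matrix (Fin n) (Fin n) ℝ) (Y : Fin n → Fin n → ℝ) :
    (Matrix.of (leftMul A Y)).det = A.det * (Matrix.of Y).det :=
  det_mul A (Matrix.of Y)

theorem exists_det_eq_one_mulVec_eq_smul_single {x : Fin (d + 1) → ℝ} (hx : x 0 ≠ 0) :
    ∃ A : Matrix (Fin (d + 1)) (Fin (d + 1)) ℝ, A.det = 1 ∧ A *ᵥ x = x 0 • Pi.single 0 1 := by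
  set G := (1 : Matrix (Fin (d + 1)) (Fin (d + 1)) ℝ).updateCol 0 ((x 0)⁻¹ • x)
  have hdet : G.det = 1 := by
    rw [← cramer_apply, cramer_one]
    exact inv_mul_cancel₀ hx
  have hG : G *ᵥ (x 0 • Pi.single 0 1) = x := by
    rw [mulVec_smul, mulVec_single_one]
    ext i
    simp [G, hx]
  refine ⟨G.adjugate, by rw [det_adjugate, hdet, one_pow], ?_⟩
  conv_lhs => rw [← hG]
  rw [mulVec_mulVec, adjugate_mul, hdet, one_smul, one_mulVec]

theorem smul_minorVec_vecTail_leftMul {A : Matrix (Fin (d + 1)) (Fin (d + 1)) ℝ} (hA : A.det = 1)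
    {x : Fin (d + 1) → ℝ} {c : ℝ} (hAx : A *ᵥ x = c • Pi.single 0 1)
    (Y : Fin (d + 1) → Fin (d + 1) → ℝ) :
    c • minorVec (vecTail (leftMul A Y)) = (Matrix.of Y).adjugate *ᵥ x := by
  have hminor : minorVec (vecTail (leftMul A Y)) =
      (A * Matrix.of Y).adjugate *ᵥ Pi.single 0 1 := by
    rw [mulVec_single_one]
    exact funext (minorVec_vecTail (A * Matrix.of Y))
  rw [hminor, ← mulVec_smul, ← hAx, adjugate_mul_distrib, mulVec_mulVec, Matrix.mul_assoc,
    adjugate_mul, hA, one_smul, Matrix.mul_one]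

theorem exists_volume_detSlab_norm_adjugate_mulVec_le {x : Fin (d + 1) → ℝ} (hx : x 0 ≠ 0)
    {R κ : ℝ} (hR : 0 ≤ R) (hκ : 0 < κ) :
    ∃ η > 0, ∀ δ ≥ 0, volume (detSlab (d + 1) R δ ∩ {Y | ‖(Matrix.of Y).adjugate *ᵥ x‖ ≤ η}) ≤
      ENNReal.ofReal (κ * δ) := by
  obtain ⟨A, hA, hAx⟩ := exists_det_eq_one_mulVec_eq_smul_single hx
  obtain ⟨η, hη, h⟩ := exists_volume_detSlab_norm_minorVec_le d
    (R := (d + 1 : ℕ) * ‖Matrix.of.symm A‖ * R) (by positivity) hκ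
  have hx0 : 0 < |x 0| := abs_pos.2 hx
  refine ⟨|x 0| * η, by positivity, fun δ hδ => ?_⟩
  have hmeas : MeasurableSet (detSlab (d + 1) ((d + 1 : ℕ) * ‖Matrix.of.symm A‖ * R) δ ∩
      {Y | ‖minorVec (vecTail Y)‖ ≤ η}) :=
    ((isClosed_detSlab _ _ δ).inter (isClosed_le (continuous_minorVec.comp continuous_vecTail).norm
      continuous_const)).measurableSet
  refine le_trans (measure_mono ?_) (((measurePreserving_leftMul hA).measure_preimage
    hmeas.nullMeasurableSet).trans_le (h δ hδ))
  rintro Y ⟨⟨hnorm, hdet⟩, hadj⟩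
  refine ⟨⟨(norm_leftMul_le A Y).trans (by gcongr), ?_⟩, ?_⟩
  · rwa [det_of_leftMul, hA, one_mul]
  · rw [Set.mem_ofPred_eq, ← smul_minorVec_vecTail_leftMul hA hAx, norm_smul, Real.norm_eq_abs]
      at hadj
    exact le_of_mul_le_mul_left hadj hx0

theorem norm_adjugate_mulVec_le_of_mem_oneNhd {n : ℕ} {u : Fin n → Fin n → ℝ} (hu : u ∈ oneNhd n)
    (x : Fin n → ℝ) :
    ‖(Matrix.of u).adjugate *ᵥ x‖ ≤ n * ‖x‖ * (n.factorial * 2 ^ n) := by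
  have hnorm : ‖Matrix.of.symm (Matrix.of u).adjugateᵀ‖ ≤ n.factorial * 2 ^ n := by
    refine (pi_norm_le_iff_of_nonneg (by positivity)).2 fun k =>
      (pi_norm_le_iff_of_nonneg (by positivity)).2 fun i => ?_
    rw [of_symm_apply, transpose_apply, adjugate_apply, Real.norm_eq_abs]
    refine (abs_det_le (r := fun _ => 2) fun i' j => ?_).trans_eq (by simp)
    obtain rfl | hi := eq_or_ne i' k
    · rw [updateRow_self, Pi.single_apply]
      split_ifs <;> simp
    · rw [updateRow_ne hi]
      exact ((norm_le_pi_norm (u i') j).trans (norm_le_pi_norm u i')).trans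
        (norm_le_two_of_mem_oneNhd hu)
  rw [← vecMul_transpose]
  exact (norm_vecMul_le x (Matrix.of.symm (Matrix.of u).adjugateᵀ)).trans (by gcongr)

theorem adjugate_of_smul_leftMul_transpose_mulVec (m : Fin (d + 1) → ℤ) (c : ℝ)
    (N : Matrix (Fin (d + 1)) (Fin (d + 1)) ℤ) (u : Fin (d + 1) → Fin (d + 1) → ℝ) :
    (Matrix.of (c • leftMul (Nᵀ.map (↑)) u)).adjugate *ᵥ (fun i => (m i : ℝ)) =
      c ^ d • ((Matrix.of u).adjugate *ᵥ fun i => ((m ᵥ* N.adjugate) i : ℝ)) := by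
  have hof : Matrix.of (c • leftMul (Nᵀ.map (↑)) u) = c • (Nᵀ.map (↑) * Matrix.of u) := rfl
  have hcast : (fun i => ((m ᵥ* N.adjugate) i : ℝ)) =
      (Nᵀ.map ((↑) : ℤ → ℝ)).adjugate *ᵥ fun i => (m i : ℝ) := by
    have hadj : (Nᵀ.map ((↑) : ℤ → ℝ)).adjugate = (N.adjugateᵀ).map (↑) := by
      rw [adjugate_transpose]
      exact ((Int.castRingHom ℝ).map_adjugate Nᵀ).symm
    rw [hadj, ← mulVec_transpose]
    exact funext (RingHom.map_mulVec (Int.castRingHom ℝ) N.adjugateᵀ m)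
  rw [hof, adjugate_smul, adjugate_mul_distrib, hcast, mulVec_mulVec, smul_mulVec,
    Fintype.card_fin, Nat.add_sub_cancel]

theorem exists_card_filter_norm_vecMul_adjugate_lt_le {m : Fin (d + 1) → ℤ} (hm : m 0 ≠ 0) {κ : ℝ}
    (hκ : 0 < κ) : ∃ η > 0, ∀ B ≥ 1,
      (((slBox (d + 1) B).filter fun N => ‖m ᵥ* N.adjugate‖ < η * B ^ d).card : ℝ) ≤
        κ * (B : ℝ) ^ ((d + 1) * d) := by
  obtain ⟨C, hC, hcount⟩ := exists_card_le_of_volume_le d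
  obtain ⟨η, hη, hvol⟩ := exists_volume_detSlab_norm_adjugate_mulVec_le
    (x := fun i => (m i : ℝ)) (Int.cast_ne_zero.2 hm) zero_le_two (div_pos hκ hC)
  set c : ℝ := (d + 1 : ℕ) * ((d + 1).factorial * 2 ^ (d + 1)) with hc
  have hc0 : 0 < c := by positivity
  refine ⟨η / c, by positivity, fun B hB => ?_⟩
  have : (0 : ℝ) < B := mod_cast hB
  rw [← Finset.card_image_of_injective _ (transpose_injective (m := Fin (d + 1)))]
  have himage {M : Matrix (Fin (d + 1)) (Fin (d + 1)) ℤ}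
      (hM : M ∈ ((slBox (d + 1) B).filter fun N =>
        ‖m ᵥ* N.adjugate‖ < η / c * B ^ d).image transpose) :
      M ∈ slBox (d + 1) B ∧ ∃ N, M = Nᵀ ∧ ‖m ᵥ* N.adjugate‖ < η / c * B ^ d := by
    obtain ⟨N, hN, rfl⟩ := Finset.mem_image.1 hM
    obtain ⟨hN, hmN⟩ := Finset.mem_filter.1 hN
    rw [mem_slBox] at hN ⊢
    exact ⟨⟨(det_transpose N).trans hN.1, fun i j => hN.2 j i⟩, N, rfl, hmN⟩
  refine (hcount _ (fun M hM => (mem_slBox.1 (himage hM).1).1) B hB _ (fun M hM u hu => ?_) (κ / C)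
    (by positivity) (hvol _ (detRadius_nonneg (d + 1) B))).trans_eq (by field_simp)
  obtain ⟨hM, N, rfl, hmN⟩ := himage hM
  refine ⟨inv_smul_leftMul_mem_detSlab hB hM hu, ?_⟩
  rw [Set.mem_ofPred_eq, adjugate_of_smul_leftMul_transpose_mulVec,
    norm_smul_of_nonneg (by positivity), inv_pow, inv_mul_le_iff₀ (by positivity)]
  calc _ ≤ _ := norm_adjugate_mulVec_le_of_mem_oneNhd hu _
    _ = c * ‖m ᵥ* N.adjugate‖ := by rw [norm_intCast_comp, hc]; ring
    _ ≤ c * (η / c * B ^ d) := by gcongr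
    _ = B ^ d * η := by field_simp

theorem exists_card_filter_eval_charpolySlope_eq_zero_le (hd : d ≠ 0)
    {P : MvPolynomial (Fin d) ℤ} (hP : P ≠ 0) {m ξ : Fin (d + 1) → ℤ} (hm : m 0 ≠ 0) (hξ : ξ ≠ 0)
    (h0 : m ⬝ᵥ ξ = 0) {κ : ℝ} (hκ : 0 < κ) :
    ∃ B₀, ∀ B ≥ B₀, (((slBox (d + 1) B).filter fun N =>
      MvPolynomial.eval (fun i : Fin d => (charpolySlope m ξ N).coeff i) P = 0).card : ℝ) ≤
        κ * (B : ℝ) ^ ((d + 1) * d) := by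
  classical
  obtain ⟨η, hη, hdeg⟩ := exists_card_filter_norm_vecMul_adjugate_lt_le hm (half_pos hκ)
  obtain ⟨K, hK⟩ := exists_card_filter_nondegenerate_le hP hm hξ h0 hη
  obtain ⟨B₀, hB₀⟩ := exists_nat_ge (2 * K / κ)
  refine ⟨B₀ + 1, fun B hB => ?_⟩
  have hB1 : 1 ≤ B := by lia
  have hKB : (K : ℝ) ≤ κ / 2 * B := by
    have hle : 2 * K / κ ≤ B := hB₀.trans (mod_cast (by lia : B₀ ≤ B))
    rw [div_le_iff₀ hκ] at hle
    linarith
  have hnondeg : ((((slBox (d + 1) B).filter fun N => η * B ^ d ≤ ‖m ᵥ* N.adjugate‖ ∧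
      MvPolynomial.eval (fun i : Fin d => (charpolySlope m ξ N).coeff i) P = 0).card : ℕ) : ℝ) ≤
        κ / 2 * (B : ℝ) ^ ((d + 1) * d) := by
    calc _ ≤ (K : ℝ) * (B : ℝ) ^ ((d + 1) * d - 1) := mod_cast hK B hB1
      _ ≤ κ / 2 * B * (B : ℝ) ^ ((d + 1) * d - 1) := by gcongr
      _ = κ / 2 * (B : ℝ) ^ ((d + 1) * d) := by
        rw [mul_assoc, mul_pow_sub_one (mul_ne_zero d.succ_ne_zero hd)]
  have hcover : (slBox (d + 1) B).filter (fun N =>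
      MvPolynomial.eval (fun i : Fin d => (charpolySlope m ξ N).coeff i) P = 0) ⊆
      (slBox (d + 1) B).filter (fun N => ‖m ᵥ* N.adjugate‖ < η * B ^ d) ∪
        (slBox (d + 1) B).filter fun N => η * B ^ d ≤ ‖m ᵥ* N.adjugate‖ ∧
          MvPolynomial.eval (fun i : Fin d => (charpolySlope m ξ N).coeff i) P = 0 := by
    intro N hN
    rw [Finset.mem_filter] at hN
    rw [Finset.mem_union, Finset.mem_filter, Finset.mem_filter]
    exact (lt_or_ge _ _).imp (fun h => ⟨hN.1, h⟩) fun h => ⟨hN.1, h, hN.2⟩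
  have hcard := (Finset.card_le_card hcover).trans (Finset.card_union_le _ _)
  have hcard' := (Nat.cast_le (α := ℝ)).2 hcard
  rw [Nat.cast_add] at hcard'
  linarith [hdeg B hB1]

end DegenerateCount

section Covering

theorem exists_finset_measure_sdiff_biUnion_lt {α ι : Type*} [MeasurableSpace α] [Countable ι]
    (ν : Measure α) [IsFiniteMeasure ν] {s : Set α} (hs : MeasurableSet s) {f : ι → Set α}
    (hf : ∀ i, MeasurableSet (f i)) (h : ν (s \ ⋃ i, f i) = 0) {ε : ENNReal} (hε : 0 < ε) :
    ∃ F : Finset ι, ν (s \ ⋃ i ∈ F, f i) < ε := by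
  have hanti : Antitone fun F : Finset ι => s \ ⋃ i ∈ F, f i := fun F G hFG =>
    Set.sdiff_subset_sdiff_right (Set.biUnion_subset_biUnion_left hFG)
  have htendsto := tendsto_measure_iInter_atTop (μ := ν)
    (fun F => (hs.diff (F.measurableSet_biUnion fun i _ => hf i)).nullMeasurableSet) hanti
    ⟨∅, measure_ne_top _ _⟩
  rw [← Set.sdiff_iUnion, ← Set.iUnion_eq_iUnion_finset, h] at htendsto
  exact (htendsto.eventually (gt_mem_nhds hε)).exists

theorem exists_finset_pairwiseDisjoint_closedBall {α ι : Type*} [MetricSpace α]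
    [SecondCountableTopology α] [MeasurableSpace α] [BorelSpace α] (μ : Measure α)
    [IsUnifLocDoublingMeasure μ] [IsLocallyFiniteMeasure μ] {ν : Measure α} [IsFiniteMeasure ν]
    (hν : ν ≪ μ) {s : Set α} (hs : MeasurableSet s) (c : ι → α) (r : ι → ℝ) (p : ι → Prop) (K : ℝ)
    (h : ∀ x ∈ s, ∀ ε > 0, ∃ i, p i ∧ dist x (c i) ≤ K * r i ∧ 0 < r i ∧ r i ≤ ε)
    {ε : ENNReal} (hε : 0 < ε) :
    ∃ F : Finset ι, (∀ i ∈ F, p i) ∧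
      (F : Set ι).PairwiseDisjoint (fun i => Metric.closedBall (c i) (r i)) ∧
      ν (s \ ⋃ i ∈ F, Metric.closedBall (c i) (r i)) < ε := by
  classical
  have hfine : (IsUnifLocDoublingMeasure.vitaliFamily μ K).FineSubfamilyOn
      (fun _ => {b | ∃ i, p i ∧ b = Metric.closedBall (c i) (r i)}) s := by
    intro x hx ε hε
    obtain ⟨i, hp, hdist, hr, hrε⟩ := h x hx (ε / (|K| + 1)) (by positivity)
    refine ⟨_, ⟨IsUnifLocDoublingMeasure.closedBall_mem_vitaliFamily_of_dist_le_mul μ hdist hr,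
      i, hp, rfl⟩, Metric.closedBall_subset_closedBall' ?_⟩
    rw [le_div_iff₀ (by positivity)] at hrε
    rw [dist_comm]
    nlinarith [mul_le_mul_of_nonneg_right (le_abs_self K) hr.le]
  have := hfine.index_countable.to_subtype
  have hcover (j : hfine.index) := hfine.covering_mem j.2
  choose g hp hg using hcover
  obtain ⟨F, hF⟩ := exists_finset_measure_sdiff_biUnion_lt ν hs (f := fun j : hfine.index =>
    hfine.covering j) (fun j => hfine.measurableSet_u j.2)
    (hν (by simpa only [Set.iUnion_coe_set] using hfine.measure_sdiff_biUnion)) hε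
  refine ⟨F.image g, Finset.forall_mem_image.2 fun j _ => hp j, ?_, ?_⟩
  · rw [Finset.coe_image]
    rintro _ ⟨j, -, rfl⟩ _ ⟨k, -, rfl⟩ hjk
    simp only [Function.onFun, ← hg]
    exact hfine.covering_disjoint_subtype fun h => hjk (congrArg g h)
  · simpa only [Finset.set_biUnion_finset_image, ← hg] using hF

theorem exists_measure_compl_closedBall_lt {α : Type*} [PseudoMetricSpace α] [MeasurableSpace α]
    [OpensMeasurableSpace α] (ν : Measure α) [IsFiniteMeasure ν] (x : α) {ε : ENNReal}
    (hε : 0 < ε) : ∃ n : ℕ, ν (Metric.closedBall x n)ᶜ < ε := by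
  have hanti : Antitone fun n : ℕ => (Metric.closedBall x (n : ℝ))ᶜ := fun m n hmn =>
    Set.compl_subset_compl.2 (Metric.closedBall_subset_closedBall (Nat.cast_le.2 hmn))
  have htendsto := tendsto_measure_iInter_atTop (μ := ν)
    (fun n => Metric.isClosed_closedBall.measurableSet.compl.nullMeasurableSet) hanti
    ⟨0, measure_ne_top _ _⟩
  rw [← Set.compl_iUnion, Metric.iUnion_closedBall_nat, Set.compl_univ, measure_empty] at htendsto
  exact (htendsto.eventually (gt_mem_nhds hε)).exists

end Covering

section Approximation

variable {d : ℕ}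

theorem exists_norm_natCast_smul_sub_le (θ : Fin d → ℝ) {H : ℕ} (hH : 0 < H) :
    ∃ (q : ℕ) (p : Fin d → ℤ), 0 < q ∧ q ≤ H ^ d ∧
      ‖(q : ℝ) • θ - (fun k => (p k : ℝ))‖ ≤ 1 / H := by
  have hH' : (0 : ℝ) < H := Nat.cast_pos.2 hH
  let cell (q : ℕ) (k : Fin d) : ℤ := ⌊H * Int.fract (q * θ k)⌋
  have hmaps : ∀ q ∈ Finset.range (H ^ d + 1),
      cell q ∈ Fintype.piFinset fun _ : Fin d => Finset.Ico (0 : ℤ) H := by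
    intro q _
    rw [Fintype.mem_piFinset]
    intro k
    rw [Finset.mem_Ico, Int.floor_lt, Int.cast_natCast]
    exact ⟨Int.floor_nonneg.2 (mul_nonneg hH'.le (Int.fract_nonneg _)),
      mul_lt_of_lt_one_right hH' (Int.fract_lt_one _)⟩
  obtain ⟨x, hx, y, hy, hne, heq⟩ := Finset.exists_ne_map_eq_of_card_lt_of_maps_to
    (by simp) hmaps
  wlog hxy : x < y generalizing x y
  · exact this y hy x hx hne.symm heq.symm (by omega)
  rw [Finset.mem_range] at hy
  refine ⟨y - x, fun k => ⌊y * θ k⌋ - ⌊x * θ k⌋, by omega, by omega, ?_⟩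
  refine (pi_norm_le_iff_of_nonneg (by positivity)).2 fun k => ?_
  have hfract : ((y - x : ℕ) : ℝ) * θ k - ((⌊y * θ k⌋ - ⌊x * θ k⌋ : ℤ) : ℝ) =
      Int.fract (y * θ k) - Int.fract (x * θ k) := by
    rw [Nat.cast_sub hxy.le, Int.fract, Int.fract]
    push_cast
    ring
  have hlt := Int.abs_sub_lt_one_of_floor_eq_floor (congrFun heq k).symm
  rw [← mul_sub, abs_mul, abs_of_pos hH', ← hfract] at hlt
  rw [le_div_iff₀' hH']
  exact hlt.le

open scoped Matrix.Norms.Elementwise in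
theorem exists_ne_zero_dotProduct_eq_zero_norm_le (hd : d ≠ 0) {A H : ℝ} (hA : 1 ≤ A) (hH : 1 ≤ H)
    {m : Fin (d + 1) → ℤ} (hm : ‖m‖ ≤ A * H ^ d) :
    ∃ ξ : Fin (d + 1) → ℤ, ξ ≠ 0 ∧ m ⬝ᵥ ξ = 0 ∧ ‖ξ‖ ≤ (d + 1) * A * H := by
  obtain ⟨ξ, hξ, hmξ, hnorm⟩ := Int.Matrix.exists_ne_zero_int_vec_norm_le
    (Matrix.of fun _ : Unit => m) (by simpa using Nat.pos_of_ne_zero hd) (by simp)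
  refine ⟨ξ, hξ, congrFun hmξ (), hnorm.trans ?_⟩
  have hmax : max 1 ‖Matrix.of fun _ : Unit => m‖ ≤ A * H ^ d := by
    refine max_le (one_le_mul_of_one_le_of_one_le hA (one_le_pow₀ hH)) ?_
    exact (Matrix.norm_le_iff (by positivity)).2 fun _ j => (norm_le_pi_norm m j).trans hm
  have hbase : (Fintype.card (Fin (d + 1)) : ℝ) * max 1 ‖Matrix.of fun _ : Unit => m‖ ≤
      ((d + 1) * A * H) ^ d := by
    have hle : ((d : ℝ) + 1) * A ≤ ((d + 1) * A) ^ d :=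
      le_self_pow₀ (one_le_mul_of_one_le_of_one_le (by simp) hA) hd
    rw [Fintype.card_fin, Nat.cast_succ, mul_pow]
    calc ((d : ℝ) + 1) * max 1 ‖Matrix.of fun _ : Unit => m‖
        ≤ (d + 1) * (A * H ^ d) := by gcongr
      _ = (d + 1) * A * H ^ d := by ring
      _ ≤ ((d + 1) * A) ^ d * H ^ d := by gcongr
  refine (Real.rpow_le_rpow (by positivity) hbase ?_).trans (le_of_eq ?_)
  · simp
  rw [Fintype.card_fin, Fintype.card_unit, Nat.cast_one, Nat.cast_add_one, add_sub_cancel_right,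
    one_div, Real.pow_rpow_inv_natCast (by positivity) hd]

theorem exists_norm_head_smul_add_vecTail_le (θ : Fin d → ℝ) {H : ℕ} (hH : 0 < H) :
    ∃ m : Fin (d + 1) → ℤ, 0 < m 0 ∧ ‖m‖ ≤ (‖θ‖ + 1) * (H : ℝ) ^ d ∧
      ‖(m 0 : ℝ) • θ + (fun k : Fin d => (m k.succ : ℝ))‖ ≤ 1 / H := by
  obtain ⟨q, p, hq, hqH, hqp⟩ := exists_norm_natCast_smul_sub_le θ hH
  have hqH' : (q : ℝ) ≤ (H : ℝ) ^ d := mod_cast hqH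
  have hH1 : 1 / (H : ℝ) ≤ 1 := (div_le_one (Nat.cast_pos.2 hH)).2 (Nat.one_le_cast.2 hH)
  have hpow : 1 ≤ (H : ℝ) ^ d := one_le_pow₀ (Nat.one_le_cast.2 hH)
  have hp : ‖p‖ ≤ (‖θ‖ + 1) * (H : ℝ) ^ d := by
    rw [← norm_intCast_comp]
    calc ‖fun k => (p k : ℝ)‖ ≤ ‖(q : ℝ) • θ‖ + ‖(q : ℝ) • θ - (fun k => (p k : ℝ))‖ :=
          norm_le_insert _ _
      _ ≤ H ^ d * ‖θ‖ + 1 := by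
          rw [norm_smul_of_nonneg q.cast_nonneg]
          gcongr
          exact hqp.trans hH1
      _ ≤ (‖θ‖ + 1) * H ^ d := by linarith
  refine ⟨vecCons q (-p), by simpa, ?_, ?_⟩
  · refine (pi_norm_le_iff_of_nonneg (by positivity)).2 (Fin.cases ?_ fun k => ?_)
    · rw [cons_val_zero, Int.norm_natCast]
      nlinarith [norm_nonneg θ]
    · rw [cons_val_succ, Pi.neg_apply, norm_neg]
      exact (norm_le_pi_norm p k).trans hp
  · convert hqp using 2
    ext k
    simp [sub_eq_add_neg]

namespace ScaledTransvection

theorem dist_center (t : ScaledTransvection d) (θ : Fin d → ℝ) :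
    dist θ t.center = ‖(t.m 0 : ℝ) • θ + (fun k : Fin d => (t.m k.succ : ℝ))‖ / t.m 0 := by
  have hm := t.intCast_m_zero_pos
  have hsub : (t.m 0 : ℝ) • θ + (fun k : Fin d => (t.m k.succ : ℝ)) =
      (t.m 0 : ℝ) • (θ - t.center) := by
    ext k
    simp only [center, Pi.smul_apply, Pi.sub_apply, Pi.add_apply, smul_eq_mul]
    field_simp
    ring
  rw [hsub, norm_smul_of_nonneg hm.le, mul_div_cancel_left₀ _ hm.ne', dist_eq_norm]

theorem exists_dist_center_le (hd : d ≠ 0) {Q : ℕ} (hQ : 0 < Q) (Θ : ℝ) :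
    ∃ K : ℝ, ∀ θ : Fin d → ℝ, ‖θ‖ ≤ Θ → ∀ ε > 0, ∃ t : ScaledTransvection d,
      Q * ‖t.ξ‖ * t.s ≤ 1 ∧ dist θ t.center ≤ K * t.radius ∧ t.radius ≤ ε := by
  have hQ' : (1 : ℝ) ≤ Q := Nat.one_le_cast.2 hQ
  set K : ℝ := (d + 1) * (|Θ| + 1)
  have hK1 : 1 ≤ K := one_le_mul_of_one_le_of_one_le (by simp) (by simp)
  refine ⟨Q * K * (8 * (d + 1)), fun θ hθ ε hε => ?_⟩
  obtain ⟨n, hn⟩ := exists_nat_gt (1 / ε)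
  have hn0 : (0 : ℝ) < n := lt_trans (by positivity) hn
  have hn1 : (1 : ℝ) ≤ n := Nat.one_le_cast.2 (Nat.cast_pos.1 hn0)
  obtain ⟨m, hm, hnorm, happrox⟩ := exists_norm_head_smul_add_vecTail_le θ (Nat.cast_pos.1 hn0)
  obtain ⟨ξ, hξ, hmξ, hξn⟩ := exists_ne_zero_dotProduct_eq_zero_norm_le hd (A := |Θ| + 1)
    (by simp) hn1 (hnorm.trans (by gcongr; exact hθ.trans (le_abs_self Θ)))
  have hm1 : (1 : ℝ) ≤ m 0 := mod_cast hm
  let t : ScaledTransvection d := ⟨m, ξ, 1 / (Q * K * n), hm, hξ, hmξ, by positivity⟩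
  have hradius : t.radius = 1 / (Q * K * n) / (8 * (d + 1) * m 0) := rfl
  refine ⟨t, ?_, ?_, ?_⟩
  · change Q * ‖ξ‖ * (1 / (Q * K * n)) ≤ 1
    rw [mul_one_div, div_le_one (by positivity), mul_assoc]
    gcongr
  · rw [dist_center, div_le_iff₀ t.intCast_m_zero_pos]
    refine happrox.trans_eq ?_
    rw [hradius]
    change _ = _ * (m 0 : ℝ)
    field_simp
  · rw [hradius, div_div, one_div_le (by positivity) hε]
    have hone : 1 ≤ Q * K * (8 * (d + 1) * m 0) :=
      one_le_mul_of_one_le_of_one_le (one_le_mul_of_one_le_of_one_le hQ' hK1)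
        (one_le_mul_of_one_le_of_one_le (by linarith [d.cast_nonneg (α := ℝ)]) hm1)
    calc 1 / ε ≤ Q * K * (8 * (d + 1) * m 0) * n := hn.le.trans (le_mul_of_one_le_left hn0.le hone)
      _ = Q * K * n * (8 * (d + 1) * m 0) := by ring

theorem sum_div_pow_le {Θ : ℝ} (hΘ : 0 ≤ Θ) {F : Finset (ScaledTransvection d)}
    (hdisj : (F : Set (ScaledTransvection d)).PairwiseDisjoint ball)
    (hsub : ∀ t ∈ F, t.ball ⊆ Metric.closedBall 0 Θ) :
    ∑ t ∈ F, (t.s / t.m 0) ^ d ≤ (8 * (d + 1) * Θ) ^ d := by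
  have hvol : ∑ t ∈ F, volume t.ball ≤ volume (Metric.closedBall (0 : Fin d → ℝ) Θ) := by
    rw [← measure_biUnion_finset hdisj fun _ _ => Metric.isClosed_closedBall.measurableSet]
    exact measure_mono (Set.iUnion₂_subset hsub)
  have hball (t : ScaledTransvection d) : volume t.ball = ENNReal.ofReal ((2 * t.radius) ^ d) := by
    rw [ball, Real.volume_pi_closedBall _ t.radius_pos.le, Fintype.card_fin]
  simp only [hball] at hvol
  rw [Real.volume_pi_closedBall _ hΘ, Fintype.card_fin, ← ENNReal.ofReal_sum_of_nonneg
    fun t _ => pow_nonneg (mul_nonneg zero_le_two t.radius_pos.le) _,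
    ENNReal.ofReal_le_ofReal_iff (by positivity)] at hvol
  calc ∑ t ∈ F, (t.s / t.m 0) ^ d = (4 * (d + 1)) ^ d * ∑ t ∈ F, (2 * t.radius) ^ d := by
        rw [Finset.mul_sum]
        refine Finset.sum_congr rfl fun t _ => ?_
        have hm := t.intCast_m_zero_pos.ne'
        have hs : t.s / t.m 0 = 4 * (d + 1) * (2 * t.radius) := by
          rw [radius]
          field_simp
          ring
        rw [hs, mul_pow]
    _ ≤ (4 * (d + 1)) ^ d * (2 * Θ) ^ d := by gcongr
    _ = (8 * (d + 1) * Θ) ^ d := by rw [← mul_pow]; ring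

theorem exists_finset_setLIntegral_compl_ball_le (hd : d ≠ 0) {κ : ℝ} (hκ : 0 < κ) :
    ∃ C > 0, ∀ Q : ℕ, 0 < Q → ∃ F : Finset (ScaledTransvection d),
      (∀ t ∈ F, Q * ‖t.ξ‖ * t.s ≤ 1) ∧
      ∫⁻ θ in (⋃ t ∈ F, t.ball)ᶜ, volume (ballSlab (d + 1) 2 3 θ) ≤ ENNReal.ofReal κ ∧
      ∑ t ∈ F, (t.s / t.m 0) ^ d ≤ C := by
  let ν : Measure (Fin d → ℝ) := volume.withDensity fun θ => volume (ballSlab (d + 1) 2 3 θ)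
  have : IsFiniteMeasure ν :=
    isFiniteMeasure_withDensity (lintegral_volume_ballSlab_lt_top d.lt_succ_self 2 (by simp)).ne
  have hκ2 : 0 < ENNReal.ofReal (κ / 2) := ENNReal.ofReal_pos.2 (half_pos hκ)
  obtain ⟨Θ, hΘ⟩ := exists_measure_compl_closedBall_lt ν 0 hκ2
  refine ⟨(8 * (d + 1) * (Θ + 1)) ^ d, by positivity, fun Q hQ => ?_⟩
  obtain ⟨K, hK⟩ := exists_dist_center_le hd hQ Θ
  obtain ⟨F, hF, hdisj, hcover⟩ := exists_finset_pairwiseDisjoint_closedBall volume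
    (withDensity_absolutelyContinuous _ _ : ν ≪ volume)
    (Metric.isClosed_closedBall (x := 0) (ε := (Θ : ℝ))).measurableSet
    center radius (fun t => Q * ‖t.ξ‖ * t.s ≤ 1 ∧ t.ball ⊆ Metric.closedBall 0 (Θ + 1)) K
    (fun θ hθ ε hε => by
      rw [mem_closedBall_zero_iff] at hθ
      obtain ⟨t, hQt, hdist, hradius⟩ := hK θ hθ (min ε (1 / (|K| + 1))) (by positivity)
      rw [le_min_iff, le_div_iff₀ (by positivity)] at hradius
      refine ⟨t, ⟨hQt, Metric.closedBall_subset_closedBall' ?_⟩, hdist, t.radius_pos, hradius.1⟩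
      have hcenter := dist_triangle t.center θ 0
      rw [dist_comm t.center θ, dist_zero_right θ] at hcenter
      nlinarith [mul_le_mul_of_nonneg_right (le_abs_self K) t.radius_pos.le]) hκ2
  refine ⟨F, fun t ht => (hF t ht).1, ?_,
    sum_div_pow_le (by positivity) hdisj fun t ht => (hF t ht).2⟩
  calc ∫⁻ θ in (⋃ t ∈ F, t.ball)ᶜ, volume (ballSlab (d + 1) 2 3 θ)
      = ν (⋃ t ∈ F, t.ball)ᶜ := (withDensity_apply _ <| MeasurableSet.compl <|
        F.measurableSet_biUnion fun _ _ => Metric.isClosed_closedBall.measurableSet).symm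
    _ ≤ ν ((Metric.closedBall 0 Θ)ᶜ ∪ (Metric.closedBall 0 Θ \ ⋃ t ∈ F, t.ball)) :=
        measure_mono fun θ hθ => or_iff_not_imp_left.2 fun h => ⟨not_not.1 h, hθ⟩
    _ ≤ ENNReal.ofReal (κ / 2) + ENNReal.ofReal (κ / 2) :=
        (measure_union_le _ _).trans (add_le_add hΘ.le hcover.le)
    _ = ENNReal.ofReal κ := by
        rw [← ENNReal.ofReal_add (half_pos hκ).le (half_pos hκ).le, add_halves]

end ScaledTransvection

end Approximation

section CoprimePairs

theorem card_le_of_forall_dvd_sub {b p : ℕ} (hp : 0 < p) {A : Finset ℤ}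
    (hA : ∀ z ∈ A, |z| ≤ (b : ℤ)) (hdvd : ∀ z ∈ A, ∀ w ∈ A, (p : ℤ) ∣ z - w) :
    A.card ≤ (2 * b + 1) / p + 1 := by
  have hp' : (0 : ℤ) < p := mod_cast hp
  have hmaps : Set.MapsTo (fun z : ℤ => (z + b) / p) A
      (Finset.Icc 0 (((2 * b + 1) / p : ℕ) : ℤ)) := fun z hz => by
    have hz := abs_le.1 (hA z hz)
    rw [Finset.coe_Icc, Set.mem_Icc, Int.natCast_div]
    exact ⟨Int.ediv_nonneg (by lia) hp'.le, Int.ediv_le_ediv hp' (by push_cast; lia)⟩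
  have hinj : Set.InjOn (fun z : ℤ => (z + b) / p) A := fun z hz w hw h => by
    have hmod : (z + b) % p = (w + b) % p :=
      Int.emod_eq_emod_iff_emod_sub_eq_zero.2 (Int.emod_eq_zero_of_dvd (by
        rw [add_sub_add_right_eq_sub]; exact hdvd z hz w hw))
    have hzw := Int.mul_ediv_add_emod (z + b) p
    rw [show (z + b) / p = (w + b) / p from h, hmod, Int.mul_ediv_add_emod] at hzw
    exact (add_right_cancel hzw).symm
  refine (Finset.card_le_card_of_injOn _ hmaps hinj).trans_eq ?_
  rw [Int.card_Icc, sub_zero, ← Nat.cast_succ, Int.toNat_natCast]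

/-- The vectors of `intBox k b` whose dot product with `e` is divisible by `p`. -/
noncomputable def dvdBox {k : ℕ} (b : ℕ) (e : Fin k → ℤ) (p : ℕ) : Finset (Fin k → ℤ) :=
  (intBox k b).filter fun x => (p : ℤ) ∣ x ⬝ᵥ e

theorem mem_dvdBox {k b p : ℕ} {e x : Fin k → ℤ} :
    x ∈ dvdBox b e p ↔ (∀ i, |x i| ≤ (b : ℤ)) ∧ (p : ℤ) ∣ x ⬝ᵥ e := by
  rw [dvdBox, Finset.mem_filter, mem_intBox]

variable {k b : ℕ} {e : Fin (k + 1) → ℤ}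

theorem card_dvdBox_le_of_not_dvd {p : ℕ} (hp : p.Prime) {j : Fin (k + 1)}
    (hj : ¬(p : ℤ) ∣ e j) :
    (dvdBox b e p).card ≤ ((2 * b + 1) / p + 1) * (2 * b + 1) ^ k := by
  classical
  have hfibre (y : Fin k → ℤ) :
      ((dvdBox b e p).filter fun x => j.removeNth x = y).card ≤ (2 * b + 1) / p + 1 := by
    rw [← Finset.card_image_of_injOn (f := fun x : Fin (k + 1) → ℤ => x j)
      fun x hx x' hx' h => ?_]
    · refine card_le_of_forall_dvd_sub hp.pos ?_ ?_
      · simp only [Finset.forall_mem_image, Finset.mem_filter, mem_dvdBox]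
        exact fun x hx => hx.1.1 j
      · simp only [Finset.forall_mem_image, Finset.mem_filter, mem_dvdBox]
        rintro x ⟨⟨-, hx⟩, hxy⟩ x' ⟨⟨-, hx'⟩, hxy'⟩
        have hsub : x ⬝ᵥ e - x' ⬝ᵥ e = (x j - x' j) * e j := by
          have hrest (i) : x (j.succAbove i) = x' (j.succAbove i) :=
            congrFun (hxy.trans hxy'.symm) i
          simp only [dotProduct, Fin.sum_univ_succAbove _ j, hrest]
          ring
        have hdvd := dvd_sub hx hx'
        rw [hsub] at hdvd
        exact ((Nat.prime_iff_prime_int.1 hp).dvd_mul.1 hdvd).resolve_right hj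
    · rw [← Fin.insertNth_self_removeNth j x, ← Fin.insertNth_self_removeNth j x',
        (Finset.mem_filter.1 hx).2, (Finset.mem_filter.1 hx').2, show x j = x' j from h]
  calc (dvdBox b e p).card
      ≤ ((2 * b + 1) / p + 1) * ((dvdBox b e p).image fun x => j.removeNth x).card :=
        Finset.card_le_mul_card_image _ _ fun y _ => hfibre y
    _ ≤ ((2 * b + 1) / p + 1) * (intBox k b).card := by
        gcongr
        exact Finset.image_subset_iff.2 fun x hx => mem_intBox.2 fun i => (mem_dvdBox.1 hx).1 _
    _ = ((2 * b + 1) / p + 1) * (2 * b + 1) ^ k := by rw [card_intBox]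

theorem card_dvdBox_le (he : ∃ t, t ⬝ᵥ e = 1) {p : ℕ} (hp : p.Prime) :
    ((dvdBox b e p).card : ℝ) ≤ (1 / p + 1 / (2 * b + 1)) * (intBox (k + 1) b).card := by
  obtain ⟨t, ht⟩ := he
  obtain ⟨j, hj⟩ : ∃ j, ¬(p : ℤ) ∣ e j := by
    by_contra! hdvd
    have hone : (p : ℤ) ∣ t ⬝ᵥ e := Finset.dvd_sum fun i _ => (hdvd i).mul_left _
    rw [ht] at hone
    exact (Nat.prime_iff_prime_int.1 hp).not_dvd_one hone
  calc ((dvdBox b e p).card : ℝ) ≤ (((2 * b + 1) / p + 1) * (2 * b + 1) ^ k : ℕ) := by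
        exact_mod_cast card_dvdBox_le_of_not_dvd hp hj
    _ ≤ ((2 * b + 1) / p + 1) * (2 * b + 1) ^ k := by
        push_cast
        gcongr
        exact Nat.cast_div_le.trans_eq (by push_cast; rfl)
    _ = _ := by
        rw [card_intBox]
        push_cast
        rw [pow_succ']
        field_simp

theorem card_dvdBox_le_of_lt (he : ∃ t, t ⬝ᵥ e = 1) {p : ℕ} (hp : p.Prime)
    (hlt : 2 * b + 1 < p) :
    ((dvdBox b e p).card : ℝ) ≤ 2 / (2 * b + 1) * (intBox (k + 1) b).card := by
  refine (card_dvdBox_le he hp).trans ?_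
  rw [← one_add_one_eq_two, add_div]
  gcongr
  rw [one_add_one_eq_two]
  exact_mod_cast hlt.le

theorem card_filter_dotProduct_eq_zero_le (he : ∃ t, t ⬝ᵥ e = 1) :
    (((intBox (k + 1) b).filter fun x => x ⬝ᵥ e = 0).card : ℝ) ≤
      2 / (2 * b + 1) * (intBox (k + 1) b).card := by
  obtain ⟨p, hlt, hp⟩ := Nat.exists_infinite_primes (2 * b + 1 + 1)
  refine le_trans ?_ (card_dvdBox_le_of_lt he hp hlt)
  exact_mod_cast Finset.card_le_card (Finset.monotone_filter_right _ fun x _ hx => by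
    rw [hx]; exact dvd_zero _)

theorem sum_one_div_add_one_div_sq_le {W : ℕ} (hW : 2 ≤ W) :
    ∑ p ∈ Finset.Icc 2 W, (1 / (p : ℝ) + 1 / W) ^ 2 ≤ 5 / 6 + 10 / (W : ℝ) := by
  have hW0 : (0 : ℝ) < W := by positivity
  have hterm (p : ℕ) : (1 / (p : ℝ) + 1 / W) ^ 2 ≤ 10 / 9 * ((p : ℝ) ^ 2)⁻¹ + 10 / (W : ℝ) ^ 2 := by
    have hsq : 10 / 9 * ((p : ℝ) ^ 2)⁻¹ + 10 / (W : ℝ) ^ 2 =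
        (1 / (p : ℝ) + 1 / W) ^ 2 + (1 / 3 * (1 / (p : ℝ)) - 3 * (1 / (W : ℝ))) ^ 2 := by ring
    exact hsq ▸ le_add_of_nonneg_right (sq_nonneg _)
  have hsum : ∑ p ∈ Finset.Icc 2 W, ((p : ℝ) ^ 2)⁻¹ ≤ 3 / 4 := by
    rw [← Finset.add_sum_Ioc_eq_sum_Icc hW]
    have := sum_Ioc_inv_sq_le_sub (α := ℝ) two_ne_zero hW
    have := inv_nonneg.2 hW0.le
    push_cast at *
    linarith
  calc ∑ p ∈ Finset.Icc 2 W, (1 / (p : ℝ) + 1 / W) ^ 2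
      ≤ ∑ p ∈ Finset.Icc 2 W, (10 / 9 * ((p : ℝ) ^ 2)⁻¹ + 10 / (W : ℝ) ^ 2) :=
        Finset.sum_le_sum fun p _ => hterm p
    _ = 10 / 9 * ∑ p ∈ Finset.Icc 2 W, ((p : ℝ) ^ 2)⁻¹ + (W + 1 - 2 : ℕ) * (10 / (W : ℝ) ^ 2) := by
        rw [Finset.sum_add_distrib, ← Finset.mul_sum, Finset.sum_const, Nat.card_Icc, nsmul_eq_mul]
    _ ≤ 10 / 9 * (3 / 4) + W * (10 / (W : ℝ) ^ 2) := by
        gcongr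
        lia
    _ = 5 / 6 + 10 / W := by field_simp; ring

theorem card_biUnion_dvdBox_product_le [DecidableEq ((Fin (k + 1) → ℤ) × (Fin (k + 1) → ℤ))]
    (he : ∃ t, t ⬝ᵥ e = 1) (hb : 1 ≤ b) :
    ((((Finset.Icc 2 (2 * b + 1)).filter Nat.Prime).biUnion
        fun p => dvdBox b e p ×ˢ dvdBox b e p).card : ℝ) ≤
      (5 / 6 + 10 / (2 * b + 1)) * ((intBox (k + 1) b).card : ℝ) ^ 2 := by
  calc _ ≤ ∑ p ∈ (Finset.Icc 2 (2 * b + 1)).filter Nat.Prime,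
        ((dvdBox b e p ×ˢ dvdBox b e p).card : ℝ) := mod_cast Finset.card_biUnion_le
    _ ≤ ∑ p ∈ (Finset.Icc 2 (2 * b + 1)).filter Nat.Prime,
        ((1 / p + 1 / (2 * b + 1)) * ((intBox (k + 1) b).card : ℝ)) ^ 2 := by
        refine Finset.sum_le_sum fun p hp => ?_
        rw [Finset.card_product, ← sq, Nat.cast_pow]
        gcongr
        exact card_dvdBox_le he (Finset.mem_filter.1 hp).2
    _ ≤ ∑ p ∈ Finset.Icc 2 (2 * b + 1),
        ((1 / p + 1 / (2 * b + 1)) * ((intBox (k + 1) b).card : ℝ)) ^ 2 :=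
        Finset.sum_le_sum_of_subset_of_nonneg (Finset.filter_subset _ _) fun _ _ _ => sq_nonneg _
    _ ≤ (5 / 6 + 10 / (2 * b + 1)) * ((intBox (k + 1) b).card : ℝ) ^ 2 := by
        simp only [mul_pow, ← Finset.sum_mul]
        gcongr
        exact_mod_cast sum_one_div_add_one_div_sq_le (W := 2 * b + 1) (by lia)

theorem card_filter_lt_primeFactors_le {W l r : ℕ} (hl : l ≠ 0) (hlt : l < W ^ (r + 1)) :
    (l.primeFactors.filter fun p => W < p).card ≤ r := by
  by_contra! hcard
  have hW : 0 < W := Nat.pos_of_ne_zero fun h => by simp [h] at hlt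
  refine hlt.not_ge ?_
  calc W ^ (r + 1) ≤ W ^ (l.primeFactors.filter fun p => W < p).card :=
        Nat.pow_le_pow_right hW hcard
    _ ≤ ∏ p ∈ l.primeFactors.filter fun p => W < p, p :=
        Finset.pow_card_le_prod _ _ _ fun p hp => (Finset.mem_filter.1 hp).2.le
    _ ≤ l := Nat.le_of_dvd (Nat.pos_of_ne_zero hl)
        ((Finset.prod_dvd_prod_of_subset _ _ _ (Finset.filter_subset _ _)).trans
          (Nat.prod_primeFactors_dvd l))

theorem card_biUnion_lt_primeFactors_dvdBox_le [DecidableEq (Fin (k + 1) → ℤ)] {r : ℕ}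
    (he : ∃ t, t ⬝ᵥ e = 1) {l : ℕ} (hl : l ≠ 0) (hlt : l < (2 * b + 1) ^ (r + 1)) :
    (((l.primeFactors.filter fun p => 2 * b + 1 < p).biUnion fun p => dvdBox b e p).card : ℝ) ≤
      2 * r / (2 * b + 1) * (intBox (k + 1) b).card := by
  calc _ ≤ ∑ p ∈ l.primeFactors.filter fun p => 2 * b + 1 < p, ((dvdBox b e p).card : ℝ) :=
        mod_cast Finset.card_biUnion_le
    _ ≤ ∑ p ∈ l.primeFactors.filter fun p => 2 * b + 1 < p,
        2 / (2 * b + 1) * ((intBox (k + 1) b).card : ℝ) := by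
        refine Finset.sum_le_sum fun p hp => ?_
        rw [Finset.mem_filter] at hp
        exact card_dvdBox_le_of_lt he (Nat.prime_of_mem_primeFactors hp.1) hp.2
    _ ≤ r * (2 / (2 * b + 1) * ((intBox (k + 1) b).card : ℝ)) := by
        rw [Finset.sum_const, nsmul_eq_mul]
        gcongr
        exact card_filter_lt_primeFactors_le hl hlt
    _ = 2 * r / (2 * b + 1) * (intBox (k + 1) b).card := by ring

theorem filter_not_isCoprime_subset [DecidableEq (Fin (k + 1) → ℤ)]
    [DecidablePred fun z : (Fin (k + 1) → ℤ) × (Fin (k + 1) → ℤ) =>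
      ¬IsCoprime (z.1 ⬝ᵥ e) (z.2 ⬝ᵥ e)] :
    ((intBox (k + 1) b ×ˢ intBox (k + 1) b).filter
        fun z => ¬IsCoprime (z.1 ⬝ᵥ e) (z.2 ⬝ᵥ e)) ⊆
      (((intBox (k + 1) b).filter fun x => x ⬝ᵥ e = 0) ×ˢ intBox (k + 1) b) ∪
      (((Finset.Icc 2 (2 * b + 1)).filter Nat.Prime).biUnion
        fun p => dvdBox b e p ×ˢ dvdBox b e p) ∪
      (((intBox (k + 1) b).filter fun x => x ⬝ᵥ e ≠ 0).biUnion fun x => {x} ×ˢ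
        (((x ⬝ᵥ e).natAbs.primeFactors.filter fun p => 2 * b + 1 < p).biUnion
          fun p => dvdBox b e p)) := by
  rintro ⟨x, y⟩ hxy
  simp only [Finset.mem_filter, Finset.mem_product] at hxy
  obtain ⟨⟨hx, hy⟩, hcop⟩ := hxy
  simp only [Finset.mem_union, Finset.mem_biUnion, Finset.mem_product, Finset.mem_filter,
    Finset.mem_singleton, Finset.mem_Icc, Nat.mem_primeFactors, dvdBox]
  by_cases hzero : x ⬝ᵥ e = 0
  · exact Or.inl (Or.inl ⟨⟨hx, hzero⟩, hy⟩)
  rw [Int.isCoprime_iff_gcd_eq_one, Int.gcd] at hcop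
  obtain ⟨p, hp, hpx, hpy⟩ := Nat.Prime.not_coprime_iff_dvd.1 hcop
  obtain hle | hlt := le_or_gt p (2 * b + 1)
  · exact Or.inl (Or.inr ⟨p, ⟨⟨hp.two_le, hle⟩, hp⟩, ⟨hx, Int.natCast_dvd.2 hpx⟩, hy,
      Int.natCast_dvd.2 hpy⟩)
  · exact Or.inr ⟨x, ⟨hx, hzero⟩, rfl, p, ⟨⟨hp, hpx, Int.natAbs_ne_zero.2 hzero⟩, hlt⟩, hy,
      Int.natCast_dvd.2 hpy⟩

open Classical in
theorem card_filter_not_isCoprime_le {r : ℕ} (he : ∃ t, t ⬝ᵥ e = 1) (hb : 1 ≤ b)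
    (hlt : ∀ x ∈ intBox (k + 1) b, |x ⬝ᵥ e| < (2 * b + 1) ^ (r + 1)) :
    (((intBox (k + 1) b ×ˢ intBox (k + 1) b).filter
        fun z => ¬IsCoprime (z.1 ⬝ᵥ e) (z.2 ⬝ᵥ e)).card : ℝ) ≤
      (5 / 6 + (2 * r + 12) / (2 * b + 1)) * ((intBox (k + 1) b).card : ℝ) ^ 2 := by
  have hlarge : ((((intBox (k + 1) b).filter fun x => x ⬝ᵥ e ≠ 0).biUnion fun x => {x} ×ˢ
        (((x ⬝ᵥ e).natAbs.primeFactors.filter fun p => 2 * b + 1 < p).biUnion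
          fun p => dvdBox b e p)).card : ℝ) ≤
      (intBox (k + 1) b).card * (2 * r / (2 * b + 1) * (intBox (k + 1) b).card) := by
    refine (Nat.cast_le.2 Finset.card_biUnion_le).trans ?_
    rw [Nat.cast_sum]
    refine (Finset.sum_le_card_nsmul _ _
      (2 * r / (2 * b + 1) * ((intBox (k + 1) b).card : ℝ)) fun x hx => ?_).trans ?_
    · rw [Finset.mem_filter] at hx
      rw [Finset.card_product, Finset.card_singleton, one_mul]
      refine card_biUnion_lt_primeFactors_dvdBox_le he (Int.natAbs_ne_zero.2 hx.2) ?_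
      zify
      exact hlt x hx.1
    · rw [nsmul_eq_mul]
      gcongr
      exact Finset.filter_subset _ _
  have hzero := card_filter_dotProduct_eq_zero_le (b := b) he
  have hsmall := card_biUnion_dvdBox_product_le he hb
  refine (Nat.cast_le.2 <| (Finset.card_le_card filter_not_isCoprime_subset).trans <|
    (Finset.card_union_le _ _).trans <| Nat.add_le_add_right (Finset.card_union_le _ _) _).trans ?_
  rw [Nat.cast_add, Nat.cast_add, Finset.card_product, Nat.cast_mul]
  calc _ ≤ 2 / (2 * b + 1) * ((intBox (k + 1) b).card : ℝ) * (intBox (k + 1) b).card +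
        (5 / 6 + 10 / (2 * b + 1)) * ((intBox (k + 1) b).card : ℝ) ^ 2 +
        (intBox (k + 1) b).card * (2 * r / (2 * b + 1) * (intBox (k + 1) b).card) := by gcongr
    _ = _ := by ring

open Classical in
theorem one_div_twelve_mul_le_card_filter_isCoprime {r : ℕ} (he : ∃ t, t ⬝ᵥ e = 1)
    (hb : 12 * r + 72 ≤ b) (hlt : ∀ x ∈ intBox (k + 1) b, |x ⬝ᵥ e| < (2 * b + 1) ^ (r + 1)) :
    1 / 12 * ((intBox (k + 1) b).card : ℝ) ^ 2 ≤
      ((intBox (k + 1) b ×ˢ intBox (k + 1) b).filter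
        fun z => IsCoprime (z.1 ⬝ᵥ e) (z.2 ⬝ᵥ e)).card := by
  have hbad := card_filter_not_isCoprime_le he (by lia) hlt
  have hsmall : (2 * r + 12 : ℝ) / (2 * b + 1) ≤ 1 / 12 := by
    have hb' : (12 * r + 72 : ℝ) ≤ b := mod_cast hb
    rw [div_le_iff₀ (by positivity)]
    linarith
  have hsum := Finset.card_filter_add_card_filter_not (s := intBox (k + 1) b ×ˢ intBox (k + 1) b)
    fun z => IsCoprime (z.1 ⬝ᵥ e) (z.2 ⬝ᵥ e)
  rw [Finset.card_product, ← sq, ← Nat.cast_inj (R := ℝ), Nat.cast_add, Nat.cast_pow] at hsum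
  nlinarith [mul_le_mul_of_nonneg_right hsmall (sq_nonneg ((intBox (k + 1) b).card : ℝ))]

end CoprimePairs

section LowerBound

variable {d k b : ℕ}

open Classical in
/-- The `k × (k + 1)` integer matrices with entries of absolute value at most `b` that can be
completed to a matrix of determinant `1` by adding a row. -/
noncomputable def primitiveFrames (k b : ℕ) : Finset (Fin k → Fin (k + 1) → ℤ) :=
  (Fintype.piFinset fun _ => intBox (k + 1) b).filter fun E => ∃ t, t ⬝ᵥ minorVec E = 1

theorem mem_primitiveFrames {E : Fin k → Fin (k + 1) → ℤ} :
    E ∈ primitiveFrames k b ↔ (∀ i j, |E i j| ≤ (b : ℤ)) ∧ ∃ t, t ⬝ᵥ minorVec E = 1 := by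
  simp only [primitiveFrames, Finset.mem_filter, Fintype.mem_piFinset, mem_intBox]

/-- The `(k + 1) × (k + 2)` matrix with columns `x`, `y` and the rows of `E`. -/
def extendFrame (x y : Fin (k + 1) → ℤ) (E : Fin k → Fin (k + 1) → ℤ) :
    Fin (k + 1) → Fin (k + 2) → ℤ :=
  fun j => vecCons (x j) (vecCons (y j) fun i => E i j)

theorem vecCons_vecCons_zero_dotProduct_minorVec_extendFrame (x y : Fin (k + 1) → ℤ)
    (E : Fin k → Fin (k + 1) → ℤ) (u v : ℤ) :
    vecCons u (vecCons v 0) ⬝ᵥ minorVec (extendFrame x y E) =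
      u * (y ⬝ᵥ minorVec E) - v * (x ⬝ᵥ minorVec E) := by
  have hfst : (of (vecCons (vecCons u (vecCons v 0)) (extendFrame x y E))).submatrix Fin.succ
      (Fin.succAbove 0) = (of (vecCons y E))ᵀ := by
    ext i j
    refine Fin.cases ?_ (fun j => ?_) j <;> simp [extendFrame]
  have hsnd : (of (vecCons (vecCons u (vecCons v 0)) (extendFrame x y E))).submatrix Fin.succ
      (Fin.succAbove (Fin.succ 0)) = (of (vecCons x E))ᵀ := by
    ext i j
    refine Fin.cases ?_ (fun j => ?_) j <;> simp [extendFrame]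
  rw [← det_of_vecCons, det_succ_row_zero, Fin.sum_univ_succ, Fin.sum_univ_succ, hfst, hsnd,
    det_transpose, det_transpose, det_of_vecCons, det_of_vecCons]
  simp
  ring

theorem extendFrame_injective : Function.Injective
    fun a : (Fin k → Fin (k + 1) → ℤ) × (Fin (k + 1) → ℤ) × (Fin (k + 1) → ℤ) =>
      extendFrame a.2.1 a.2.2 a.1 := by
  rintro ⟨E, x, y⟩ ⟨E', x', y'⟩ h
  have hx : x = x' := funext fun j => congrFun₂ h j 0
  have hy : y = y' := funext fun j => congrFun₂ h j 1
  have hE : E = E' := funext₂ fun i j => congrFun₂ h j i.succ.succ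
  rw [hx, hy, hE]

theorem extendFrame_mem_primitiveFrames {E : Fin k → Fin (k + 1) → ℤ}
    (hE : E ∈ primitiveFrames k b) {x y : Fin (k + 1) → ℤ} (hx : x ∈ intBox (k + 1) b)
    (hy : y ∈ intBox (k + 1) b) (hxy : IsCoprime (x ⬝ᵥ minorVec E) (y ⬝ᵥ minorVec E)) :
    extendFrame x y E ∈ primitiveFrames (k + 1) b := by
  rw [mem_intBox] at hx hy
  obtain ⟨u, v, huv⟩ := hxy
  refine mem_primitiveFrames.2 ⟨fun i j => ?_, vecCons v (vecCons (-u) 0), ?_⟩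
  · exact Fin.cases (hx i) (Fin.cases (hy i) fun j => (mem_primitiveFrames.1 hE).1 j i) j
  · rw [vecCons_vecCons_zero_dotProduct_minorVec_extendFrame, neg_mul, sub_neg_eq_add, add_comm]
    exact huv

theorem abs_dotProduct_minorVec_lt {E : Fin k → Fin (k + 1) → ℤ} (hE : ∀ i j, |E i j| ≤ (b : ℤ))
    (hb : (k + 1).factorial ≤ b) {x : Fin (k + 1) → ℤ} (hx : x ∈ intBox (k + 1) b) :
    |x ⬝ᵥ minorVec E| < (2 * b + 1) ^ (k + 1 + 1) := by
  have hentry (i j) : |((of (vecCons x E)).map (Int.cast : ℤ → ℝ)) i j| ≤ b := by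
    rw [map_apply]
    exact_mod_cast Fin.cases (motive := fun i => |of (vecCons x E) i j| ≤ (b : ℤ))
      (mem_intBox.1 hx j) (fun i => hE i j) i
  have hdet := abs_det_le hentry
  rw [← Int.cast_det, det_of_vecCons, Fin.prod_const] at hdet
  have hle : |x ⬝ᵥ minorVec E| ≤ (k + 1).factorial * b ^ (k + 1) := by exact_mod_cast hdet
  calc |x ⬝ᵥ minorVec E| ≤ b * b ^ (k + 1) := hle.trans (by gcongr)
    _ = (b : ℤ) ^ (k + 1 + 1) := (pow_succ' _ _).symm
    _ < (2 * b + 1) ^ (k + 1 + 1) := pow_lt_pow_left₀ (by lia) (by positivity) (by lia)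

theorem card_primitiveFrames_mul_le (hb : 12 * (k + 1) + 72 ≤ b) (hfact : (k + 1).factorial ≤ b) :
    (primitiveFrames k b).card * (1 / 12 * ((intBox (k + 1) b).card : ℝ) ^ 2) ≤
      (primitiveFrames (k + 1) b).card := by
  classical
  let pairs (E : Fin k → Fin (k + 1) → ℤ) := (intBox (k + 1) b ×ˢ intBox (k + 1) b).filter
    fun z => IsCoprime (z.1 ⬝ᵥ minorVec E) (z.2 ⬝ᵥ minorVec E)
  have hpairs (E) (hE : E ∈ primitiveFrames k b) :
      1 / 12 * ((intBox (k + 1) b).card : ℝ) ^ 2 ≤ (pairs E).card := by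
    rw [mem_primitiveFrames] at hE
    exact one_div_twelve_mul_le_card_filter_isCoprime hE.2 hb fun x hx =>
      abs_dotProduct_minorVec_lt hE.1 hfact hx
  have hcard : ((primitiveFrames k b).sigma pairs).card ≤ (primitiveFrames (k + 1) b).card := by
    refine Finset.card_le_card_of_injOn (fun a => extendFrame a.2.1 a.2.2 a.1) ?_ ?_
    · rintro ⟨E, x, y⟩ h
      simp only [pairs, Finset.coe_sigma, Set.mem_sigma_iff, Finset.mem_coe, Finset.mem_filter,
        Finset.mem_product] at h
      exact extendFrame_mem_primitiveFrames h.1 h.2.1.1 h.2.1.2 h.2.2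
    · rintro ⟨E, z⟩ - ⟨E', z'⟩ - h
      obtain ⟨rfl, rfl⟩ := Prod.mk.inj (extendFrame_injective (a₁ := (E, z)) (a₂ := (E', z')) h)
      rfl
  rw [Finset.card_sigma] at hcard
  calc _ ≤ ∑ E ∈ primitiveFrames k b, ((pairs E).card : ℝ) := by
        rw [← nsmul_eq_mul]
        exact Finset.card_nsmul_le_sum _ _ _ hpairs
    _ ≤ (primitiveFrames (k + 1) b).card := mod_cast hcard

theorem exists_le_card_primitiveFrames (k : ℕ) : ∃ c > 0, ∃ b₀ : ℕ, ∀ b ≥ b₀,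
    c * (2 * b + 1 : ℝ) ^ ((k + 1) * k) ≤ (primitiveFrames k b).card := by
  induction k with
  | zero =>
    refine ⟨1, one_pos, 0, fun b _ => ?_⟩
    have hmem : ![] ∈ primitiveFrames 0 b := by
      refine mem_primitiveFrames.2 ⟨Fin.rec0, 1, ?_⟩
      rw [← det_of_vecCons]
      simp
    simpa using Finset.card_pos.2 ⟨_, hmem⟩
  | succ k ih =>
    obtain ⟨c, hc, b₀, h⟩ := ih
    refine ⟨c * (1 / 12), by positivity, max b₀ (12 * (k + 1) + 72 + (k + 1).factorial),
      fun b hb => ?_⟩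
    rw [ge_iff_le, max_le_iff] at hb
    calc c * (1 / 12) * (2 * b + 1 : ℝ) ^ ((k + 1 + 1) * (k + 1))
        = c * (2 * b + 1) ^ ((k + 1) * k) * (1 / 12 * ((intBox (k + 1) b).card : ℝ) ^ 2) := by
          rw [card_intBox]
          push_cast
          ring
      _ ≤ (primitiveFrames k b).card * (1 / 12 * ((intBox (k + 1) b).card : ℝ) ^ 2) := by
          gcongr
          exact h b hb.1
      _ ≤ (primitiveFrames (k + 1) b).card := card_primitiveFrames_mul_le (by lia) (by lia)

-- Cramer's rule writes a nonzero multiple of the added row as a unit vector plus an integer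
-- combination of the rows of `E`; reducing the coefficients modulo that multiple shortens the row.
theorem exists_of_vecCons_mem_slBox (hb : 1 ≤ b) {E : Fin d → Fin (d + 1) → ℤ}
    (hE : E ∈ primitiveFrames d b) : ∃ t, of (vecCons t E) ∈ slBox (d + 1) ((d + 1) * b) := by
  obtain ⟨hEb, t, ht⟩ := mem_primitiveFrames.1 hE
  obtain ⟨j, hj⟩ : ∃ j, minorVec E j ≠ 0 := by
    by_contra! hzero
    rw [show minorVec E = 0 from funext hzero, dotProduct_zero] at ht
    exact zero_ne_one ht
  set c := minorVec E j
  let a : Fin d → ℤ := fun i => (of (vecCons t E)).adjugate j i.succ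
  let q : Fin d → ℤ := fun i => a i / c
  have hcramer (l) : c * t l + ∑ i, a i * E i l = (1 : Matrix _ _ ℤ) j l := by
    have h := congrFun₂ (adjugate_mul (of (vecCons t E))) j l
    rw [det_of_vecCons, ht, one_smul, mul_apply, Fin.sum_univ_succ, ← minorVec_eq_adjugate] at h
    exact h
  refine ⟨t + q ᵥ* of E, mem_slBox.2 ⟨?_, fun i l => ?_⟩⟩
  · rw [det_of_vecCons, add_dotProduct, ← dotProduct_mulVec, mulVec_minorVec, dotProduct_zero,
      add_zero, ht]
  refine Fin.cases ?_ (fun i => (hEb i l).trans ?_) i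
  · have hmul : c * (t + q ᵥ* of E) l = (1 : Matrix _ _ ℤ) j l - ∑ i, a i % c * E i l := by
      simp only [← hcramer l, Pi.add_apply, vecMul, dotProduct, of_apply, q, Int.emod_def, sub_mul,
        Finset.sum_sub_distrib, mul_add, Finset.mul_sum]
      ring_nf
    have hsum : |∑ i, a i % c * E i l| ≤ d * (|c| * b) := by
      refine (Finset.abs_sum_le_sum_abs _ _).trans ((Finset.sum_le_card_nsmul _ _ (|c| * b)
        fun i _ => ?_).trans_eq (by simp))
      rw [abs_mul, abs_of_nonneg (Int.emod_nonneg _ hj)]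
      gcongr
      · exact (Int.emod_lt_abs _ hj).le
      · exact hEb i l
    have hone : |(1 : Matrix (Fin (d + 1)) (Fin (d + 1)) ℤ) j l| ≤ 1 := by
      rw [one_apply]
      split_ifs <;> simp
    have hc : 1 ≤ |c| := Int.one_le_abs hj
    have hb' : (1 : ℤ) ≤ b := mod_cast hb
    refine le_of_mul_le_mul_left ?_ (zero_lt_one.trans_le hc)
    change |c| * |(t + q ᵥ* of E) l| ≤ _
    rw [← abs_mul, hmul]
    refine (abs_sub _ _).trans ((add_le_add hone hsum).trans ?_)
    push_cast
    linarith [one_le_mul_of_one_le_of_one_le hc hb']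
  · rw [Nat.cast_mul]
    exact le_mul_of_one_le_left (Nat.cast_nonneg _) (by push_cast; lia)

theorem card_primitiveFrames_le_card_slBox (hb : 1 ≤ b) :
    (primitiveFrames d b).card ≤ (slBox (d + 1) ((d + 1) * b)).card := by
  have hcomplete (E : Fin d → Fin (d + 1) → ℤ) :
      ∃ t, E ∈ primitiveFrames d b → of (vecCons t E) ∈ slBox (d + 1) ((d + 1) * b) := by
    by_cases hE : E ∈ primitiveFrames d b
    · obtain ⟨t, ht⟩ := exists_of_vecCons_mem_slBox hb hE
      exact ⟨t, fun _ => ht⟩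
    · exact ⟨0, fun h => absurd h hE⟩
  choose t ht using hcomplete
  exact Finset.card_le_card_of_injOn (fun E => of (vecCons (t E) E)) ht
    fun E _ E' _ h => funext fun i => congrFun (of.injective h) i.succ

theorem slBox_mono {n B B' : ℕ} (h : B ≤ B') : slBox n B ⊆ slBox n B' := fun M hM => by
  rw [mem_slBox] at hM ⊢
  exact ⟨hM.1, fun i j => (hM.2 i j).trans (mod_cast h)⟩

theorem exists_mul_pow_le_card_slBox (d : ℕ) :
    ∃ c > 0, ∃ B₀ : ℕ, ∀ B ≥ B₀, c * (B : ℝ) ^ ((d + 1) * d) ≤ (slBox (d + 1) B).card := by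
  obtain ⟨c, hc, b₀, h⟩ := exists_le_card_primitiveFrames d
  refine ⟨c * (1 / (d + 1)) ^ ((d + 1) * d), by positivity, (d + 1) * (b₀ + 1), fun B hB => ?_⟩
  have hb : b₀ + 1 ≤ B / (d + 1) := by
    rwa [Nat.le_div_iff_mul_le d.succ_pos, mul_comm]
  have hB' : (B : ℝ) ≤ (d + 1) * ((B / (d + 1) : ℕ) + 1) :=
    mod_cast (Nat.lt_mul_div_succ B d.succ_pos).le
  calc c * (1 / (d + 1)) ^ ((d + 1) * d) * (B : ℝ) ^ ((d + 1) * d)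
      = c * (B / (d + 1)) ^ ((d + 1) * d) := by rw [mul_assoc, ← mul_pow, one_div_mul_eq_div]
    _ ≤ c * (2 * (B / (d + 1) : ℕ) + 1) ^ ((d + 1) * d) := by
        gcongr
        rw [div_le_iff₀' (by positivity)]
        refine hB'.trans ?_
        gcongr
        exact le_mul_of_one_le_left (Nat.cast_nonneg _) one_le_two
    _ ≤ (primitiveFrames d (B / (d + 1))).card := h _ (by lia)
    _ ≤ (slBox (d + 1) B).card := mod_cast (card_primitiveFrames_le_card_slBox (by lia)).trans
        (Finset.card_le_card (slBox_mono (Nat.mul_div_le B (d + 1))))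

end LowerBound

section UpperBound

variable {d : ℕ}

/-- The matrices in `SL(d + 1, ℤ)` with entries of absolute value at most `B` for which `P` vanishes
at the inner coefficients, those of `X, …, X ^ d`, of the characteristic polynomial. -/
noncomputable def charpolyZeros (P : MvPolynomial (Fin d) ℤ) (B : ℕ) :
    Finset (Matrix (Fin (d + 1)) (Fin (d + 1)) ℤ) :=
  (slBox (d + 1) B).filter fun N =>
    MvPolynomial.eval (fun i : Fin d => N.charpoly.coeff (i + 1)) P = 0

theorem isUnit_charpoly_coeff_zero {R ι : Type*} [CommRing R] [Fintype ι] [DecidableEq ι]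
    {M : Matrix ι ι R} (h : IsUnit M.det) : IsUnit (M.charpoly.coeff 0) :=
  isUnit_of_mul_isUnit_right (M.det_eq_sign_charpoly_coeff ▸ h)

theorem exists_mem_charpolyZeros_of_not_irreducible (d : ℕ) :
    ∃ P : MvPolynomial (Fin d) ℤ, P ≠ 0 ∧ ∀ B, ∀ M ∈ slBox (d + 1) B,
      ¬Irreducible (M.charpoly.map (algebraMap ℤ ℚ)) → M ∈ charpolyZeros P B := by
  obtain ⟨P, hP0, hP⟩ := exists_eval_coeff_eq_zero_of_not_irreducible d
  refine ⟨P, hP0, fun B M hM hirr => Finset.mem_filter.2 ⟨hM, hP _ M.charpoly_monic ?_ ?_ hirr⟩⟩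
  · rw [charpoly_natDegree_eq_dim, Fintype.card_fin]
  · exact isUnit_charpoly_coeff_zero ((mem_slBox.1 hM).1 ▸ isUnit_one)

namespace ScaledTransvection

/-- The action on matrices of the `a`-th power `1 - a ξ mᵀ` of the transvection. -/
def move (t : ScaledTransvection d) (a : ℤ) (N : Matrix (Fin (d + 1)) (Fin (d + 1)) ℤ) :
    Matrix (Fin (d + 1)) (Fin (d + 1)) ℤ :=
  (1 - vecMulVec (a • t.ξ) t.m) * N

theorem m_dotProduct_smul_ξ (t : ScaledTransvection d) (a : ℤ) : t.m ⬝ᵥ (a • t.ξ) = 0 := by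
  rw [dotProduct_smul, t.m_dotProduct_ξ, smul_zero]

theorem m_vecMul_move (t : ScaledTransvection d) (a : ℤ)
    (N : Matrix (Fin (d + 1)) (Fin (d + 1)) ℤ) : t.m ᵥ* t.move a N = t.m ᵥ* N :=
  vecMul_one_sub_vecMulVec_mul (t.m_dotProduct_smul_ξ a) N

theorem move_apply (t : ScaledTransvection d) (a : ℤ)
    (N : Matrix (Fin (d + 1)) (Fin (d + 1)) ℤ) (i j : Fin (d + 1)) :
    t.move a N i j = N i j - (a • t.ξ) i * (t.m ᵥ* N) j := by
  rw [move, one_sub_vecMulVec_mul, Matrix.sub_apply, vecMulVec_apply]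

theorem move_move_neg (t : ScaledTransvection d) (a : ℤ)
    (N : Matrix (Fin (d + 1)) (Fin (d + 1)) ℤ) : t.move a (t.move (-a) N) = N := by
  ext i j
  simp only [move_apply, m_vecMul_move, Pi.smul_apply, smul_eq_mul]
  ring

theorem coeff_charpoly_move (t : ScaledTransvection d) (a : ℤ)
    (N : Matrix (Fin (d + 1)) (Fin (d + 1)) ℤ) (i : ℕ) :
    (t.move a N).charpoly.coeff (i + 1) =
      N.charpoly.coeff (i + 1) + a * (charpolySlope t.m t.ξ N).coeff i := by
  rw [move, charpoly_one_sub_vecMulVec_mul t.m_dotProduct_ξ, coeff_add, mul_assoc, coeff_C_mul,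
    coeff_X_mul]

theorem move_mem_slBox (t : ScaledTransvection d) {a : ℤ} (ha : ‖a • t.ξ‖ * t.s ≤ 1) {B : ℕ}
    {N : Matrix (Fin (d + 1)) (Fin (d + 1)) ℤ} (hN : N ∈ slBox (d + 1) B)
    (hmN : ‖t.m ᵥ* N‖ ≤ t.s * B) : t.move a N ∈ slBox (d + 1) (2 * B) := by
  rw [mem_slBox] at hN ⊢
  refine ⟨(det_one_sub_vecMulVec_mul (t.m_dotProduct_smul_ξ a) N).trans hN.1, fun i j => ?_⟩
  have hshift : ‖(a • t.ξ) i * (t.m ᵥ* N) j‖ ≤ B :=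
    calc ‖(a • t.ξ) i * (t.m ᵥ* N) j‖ ≤ ‖a • t.ξ‖ * (t.s * B) := by
          refine (norm_mul_le _ _).trans ?_
          gcongr
          exacts [norm_le_pi_norm (a • t.ξ) i, (norm_le_pi_norm (t.m ᵥ* N) j).trans hmN]
      _ = ‖a • t.ξ‖ * t.s * B := (mul_assoc _ _ _).symm
      _ ≤ B := mul_le_of_le_one_left (Nat.cast_nonneg B) ha
  rw [Int.norm_eq_abs] at hshift
  rw [move_apply, Nat.cast_mul, Nat.cast_two, two_mul]
  exact (abs_sub _ _).trans (add_le_add (hN.2 i j) (mod_cast hshift))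

theorem card_filter_move_mem_charpolyZeros_le (t : ScaledTransvection d)
    {P : MvPolynomial (Fin d) ℤ} {N : Matrix (Fin (d + 1)) (Fin (d + 1)) ℤ}
    (hN : MvPolynomial.eval (fun i : Fin d => (charpolySlope t.m t.ξ N).coeff i)
      (MvPolynomial.homogeneousComponent P.totalDegree P) ≠ 0) (A : Finset ℤ) (B : ℕ) :
    (A.filter fun a => t.move a N ∈ charpolyZeros P B).card ≤ P.totalDegree := by
  refine (Finset.card_le_card (Finset.monotone_filter_right A fun a _ ha => ?_)).trans
    (card_filter_eval_line_eq_zero_le P (fun i : Fin d => N.charpoly.coeff (i + 1)) _ hN A)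
  rw [← (Finset.mem_filter.1 ha).2]
  congr 2
  funext i
  exact (t.coeff_charpoly_move a N i).symm

theorem norm_smul_ξ_mul_s_le (t : ScaledTransvection d) {Q : ℕ} (hQ : Q * ‖t.ξ‖ * t.s ≤ 1) {a : ℤ}
    (ha : a ∈ Finset.Ico (0 : ℤ) Q) : ‖a • t.ξ‖ * t.s ≤ 1 := by
  obtain ⟨ha0, haQ⟩ := Finset.mem_Ico.1 ha
  have hnorm : ‖a‖ ≤ Q := by
    rw [Int.norm_eq_abs, abs_of_nonneg (mod_cast ha0)]
    exact_mod_cast haQ.le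
  have hs := t.s_pos
  refine le_trans ?_ hQ
  gcongr
  exact (norm_smul_le _ _).trans (by gcongr)

-- Double counting of the pairs `(a, N)` for which `t.move a N` lies in the set to be counted.
theorem card_mul_card_filter_charpolyZeros_le (t : ScaledTransvection d)
    (P : MvPolynomial (Fin d) ℤ) {A : Finset ℤ} (hA : ∀ a ∈ A, ‖a • t.ξ‖ * t.s ≤ 1) (B : ℕ) :
    A.card * ((charpolyZeros P B).filter fun N => ‖t.m ᵥ* N‖ ≤ t.s * B).card ≤
      P.totalDegree * ((slBox (d + 1) (2 * B)).filter fun N => ‖t.m ᵥ* N‖ ≤ t.s * B).card +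
        A.card * ((slBox (d + 1) (2 * B)).filter fun N =>
          MvPolynomial.eval (fun i : Fin d => (charpolySlope t.m t.ξ N).coeff i)
            (MvPolynomial.homogeneousComponent P.totalDegree P) = 0).card := by
  set 𝒮 := (charpolyZeros P B).filter fun N => ‖t.m ᵥ* N‖ ≤ t.s * B
  set 𝒩 := (slBox (d + 1) (2 * B)).filter fun N => ‖t.m ᵥ* N‖ ≤ t.s * B
  let exceptional (N : Matrix (Fin (d + 1)) (Fin (d + 1)) ℤ) : Prop :=
    MvPolynomial.eval (fun i : Fin d => (charpolySlope t.m t.ξ N).coeff i)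
      (MvPolynomial.homogeneousComponent P.totalDegree P) = 0
  have hcolumn : ∀ a ∈ A, 𝒮.card ≤ (𝒩.filter fun N => t.move a N ∈ charpolyZeros P B).card := by
    intro a ha
    refine Finset.card_le_card_of_injOn (t.move (-a)) (fun M hM => ?_)
      (Function.LeftInverse.injective (t.move_move_neg a)).injOn
    obtain ⟨hM, hmM⟩ := Finset.mem_filter.1 hM
    refine Finset.mem_filter.2 ⟨Finset.mem_filter.2 ⟨t.move_mem_slBox ?_
      (Finset.mem_filter.1 hM).1 hmM, (t.m_vecMul_move _ M).symm ▸ hmM⟩,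
      (t.move_move_neg a M).symm ▸ hM⟩
    rw [neg_smul, norm_neg]
    exact hA a ha
  have hrow : ∀ N ∈ 𝒩, (A.filter fun a => t.move a N ∈ charpolyZeros P B).card ≤
      P.totalDegree + if exceptional N then A.card else 0 := by
    intro N _
    split_ifs with hN
    · exact (Finset.card_filter_le _ _).trans le_add_self
    · exact t.card_filter_move_mem_charpolyZeros_le hN A B
  calc A.card * 𝒮.card ≤ ∑ a ∈ A, (𝒩.filter fun N => t.move a N ∈ charpolyZeros P B).card :=
        Finset.card_nsmul_le_sum _ _ _ hcolumn
    _ = ∑ N ∈ 𝒩, (A.filter fun a => t.move a N ∈ charpolyZeros P B).card :=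
        Finset.sum_card_bipartiteAbove_eq_sum_card_bipartiteBelow _
    _ ≤ ∑ N ∈ 𝒩, (P.totalDegree + if exceptional N then A.card else 0) :=
        Finset.sum_le_sum hrow
    _ = P.totalDegree * 𝒩.card + A.card * (𝒩.filter exceptional).card := by
        rw [Finset.sum_add_distrib, Finset.sum_const, ← Finset.sum_filter, Finset.sum_const,
          smul_eq_mul, smul_eq_mul, mul_comm, mul_comm A.card]
    _ ≤ _ := by
        gcongr
        exact Finset.filter_subset _ _

end ScaledTransvection

theorem exists_card_filter_charpolyZeros_le (hd : d ≠ 0) {P : MvPolynomial (Fin d) ℤ}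
    (hP : P ≠ 0) : ∃ C > 0, ∀ t : ScaledTransvection d, ∀ Q : ℕ, 0 < Q → Q * ‖t.ξ‖ * t.s ≤ 1 →
      ∀ κ > 0, ∃ B₀ : ℕ, ∀ B ≥ B₀,
        (((charpolyZeros P B).filter fun N => ‖t.m ᵥ* N‖ ≤ t.s * B).card : ℝ) ≤
          (C / Q * (t.s / t.m 0) ^ d + κ) * (B : ℝ) ^ ((d + 1) * d) := by
  obtain ⟨C, hC, hnear⟩ := exists_card_filter_norm_vecMul_le d
  refine ⟨(P.totalDegree + 1) * (C * 2 ^ ((d + 1) * d)), by positivity,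
    fun t Q hQ hQt κ hκ => ?_⟩
  obtain ⟨B₀, hexc⟩ := exists_card_filter_eval_charpolySlope_eq_zero_le hd
    (homogeneousComponent_totalDegree_ne_zero hP) t.m_zero_pos.ne' t.ξ_ne_zero t.m_dotProduct_ξ
    (κ := κ / 2 ^ ((d + 1) * d)) (by positivity)
  refine ⟨max B₀ 1, fun B hB => ?_⟩
  have hs0 := t.s_pos
  have hm0 := t.intCast_m_zero_pos
  have hdouble := t.card_mul_card_filter_charpolyZeros_le P
    (fun a ha => t.norm_smul_ξ_mul_s_le hQt ha) B
  have hnear := hnear t.m t.m_zero_pos (t.s / 2) (by positivity) (2 * B) (by lia)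
  have hexc := hexc (2 * B) (by lia)
  have hscale : t.s / 2 * (2 * B : ℕ) = t.s * B := by push_cast; ring
  have hratio : (t.s / 2 / t.m 0) ^ d ≤ (t.s / t.m 0) ^ d := by gcongr; linarith
  rw [hscale, Nat.cast_mul, Nat.cast_two, mul_pow] at hnear
  rw [Nat.cast_mul, Nat.cast_two, mul_pow] at hexc
  rw [Int.card_Ico, sub_zero, Int.toNat_natCast] at hdouble
  have hdouble := Nat.cast_le (α := ℝ).2 hdouble
  push_cast at hdouble
  have hQ' : (0 : ℝ) < Q := Nat.cast_pos.2 hQ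
  refine le_of_mul_le_mul_left (hdouble.trans ?_) hQ'
  calc _ ≤ ((P.totalDegree : ℝ) + 1) * (C * (t.s / t.m 0) ^ d *
          (2 ^ ((d + 1) * d) * (B : ℝ) ^ ((d + 1) * d))) +
        Q * (κ / 2 ^ ((d + 1) * d) * (2 ^ ((d + 1) * d) * (B : ℝ) ^ ((d + 1) * d))) := by
        gcongr
        · linarith
        · exact hnear.trans (by gcongr)
    _ = _ := by field_simp

theorem card_charpolyZeros_le_add_sum (P : MvPolynomial (Fin d) ℤ)
    (F : Finset (ScaledTransvection d)) (B : ℕ) :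
    (charpolyZeros P B).card ≤
      ((slBox (d + 1) B).filter fun N => ∀ t ∈ F, t.s * B < ‖t.m ᵥ* N‖).card +
        ∑ t ∈ F, ((charpolyZeros P B).filter fun N => ‖t.m ᵥ* N‖ ≤ t.s * B).card := by
  classical
  have hcover : charpolyZeros P B ⊆
      ((slBox (d + 1) B).filter fun N => ∀ t ∈ F, t.s * B < ‖t.m ᵥ* N‖) ∪
        F.biUnion fun t => (charpolyZeros P B).filter fun N => ‖t.m ᵥ* N‖ ≤ t.s * B := by
    intro N hN
    by_cases h : ∀ t ∈ F, t.s * B < ‖t.m ᵥ* N‖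
    · exact Finset.mem_union_left _ (Finset.mem_filter.2 ⟨(Finset.mem_filter.1 hN).1, h⟩)
    · push Not at h
      obtain ⟨t, ht, hmN⟩ := h
      exact Finset.mem_union_right _
        (Finset.mem_biUnion.2 ⟨t, ht, Finset.mem_filter.2 ⟨hN, hmN⟩⟩)
  exact (Finset.card_le_card hcover).trans <| (Finset.card_union_le _ _).trans <|
    Nat.add_le_add_left Finset.card_biUnion_le _

theorem exists_card_charpolyZeros_le (hd : d ≠ 0) {P : MvPolynomial (Fin d) ℤ} (hP : P ≠ 0)
    {ε : ℝ} (hε : 0 < ε) : ∃ B₀ : ℕ, ∀ B ≥ B₀,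
      ((charpolyZeros P B).card : ℝ) ≤ ε * (B : ℝ) ^ ((d + 1) * d) := by
  obtain ⟨Cfar, hCfar, hfar⟩ := exists_card_filter_lt_norm_vecMul_le d
  obtain ⟨Cnear, hCnear, hnear⟩ := exists_card_filter_charpolyZeros_le hd hP
  obtain ⟨C, hC, hcover⟩ := ScaledTransvection.exists_finset_setLIntegral_compl_ball_le hd
    (κ := ε / (3 * Cfar)) (by positivity)
  obtain ⟨Q, hQ⟩ := exists_nat_gt (3 * Cnear * C / ε)
  have hQ0 : (0 : ℝ) < Q := lt_trans (by positivity) hQ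
  obtain ⟨F, hFQ, hF, hFsum⟩ := hcover Q (Nat.cast_pos.1 hQ0)
  obtain ⟨B₁, hB₁⟩ := hfar _ (by positivity) F hF
  have hev : ∀ᶠ B : ℕ in Filter.atTop, ∀ t ∈ F,
      (((charpolyZeros P B).filter fun N => ‖t.m ᵥ* N‖ ≤ t.s * B).card : ℝ) ≤
        (Cnear / Q * (t.s / t.m 0) ^ d + ε / (3 * (F.card + 1))) * (B : ℝ) ^ ((d + 1) * d) :=
    (Filter.eventually_all_finset F).2 fun t ht => Filter.eventually_atTop.2 <|
      hnear t Q (Nat.cast_pos.1 hQ0) (hFQ t ht) _ (by positivity)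
  obtain ⟨B₂, hB₂⟩ := Filter.eventually_atTop.1 hev
  refine ⟨max B₁ B₂, fun B hB => ?_⟩
  have hnearSum : ∑ t ∈ F, (Cnear / Q * (t.s / t.m 0) ^ d + ε / (3 * (F.card + 1))) ≤
      ε / 3 + ε / 3 := by
    rw [Finset.sum_add_distrib, ← Finset.mul_sum, Finset.sum_const, nsmul_eq_mul]
    refine add_le_add ?_ ?_
    · refine (mul_le_mul_of_nonneg_left hFsum (by positivity)).trans ?_
      rw [div_lt_iff₀ hε] at hQ
      rw [div_mul_eq_mul_div, div_le_iff₀ hQ0]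
      linarith
    · rw [mul_div_assoc', div_le_div_iff₀ (by positivity) (by positivity)]
      nlinarith
  calc ((charpolyZeros P B).card : ℝ)
      ≤ ε / 3 * (B : ℝ) ^ ((d + 1) * d) + ∑ t ∈ F,
        (Cnear / Q * (t.s / t.m 0) ^ d + ε / (3 * (F.card + 1))) * (B : ℝ) ^ ((d + 1) * d) := by
        refine (Nat.cast_le (α := ℝ).2 (card_charpolyZeros_le_add_sum P F B)).trans ?_
        rw [Nat.cast_add, Nat.cast_sum]
        refine add_le_add ((hB₁ B (le_of_max_le_left hB)).trans_eq ?_)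
          (Finset.sum_le_sum (hB₂ B (le_of_max_le_right hB)))
        field_simp
    _ ≤ ε / 3 * (B : ℝ) ^ ((d + 1) * d) + (ε / 3 + ε / 3) * (B : ℝ) ^ ((d + 1) * d) := by
        rw [← Finset.sum_mul]
        gcongr
    _ = ε * (B : ℝ) ^ ((d + 1) * d) := by ring

theorem ncard_isReducible_le_card_charpolyZeros {d B : ℕ} {P : MvPolynomial (Fin d) ℤ}
    (hP : ∀ M ∈ slBox (d + 1) B, ¬Irreducible (M.charpoly.map (algebraMap ℤ ℚ)) →
      M ∈ charpolyZeros P B) :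
    {M : Matrix (Fin (d + 1)) (Fin (d + 1)) ℤ | M.det = 1 ∧ (∀ i j, |M i j| ≤ (B : ℤ)) ∧
      ¬Irreducible (M.charpoly.map (algebraMap ℤ ℚ))}.ncard ≤ (charpolyZeros P B).card := by
  rw [← Set.ncard_coe_finset]
  exact Set.ncard_le_ncard fun M hM => hP M (mem_slBox.2 ⟨hM.1, hM.2.1⟩) hM.2.2

theorem ncard_eq_card_slBox (n B : ℕ) :
    {M : Matrix (Fin n) (Fin n) ℤ | M.det = 1 ∧ ∀ i j, |M i j| ≤ (B : ℤ)}.ncard =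
      (slBox n B).card := by
  rw [← Set.ncard_coe_finset]
  exact congrArg Set.ncard (Set.ext fun _ => mem_slBox.symm)

end UpperBound

/-- the proportion of matrices in `SL(n, ℤ)` with entries bounded
by `B` whose characteristic polynomial is reducible over `ℚ` tends to `0` as
`B → ∞`. -/
theorem stmt8 (n : ℕ) (hn : 2 ≤ n) :
    Filter.Tendsto (fun B : ℕ =>
        (Set.ncard {M : Matrix (Fin n) (Fin n) ℤ |
            M.det = 1 ∧ (∀ i j, |M i j| ≤ (B : ℤ)) ∧
            ¬ Irreducible ((Matrix.charpoly M).map (algebraMap ℤ ℚ))} : ℝ) /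
        (Set.ncard {M : Matrix (Fin n) (Fin n) ℤ |
            M.det = 1 ∧ ∀ i j, |M i j| ≤ (B : ℤ)} : ℝ))
      Filter.atTop (nhds 0) := by
  obtain ⟨d, rfl⟩ : ∃ d, n = d + 1 := ⟨n - 1, by lia⟩
  obtain ⟨P, hP0, hP⟩ := exists_mem_charpolyZeros_of_not_irreducible d
  obtain ⟨c, hc, B₁, hlower⟩ := exists_mul_pow_le_card_slBox d
  refine Metric.tendsto_atTop.2 fun ε hε => ?_
  obtain ⟨B₂, hupper⟩ := exists_card_charpolyZeros_le (by lia : d ≠ 0) hP0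
    (ε := ε / 2 * c) (by positivity)
  refine ⟨max (max B₁ B₂) 1, fun B hB => ?_⟩
  have hnum := (Nat.cast_le (α := ℝ).2 (ncard_isReducible_le_card_charpolyZeros (hP B))).trans
    (hupper B (by lia))
  have hden := hlower B (by lia)
  have hmain : 0 < c * (B : ℝ) ^ ((d + 1) * d) := mul_pos hc (pow_pos (by norm_cast; lia) _)
  rw [Real.dist_0_eq_abs, abs_of_nonneg (by positivity), ncard_eq_card_slBox,
    div_lt_iff₀ (hmain.trans_le hden)]
  calc _ ≤ ε / 2 * c * (B : ℝ) ^ ((d + 1) * d) := hnum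
    _ = ε / 2 * (c * (B : ℝ) ^ ((d + 1) * d)) := mul_assoc _ _ _
    _ < ε * (c * (B : ℝ) ^ ((d + 1) * d)) := by gcongr; linarith
    _ ≤ ε * (slBox (d + 1) B).card := by gcongr
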